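/- For every real c with 0 < c < 1/434 there exists a constant C = C(c) such that for every odd prime p and every A ⊆ F_p with 2 ≤ |A| ≤ p^{2846/4991}, one has D^×(A) ≤ C·|A|^{13/2−c}. Moreover, for every real c₁ with 0 < c₁ < 1/192 there exists C₁ = C₁(c₁) such that if 2 ≤ |A| ≤ p^{48/97} then D^×(A) ≤ C₁·|A|^{13/2−c₁}. -/

import Mathlib

open Finset

/-- `DtimesTwo p A` is the number of octuples `(a₁,…,a₄,a₁',…,a₄') ∈ A⁸`
with `(a₁−a₂)(a₃−a₄) = (a₁'−a₂')(a₃'−a₄')`. -/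
def DtimesTwo (p : ℕ) (A : Finset (ZMod p)) : ℕ :=
  ((((A ×ˢ A) ×ˢ (A ×ˢ A)) ×ˢ ((A ×ˢ A) ×ˢ (A ×ˢ A))).filter fun x =>
    (x.1.1.1 - x.1.1.2) * (x.1.2.1 - x.1.2.2) = (x.2.1.1 - x.2.1.2) * (x.2.2.1 - x.2.2.2)).card

/-!
Let `r(u)` be the number of ways to write `u ≠ 0` as a ratio of two differences of elements of `A`.
Up to `O(#A⁶)` octuples with a vanishing difference, `D^×(A)` is the second moment `∑ r(u)²`.

Lines in `K³` with direction on the conic `(1, a, a²)` model point–plane incidences. Polynomial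
partitioning places groups of these lines on surfaces of low degree; on each component of a surface
either a Bézout argument or the ruled surface structure bounds the number of lines meeting a given
one. Induction gives Rudnev's incidence bound with an `ε`-loss, for families of at most `p²` lines.

Applied to lines that are rich in points of `A × A`, it bounds the third moment `∑ r(u)³` by about
`#A⁹`, so that a level set `Λ = {r ≈ κ}` satisfies `#Λ κ³ ≲ #A⁹`. Applied to dilates, it bounds
`∑ r(l' / l)` over `l, l' ∈ Λ` by about `#A³ #Λ^{3/2}`. A chain of Cauchy–Schwarz and Hölder
inequalities turns these two facts into `(#Λ κ)¹¹ ≲ #A³⁷ #Λ^{9/2}`. The square of the last bound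
times the fourth power of the first one is `(#Λ κ²)¹⁷ ≲ #A¹¹⁰`, and `110/17 = 13/2 - 1/34`. The
incidence bound is only available when `#A² #Λ ≤ p²`; otherwise `#Λ κ ≤ #A⁴` gives
`#Λ κ² ≤ #A¹⁰ / p²`.
-/

namespace ProductOfDifferences

open MvPolynomial
open scoped Polynomial

/-! ### Polynomials along lines -/

section LineRestrict

variable {R σ : Type*} [CommRing R]

/-- The restriction `t ↦ F (x + t v)` of a polynomial to the line through `x` with direction `v`. -/
noncomputable def lineRestrict (x v : σ → R) : MvPolynomial σ R →ₐ[R] R[X] :=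
  aeval fun i => Polynomial.C (x i) + Polynomial.C (v i) * Polynomial.X

/-- The derivative of a polynomial in the constant direction `v`. -/
noncomputable def dirDeriv (v : σ → R) : Derivation R (MvPolynomial σ R) (MvPolynomial σ R) :=
  mkDerivation R fun i => C (v i)

lemma eval_lineRestrict (x v : σ → R) (F : MvPolynomial σ R) (t : R) :
    (lineRestrict x v F).eval t = eval (fun i => x i + v i * t) F := by
  induction F using MvPolynomial.induction_on with
  | C a => simp [lineRestrict]
  | add f g hf hg => simp [hf, hg]
  | mul_X f i hf => simp only [map_mul, Polynomial.eval_mul, hf]; simp [lineRestrict]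

lemma natDegree_lineRestrict_le (x v : σ → R) (F : MvPolynomial σ R) :
    (lineRestrict x v F).natDegree ≤ F.totalDegree := by
  rw [← mul_one F.totalDegree]
  exact aeval_natDegree_le F le_rfl _ fun i => by compute_degree

lemma derivative_lineRestrict (x v : σ → R) (F : MvPolynomial σ R) :
    (lineRestrict x v F).derivative = lineRestrict x v (dirDeriv v F) := by
  induction F using MvPolynomial.induction_on with
  | C a => simp [lineRestrict]
  | add f g hf hg => simp [hf, hg]
  | mul_X f i hf =>
    rw [map_mul, Polynomial.derivative_mul, hf, Derivation.leibniz]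
    simp only [lineRestrict, dirDeriv, mkDerivation_X, map_add, smul_eq_mul, map_mul, aeval_X,
      algHom_C, Polynomial.derivative_C, Polynomial.derivative_C_mul, Polynomial.derivative_X,
      Polynomial.algebraMap_eq]
    ring

lemma iterate_derivative_lineRestrict (x v : σ → R) (F : MvPolynomial σ R) (k : ℕ) :
    Polynomial.derivative^[k] (lineRestrict x v F) = lineRestrict x v ((dirDeriv v)^[k] F) := by
  induction k generalizing F with
  | zero => rfl
  | succ k ih =>
    rw [Function.iterate_succ_apply, Function.iterate_succ_apply, derivative_lineRestrict, ih]

lemma dirDeriv_eq_sum_pderiv [Fintype σ] (v : σ → R) (F : MvPolynomial σ R) :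
    dirDeriv v F = ∑ i, C (v i) * pderiv i F := by
  classical
  induction F using MvPolynomial.induction_on with
  | C a => simp
  | add f g hf hg => simp [hf, hg, mul_add, sum_add_distrib]
  | mul_X f i hf =>
    rw [Derivation.leibniz, hf]
    simp [dirDeriv, mkDerivation_X, pderiv_X, Pi.single_apply, mul_add, sum_add_distrib, mul_sum,
      mul_left_comm, mul_comm]

end LineRestrict

lemma totalDegree_aeval_le {R σ τ : Type*} [CommSemiring R] (f : σ → MvPolynomial τ R)
    (hf : ∀ i, (f i).totalDegree ≤ 1) (F : MvPolynomial σ R) :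
    (aeval f F).totalDegree ≤ F.totalDegree := by
  rw [aeval_def, eval₂_eq]
  refine totalDegree_finsetSum_le fun d hd => (totalDegree_mul _ _).trans ?_
  rw [algebraMap_eq, totalDegree_C, zero_add]
  refine (totalDegree_finsetProd _ _).trans (le_trans (sum_le_sum fun i _ => ?_)
    (le_totalDegree hd))
  exact (totalDegree_pow _ _).trans (by simpa using Nat.mul_le_mul_left (d i) (hf i))

section Field

variable {K : Type*} [Field K]

lemma eq_zero_of_iterate_derivative_eval_eq_zero {p : ℕ} [CharP K p] (hp : p.Prime)
    {f : K[X]} (hf : f.natDegree < p) (t : K)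
    (h : ∀ k, (Polynomial.derivative^[k] f).eval t = 0) : f = 0 := by
  rw [← (Polynomial.taylor_injective t).eq_iff, map_zero]
  ext k
  rw [Polynomial.coeff_zero]
  rcases lt_or_ge k p with hk | hk
  · have hfact : (k.factorial : K) ≠ 0 := by
      rw [Ne, CharP.cast_eq_zero_iff K p, hp.dvd_factorial]
      omega
    rw [Polynomial.taylor_coeff]
    simpa [← Polynomial.factorial_smul_hasseDeriv, hfact] using h k
  · exact Polynomial.coeff_eq_zero_of_natDegree_lt (by rw [Polynomial.natDegree_taylor]; omega)

lemma finite_setOf_exists_eval_eq_zero {ι : Type*} (s : Finset ι) (f : ι → K[X])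
    (hf : ∀ i ∈ s, f i ≠ 0) : {t | ∃ i ∈ s, (f i).eval t = 0}.Finite := by
  refine (s.finite_toSet.biUnion fun i hi =>
    Polynomial.finite_setOfPred_isRoot (hf i hi)).subset ?_
  rintro t ⟨i, hi, h⟩
  exact Set.mem_biUnion (mem_coe.2 hi) h

lemma exists_forall_eval_ne_zero [Infinite K] {ι : Type*} (s : Finset ι) (f : ι → K[X])
    (hf : ∀ i ∈ s, f i ≠ 0) : ∃ t, ∀ i ∈ s, (f i).eval t ≠ 0 := by
  simpa using (finite_setOf_exists_eval_eq_zero s f hf).exists_notMem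

lemma finrank_restrictTotalDegree (σ : Type*) [Fintype σ] (D : ℕ) :
    Module.finrank K (restrictTotalDegree σ K D) =
      (D + Fintype.card σ).choose (Fintype.card σ) := by
  classical
  have hset : {m : σ →₀ ℕ | (m.sum fun _ e => e) ≤ D} =
      ((range (D + 1)).biUnion fun j => (univ : Finset σ).finsuppAntidiag j : Finset _) := by
    ext m
    simp [Finsupp.sum_fintype]
  have hcard : Module.finrank K (restrictTotalDegree σ K D) =
      Nat.card {m : σ →₀ ℕ | (m.sum fun _ e => e) ≤ D} :=
    Module.finrank_eq_nat_card_basis (basisRestrictSupport K _)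
  rw [hcard, hset, Nat.card_coe_set_eq, Set.ncard_coe_finset, card_biUnion]
  · simp_rw [card_finsuppAntidiag_nat_eq_choose, card_univ]
    clear hcard hset
    induction D with
    | zero => simp
    | succ D ih =>
      rw [sum_range_succ, ih, ← Nat.choose_symm_add, ← Nat.choose_symm_add, add_right_comm,
        Nat.choose_succ_succ, show Fintype.card σ + (D + 1) - 1 = D + Fintype.card σ by omega]
  · intro i _ j _ hij
    refine disjoint_left.2 fun m hm hm' => hij ?_
    rw [mem_finsuppAntidiag] at hm hm'
    exact hm.1.symm.trans hm'.1

lemma finite_setOf_not_injOn_plane_lines (S : Finset (K × K)) :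
    {t : K | ¬ Set.InjOn (fun q : K × K => q.1 * t + q.2) S}.Finite := by
  classical
  let height (q : K × K) : K[X] := Polynomial.C q.1 * Polynomial.X + Polynomial.C q.2
  have height_inj : ∀ i ∈ S.offDiag, height i.1 - height i.2 ≠ 0 := by
    rintro ⟨⟨a, b⟩, ⟨a', b'⟩⟩ hi heq
    refine (mem_offDiag.1 hi).2.2 ?_
    have h0 := congrArg (Polynomial.coeff · 0) heq
    have h1 := congrArg (Polynomial.coeff · 1) heq
    simp only [height, Polynomial.coeff_sub, Polynomial.coeff_add, Polynomial.coeff_C_mul,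
      Polynomial.coeff_X_zero, Polynomial.coeff_X_one, Polynomial.coeff_C_zero,
      Polynomial.coeff_C_succ, Polynomial.coeff_zero] at h0 h1
    exact Prod.ext (by linear_combination h1) (by linear_combination h0)
  refine (finite_setOf_exists_eval_eq_zero S.offDiag (fun i => height i.1 - height i.2)
    height_inj).subset fun t ht => ?_
  by_contra hcollision
  refine ht fun q hq q' hq' hqq => ?_
  by_contra hne
  exact hcollision ⟨(q, q'), mem_offDiag.2 ⟨hq, hq', hne⟩, by simpa [height, sub_eq_zero] using hqq⟩

lemma eq_zero_of_vanishes_on_plane_lines [Infinite K] (g : MvPolynomial (Fin 2) K)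
    (S : Finset (K × K)) (hS : g.totalDegree < S.card)
    (h : ∀ q ∈ S, ∀ t, eval ![t, q.1 * t + q.2] g = 0) : g = 0 := by
  classical
  refine funext_set ![{t | ¬ Set.InjOn (fun q : K × K => q.1 * t + q.2) S}ᶜ, Set.univ]
    (fun i => ?_) fun x hx => ?_
  · fin_cases i
    · exact (finite_setOf_not_injOn_plane_lines S).infinite_compl
    · exact Set.infinite_univ
  have hinj : Set.InjOn (fun q : K × K => q.1 * x 0 + q.2) S := not_not.1 (hx 0 trivial)
  have fiber_eval (w : K) :
      (lineRestrict ![x 0, 0] ![0, 1] g).eval w = eval ![x 0, w] g := by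
    rw [eval_lineRestrict]
    congr 2
    ext i
    fin_cases i <;> simp
  have fiber_eq_zero : lineRestrict ![x 0, 0] ![0, 1] g = 0 := by
    refine Polynomial.eq_zero_of_natDegree_lt_card_of_eval_eq_zero' _
      (S.image fun q => q.1 * x 0 + q.2) (fun r hr => ?_) ?_
    · obtain ⟨q, hq, rfl⟩ := mem_image.1 hr
      rw [fiber_eval, h q hq]
    · rw [card_image_of_injOn hinj]
      exact (natDegree_lineRestrict_le _ _ _).trans_lt hS
  have hx_eta : ![x 0, x 1] = x := by
    ext i
    fin_cases i <;> rfl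
  rw [map_zero, ← hx_eta, ← fiber_eval, fiber_eq_zero, Polynomial.eval_zero]

end Field

/-! ### Lines with direction on a conic, and a Bézout bound -/

/-- A triple `(a, b, c)` encodes the line `t ↦ (t, a t + b, a² t + a b + c)` in `K³`, whose
direction `(1, a, a²)` lies on a conic. Points and planes of `K³` are encoded by triples as well,
in such a way that incidence becomes intersection of the encoded lines (`Meets`). -/
abbrev Triple (K : Type*) := K × K × K

section Lines

variable {K : Type*} [Field K]

/-- The points `(1, a, a²)` of the conic of directions. -/
abbrev conicDir (a : K) : Fin 3 → K := ![1, a, a ^ 2]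

/-- The point with first coordinate `t` on the line encoded by `q`. -/
def linePoint (q : Triple K) (t : K) : Fin 3 → K :=
  ![t, q.1 * t + q.2.1, q.1 ^ 2 * t + q.1 * q.2.1 + q.2.2]

/-- The restriction of a polynomial to the line encoded by `q`. -/
noncomputable def restrictLine (q : Triple K) : MvPolynomial (Fin 3) K →ₐ[K] K[X] :=
  lineRestrict (linePoint q 0) (conicDir q.1)

lemma eval_restrictLine (q : Triple K) (F : MvPolynomial (Fin 3) K) (t : K) :
    (restrictLine q F).eval t = eval (linePoint q t) F := by
  rw [restrictLine, eval_lineRestrict]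
  congr 2
  ext i
  fin_cases i <;> simp [linePoint] <;> ring

lemma natDegree_restrictLine_le (q : Triple K) (F : MvPolynomial (Fin 3) K) :
    (restrictLine q F).natDegree ≤ F.totalDegree :=
  natDegree_lineRestrict_le _ _ _

lemma eval_linePoint_eq_zero {q : Triple K} {F : MvPolynomial (Fin 3) K}
    (h : restrictLine q F = 0) (t : K) : eval (linePoint q t) F = 0 := by
  rw [← eval_restrictLine, h, Polynomial.eval_zero]

lemma totalDegree_pos_of_restrictLine_eq_zero {q : Triple K} {G : MvPolynomial (Fin 3) K}
    (hG : G ≠ 0) (h : restrictLine q G = 0) : 0 < G.totalDegree := by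
  refine Nat.pos_of_ne_zero fun hdeg => hG ?_
  rw [totalDegree_eq_zero_iff_eq_C] at hdeg
  rw [hdeg] at h ⊢
  simpa using eval_linePoint_eq_zero h 0

end Lines

section Projection

variable {K : Type*} [Field K]

/-- Slope and intercept of the image of the line `q` under the projection `(x, y, z) ↦ (x, y + t z)`
of `K³` to the plane. -/
def projLine (t : K) (q : Triple K) : K × K :=
  (q.1 + t * q.1 ^ 2, q.2.1 + t * (q.1 * q.2.1 + q.2.2))

/-- The pullback of polynomial functions along the projection `(x, y, z) ↦ (x, y + t z)`. -/
noncomputable def projComap (t : K) : MvPolynomial (Fin 2) K →ₐ[K] MvPolynomial (Fin 3) K :=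
  aeval ![X 0, X 1 + C t * X 2]

lemma exists_injOn_projLine [Infinite K] (S : Finset (Triple K)) :
    ∃ t : K, Set.InjOn (projLine t) S := by
  classical
  let slopeDiff (i : Triple K × Triple K) : K[X] :=
    Polynomial.C (i.1.1 - i.2.1) + Polynomial.C (i.1.1 ^ 2 - i.2.1 ^ 2) * Polynomial.X
  let interceptDiff (i : Triple K × Triple K) : K[X] :=
    Polynomial.C (i.1.2.1 - i.2.2.1) +
      Polynomial.C (i.1.1 * i.1.2.1 + i.1.2.2 - (i.2.1 * i.2.2.1 + i.2.2.2)) * Polynomial.X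
  let separator (i : Triple K × Triple K) : K[X] :=
    if i.1.1 = i.2.1 then interceptDiff i else slopeDiff i
  have separator_ne_zero : ∀ i ∈ S.offDiag, separator i ≠ 0 := by
    rintro ⟨⟨a, b, c⟩, ⟨a', b', c'⟩⟩ hi h0
    refine (mem_offDiag.1 hi).2.2 ?_
    have e0 := congrArg (Polynomial.eval 0) h0
    have e1 := congrArg (Polynomial.eval 1) h0
    by_cases haa : a = a'
    · subst haa
      simp only [separator, interceptDiff, if_true, Polynomial.eval_add, Polynomial.eval_C,
        Polynomial.eval_mul, Polynomial.eval_X, Polynomial.eval_zero] at e0 e1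
      obtain rfl : b = b' := by linear_combination e0
      obtain rfl : c = c' := by linear_combination e1
      rfl
    · simp only [separator, slopeDiff, haa, if_false, Polynomial.eval_add, Polynomial.eval_C,
        Polynomial.eval_mul, Polynomial.eval_X, Polynomial.eval_zero] at e0
      exact absurd (by linear_combination e0) haa
  obtain ⟨t, ht⟩ := exists_forall_eval_ne_zero _ separator separator_ne_zero
  refine ⟨t, fun q hq q' hq' hqq => ?_⟩
  by_contra hne
  refine ht (q, q') (mem_offDiag.2 ⟨hq, hq', hne⟩) ?_
  simp only [projLine, Prod.mk.injEq] at hqq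
  by_cases haa : q.1 = q'.1
  · simp only [separator, interceptDiff, haa, if_true, Polynomial.eval_add, Polynomial.eval_C,
      Polynomial.eval_mul, Polynomial.eval_X]
    rw [haa] at hqq
    linear_combination hqq.2
  · simp only [separator, slopeDiff, haa, if_false, Polynomial.eval_add, Polynomial.eval_C,
      Polynomial.eval_mul, Polynomial.eval_X]
    linear_combination hqq.1

lemma eval_projComap (t : K) (G : MvPolynomial (Fin 2) K) (x : Fin 3 → K) :
    eval x (projComap t G) = eval ![x 0, x 1 + t * x 2] G := by
  induction G using MvPolynomial.induction_on with
  | C a => simp [projComap]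
  | add f g hf hg => simp only [map_add, hf, hg]
  | mul_X f i hf => simp only [map_mul, hf]; fin_cases i <;> simp [projComap]

lemma projComap_injective [Infinite K] (t : K) : Function.Injective (projComap t) := by
  refine (injective_iff_map_eq_zero _).2 fun G hG => MvPolynomial.funext fun x => ?_
  have h := eval_projComap t G ![x 0, x 1, 0]
  have hx : ![x 0, x 1] = x := by
    ext i
    fin_cases i <;> rfl
  simpa [hG, hx] using h.symm

lemma totalDegree_projComap_le (t : K) (G : MvPolynomial (Fin 2) K) :
    (projComap t G).totalDegree ≤ G.totalDegree := by
  refine totalDegree_aeval_le _ (fun i => ?_) G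
  fin_cases i
  · simp
  · exact (totalDegree_add _ _).trans (max_le (by simp) ((totalDegree_mul _ _).trans (by simp)))

lemma eq_zero_of_restrictLine_projComap_eq_zero [Infinite K] {t : K} {S : Finset (Triple K)}
    (ht : Set.InjOn (projLine t) S) {G : MvPolynomial (Fin 2) K} (hG : G.totalDegree < S.card)
    (h : ∀ q ∈ S, restrictLine q (projComap t G) = 0) : G = 0 := by
  classical
  refine eq_zero_of_vanishes_on_plane_lines G (S.image (projLine t))
    (by rwa [card_image_of_injOn ht]) fun r hr s => ?_
  obtain ⟨q, hq, rfl⟩ := mem_image.1 hr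
  have hpoint := eval_projComap t G (linePoint q s)
  rw [eval_linePoint_eq_zero (h q hq)] at hpoint
  rw [hpoint]
  congr 2
  ext i
  fin_cases i
  · simp [linePoint]
  · simp only [projLine, linePoint, Fin.mk_one, Matrix.cons_val_one, Matrix.cons_val_zero,
      Matrix.cons_val]
    ring

end Projection

section Bezout

variable {K σ : Type*} [Field K]

/-- The map `(A, B) ↦ A F + B N` on polynomials with `deg A ≤ m` and `deg B ≤ n`. -/
noncomputable def combination (m n : ℕ) (F N : MvPolynomial σ K) :
    (restrictTotalDegree σ K m × restrictTotalDegree σ K n) →ₗ[K] MvPolynomial σ K :=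
  ((LinearMap.mulRight K F).comp (Submodule.subtype _)).coprod
    ((LinearMap.mulRight K N).comp (Submodule.subtype _))

lemma combination_apply (m n : ℕ) (F N : MvPolynomial σ K) (x) :
    combination m n F N x = (x.1 : MvPolynomial σ K) * F + (x.2 : MvPolynomial σ K) * N := by
  simp [combination]

lemma range_combination_le {m n D : ℕ} {F N : MvPolynomial σ K} (hm : m + F.totalDegree ≤ D)
    (hn : n + N.totalDegree ≤ D) :
    LinearMap.range (combination m n F N) ≤ restrictTotalDegree σ K D := by
  rintro _ ⟨⟨⟨A, hA⟩, ⟨B, hB⟩⟩, rfl⟩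
  rw [combination_apply]
  rw [mem_restrictTotalDegree] at *
  exact (totalDegree_add _ _).trans (max_le
    ((totalDegree_mul _ _).trans ((Nat.add_le_add_right hA _).trans hm))
    ((totalDegree_mul _ _).trans ((Nat.add_le_add_right hB _).trans hn)))

-- A syzygy `A F + B N = 0` forces `F ∣ B`, and it is determined by the quotient `B / F`.
lemma finrank_ker_combination_le [Finite σ] (m n : ℕ) {F N : MvPolynomial σ K} (hF : Prime F)
    (hFN : ¬ F ∣ N) :
    Module.finrank K (LinearMap.ker (combination m n F N)) ≤
      Module.finrank K (restrictTotalDegree σ K (n - F.totalDegree)) := by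
  let second : LinearMap.ker (combination m n F N) →ₗ[K] MvPolynomial σ K :=
    (Submodule.subtype _).comp ((LinearMap.snd K _ _).comp (Submodule.subtype _))
  have second_injective : Function.Injective second := by
    refine (injective_iff_map_eq_zero _).2 ?_
    rintro ⟨⟨A, B⟩, hAB⟩ hB
    replace hB : (B : MvPolynomial σ K) = 0 := hB
    have hA : (A : MvPolynomial σ K) = 0 := by
      simpa [combination_apply, hB, hF.ne_zero] using hAB
    exact Subtype.ext (Prod.ext (Subtype.ext hA) (Subtype.ext hB))
  have range_second_le : LinearMap.range second ≤
      (restrictTotalDegree σ K (n - F.totalDegree)).map (LinearMap.mulLeft K F) := by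
    rintro _ ⟨⟨⟨⟨A, hA⟩, ⟨B, hB⟩⟩, hAB⟩, rfl⟩
    rw [LinearMap.mem_ker, combination_apply] at hAB
    change B ∈ _
    have hdvd : F ∣ B * N := ⟨-A, by linear_combination hAB⟩
    obtain ⟨E, rfl⟩ := (hF.dvd_or_dvd hdvd).resolve_right hFN
    refine ⟨E, ?_, rfl⟩
    rcases eq_or_ne E 0 with rfl | hE
    · exact Submodule.zero_mem _
    · rw [mem_restrictTotalDegree, totalDegree_mul_of_isDomain hF.ne_zero hE] at hB
      exact (mem_restrictTotalDegree _ _ _).2 (by omega)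
  calc Module.finrank K (LinearMap.ker (combination m n F N))
      = Module.finrank K (LinearMap.range second) :=
        (LinearMap.finrank_range_of_inj second_injective).symm
    _ ≤ _ := Submodule.finrank_mono range_second_le
    _ ≤ _ := Submodule.finrank_map_le _ _

lemma six_mul_choose_three (n : ℕ) : 6 * (n + 3).choose 3 = (n + 1) * (n + 2) * (n + 3) := by
  have h := Nat.ascFactorial_eq_factorial_mul_choose n 3
  simp only [Nat.ascFactorial, Nat.factorial] at h
  linarith

lemma choose_three_add_lt {x e f : ℕ} (h : 2 * e * f ≤ x + e + f) :
    (x + e + f + 3).choose 3 + (x + 3).choose 3 <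
      (x + f + 3).choose 3 + (x + e + 3).choose 3 + (x + e + f + 2).choose 2 := by
  have htwo : 2 * (x + e + f + 2).choose 2 = (x + e + f + 1) * (x + e + f + 2) := by
    have h := Nat.ascFactorial_eq_factorial_mul_choose (x + e + f) 2
    simp only [Nat.ascFactorial, Nat.factorial] at h
    linarith
  have h₁ := six_mul_choose_three (x + e + f)
  have h₂ := six_mul_choose_three x
  have h₃ := six_mul_choose_three (x + f)
  have h₄ := six_mul_choose_three (x + e)
  have hid : (x + e + f + 1) * (x + e + f + 2) * (x + e + f + 3) + (x + 1) * (x + 2) * (x + 3) +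
        3 * e * f * (e + f) =
      (x + f + 1) * (x + f + 2) * (x + f + 3) + (x + e + 1) * (x + e + 2) * (x + e + 3) +
        3 * (2 * e * f) * (x + e + f + 2) := by ring
  have hle : 2 * e * f * (x + e + f + 2) ≤ (x + e + f) * (x + e + f + 2) := by gcongr
  have hnonneg : 0 ≤ 3 * e * f * (e + f) := Nat.zero_le _
  linarith [hid, hle]

lemma map_projComap_restrictTotalDegree_le (t : K) (D : ℕ) :
    (restrictTotalDegree (Fin 2) K D).map (projComap t).toLinearMap ≤
      restrictTotalDegree (Fin 3) K D := by
  rintro _ ⟨G, hG, rfl⟩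
  exact (mem_restrictTotalDegree _ _ _).2
    ((totalDegree_projComap_le t G).trans ((mem_restrictTotalDegree _ _ _).1 hG))

lemma finrank_map_projComap_restrictTotalDegree [Infinite K] (t : K) (D : ℕ) :
    Module.finrank K ((restrictTotalDegree (Fin 2) K D).map (projComap t).toLinearMap) =
      (D + 2).choose 2 := by
  rw [LinearEquiv.finrank_eq (Submodule.equivMapOfInjective (projComap t).toLinearMap
    (projComap_injective t) _).symm, finrank_restrictTotalDegree, Fintype.card_fin]

-- If there were more lines, a nonzero plane polynomial pulled back along a generic projection would
-- agree with some `A F + B N` by counting dimensions, hence vanish on too many lines of the plane.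
theorem card_le_of_restrictLine_eq_zero [Infinite K] {F N : MvPolynomial (Fin 3) K}
    (hF : Irreducible F) (hFN : ¬ F ∣ N) {S : Finset (Triple K)}
    (hSF : ∀ q ∈ S, restrictLine q F = 0) (hSN : ∀ q ∈ S, restrictLine q N = 0) :
    S.card ≤ 2 * F.totalDegree * N.totalDegree := by
  set e := F.totalDegree with he
  set f := N.totalDegree
  rcases S.eq_empty_or_nonempty with rfl | ⟨q₀, hq₀⟩
  · simp
  have hN : N ≠ 0 := fun h => hFN (h ▸ dvd_zero F)
  have he_pos : 0 < e := totalDegree_pos_of_restrictLine_eq_zero hF.ne_zero (hSF q₀ hq₀)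
  have hf_pos : 0 < f := totalDegree_pos_of_restrictLine_eq_zero hN (hSN q₀ hq₀)
  by_contra! hcard
  set D := 2 * e * f with hD
  have he_add_f : e + f ≤ D := by nlinarith
  obtain ⟨x, hx⟩ : ∃ x, D = x + e + f := ⟨D - e - f, by omega⟩
  obtain ⟨t, ht⟩ := exists_injOn_projLine S
  let I := LinearMap.range (combination (x + f) (x + e) F N)
  let W := (restrictTotalDegree (Fin 2) K D).map (projComap t).toLinearMap
  have hI : I ≤ restrictTotalDegree (Fin 3) K D := range_combination_le (by omega) (by omega)
  have hW : W ≤ restrictTotalDegree (Fin 3) K D := map_projComap_restrictTotalDegree_le t D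
  have hIW : I ⊓ W = ⊥ := by
    rw [eq_bot_iff]
    rintro _ ⟨⟨⟨A, B⟩, hAB⟩, ⟨G, hG, rfl⟩⟩
    have hG_eq : G = 0 := by
      refine eq_zero_of_restrictLine_projComap_eq_zero ht
        (((mem_restrictTotalDegree _ _ _).1 hG).trans_lt hcard) fun q hq => ?_
      rw [show projComap t G = _ from hAB.symm, combination_apply, map_add, map_mul, map_mul,
        hSF q hq, hSN q hq, mul_zero, mul_zero, add_zero]
    simp [hG_eq]
  have finrank_W : Module.finrank K W = (D + 2).choose 2 :=
    finrank_map_projComap_restrictTotalDegree t D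
  have finrank_sum := Submodule.finrank_sup_add_finrank_inf_eq I W
  have finrank_le := Submodule.finrank_mono (sup_le hI hW)
  have rank_nullity : Module.finrank K I + _ = _ :=
    LinearMap.finrank_range_add_finrank_ker (combination (x + f) (x + e) F N)
  have finrank_ker := finrank_ker_combination_le (x + f) (x + e) hF.prime hFN
  rw [hIW, finrank_bot, finrank_W] at finrank_sum
  rw [Module.finrank_prod] at rank_nullity
  simp only [finrank_restrictTotalDegree, Fintype.card_fin] at finrank_le rank_nullity finrank_ker
  rw [← he, Nat.add_sub_cancel] at finrank_ker
  have hchoose := choose_three_add_lt (x := x) (e := e) (f := f) (by omega)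
  rw [← hx] at hchoose
  omega

end Bezout

/-! ### Intersecting lines -/

section Meets

variable {K : Type*} [Field K]

/-- The incidence relation between triples: lines of different directions encoded by `q` and `r`
intersect if and only if `Meets q r`. -/
def Meets (q r : Triple K) : Prop := q.2.2 - r.2.2 = r.1 * q.2.1 - q.1 * r.2.1

lemma Meets.symm {q r : Triple K} (h : Meets q r) : Meets r q := by
  unfold Meets at *
  linear_combination -h

lemma meets_comm {q r : Triple K} : Meets q r ↔ Meets r q := ⟨Meets.symm, Meets.symm⟩

lemma Meets.exists_linePoint_eq {q r : Triple K} (h : Meets q r) (hqr : q.1 ≠ r.1) :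
    ∃ t, linePoint q t = linePoint r t := by
  obtain ⟨a, b, c⟩ := q
  obtain ⟨a', b', c'⟩ := r
  simp only [Meets] at h hqr
  have ht : -(b - b') / (a - a') * (a - a') = -(b - b') :=
    div_mul_cancel₀ _ (sub_ne_zero.2 hqr)
  refine ⟨-(b - b') / (a - a'), ?_⟩
  generalize -(b - b') / (a - a') = t at ht
  ext i
  fin_cases i <;> simp only [linePoint, Fin.mk_one, Fin.zero_eta, Fin.reduceFinMk, Matrix.cons_val]
  · linear_combination ht
  · linear_combination h + (a + a') * ht

lemma meets_of_linePoint_eq {q r : Triple K} {t : K} (h : linePoint q t = linePoint r t) :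
    Meets q r := by
  have h₁ := congrFun h 1
  have h₂ := congrFun h 2
  simp only [linePoint, Matrix.cons_val] at h₁ h₂
  unfold Meets
  linear_combination h₂ - (q.1 + r.1) * h₁

/-- The line through the point `x` with direction `(1, a, a²)`. -/
def lineThrough (x : Fin 3 → K) (a : K) : Triple K := (a, x 1 - a * x 0, x 2 - a * x 1)

lemma linePoint_lineThrough (x : Fin 3 → K) (a t : K) :
    linePoint (lineThrough x a) t = fun i => x i + conicDir a i * (t - x 0) := by
  ext i
  fin_cases i <;> simp [linePoint, lineThrough] <;> ring

lemma linePoint_lineThrough_linePoint (q : Triple K) (t a : K) :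
    linePoint (lineThrough (linePoint q t) a) t = linePoint q t := by
  rw [linePoint_lineThrough]
  simp [linePoint]

lemma lineThrough_linePoint_self (q : Triple K) (t : K) : lineThrough (linePoint q t) q.1 = q := by
  obtain ⟨a, b, c⟩ := q
  simp only [lineThrough, linePoint, Matrix.cons_val, Prod.mk.injEq, true_and]
  constructor <;> ring

lemma card_le_totalDegree_of_linePoint_eq {q : Triple K} {f : MvPolynomial (Fin 3) K}
    (hf : restrictLine q f ≠ 0) {R : Finset (Triple K)}
    (hR : (R : Set (Triple K)).Pairwise fun r r' => ¬ Meets r r')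
    (h : ∀ r ∈ R, ∃ t, linePoint q t = linePoint r t ∧ eval (linePoint q t) f = 0) :
    #R ≤ f.totalDegree := by
  classical
  choose! t ht ht_root using h
  have ht_inj : Set.InjOn t R := fun r hr r' hr' hrr => by
    by_contra hne
    exact hR hr hr' hne (meets_of_linePoint_eq (t := t r) (by rw [← ht r hr, hrr, ht r' hr']))
  rw [← card_image_of_injOn ht_inj]
  refine le_trans ?_ (natDegree_restrictLine_le q f)
  by_contra! hlt
  refine hf (Polynomial.eq_zero_of_natDegree_lt_card_of_eval_eq_zero' _ _ (fun s hs => ?_) hlt)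
  obtain ⟨r, hr, rfl⟩ := mem_image.1 hs
  rw [eval_restrictLine, ht_root r hr]

end Meets

section Degree

variable {R σ : Type*} [CommRing R] {f g : MvPolynomial σ R} {m n : ℕ}

lemma totalDegree_mul_le_of_le (hf : f.totalDegree ≤ m) (hg : g.totalDegree ≤ n) :
    (f * g).totalDegree ≤ m + n :=
  (totalDegree_mul _ _).trans (add_le_add hf hg)

lemma totalDegree_pow_le_of_le (n : ℕ) (hf : f.totalDegree ≤ m) :
    (f ^ n).totalDegree ≤ n * m :=
  (totalDegree_pow _ _).trans (Nat.mul_le_mul_left _ hf)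

lemma totalDegree_add_le_of_le (hf : f.totalDegree ≤ n) (hg : g.totalDegree ≤ n) :
    (f + g).totalDegree ≤ n :=
  (totalDegree_add _ _).trans (max_le hf hg)

lemma totalDegree_sub_le_of_le (hf : f.totalDegree ≤ n) (hg : g.totalDegree ≤ n) :
    (f - g).totalDegree ≤ n :=
  (totalDegree_sub _ _).trans (max_le hf hg)

lemma totalDegree_C_mul_X_le (a : R) (i : σ) : (C a * X i : MvPolynomial σ R).totalDegree ≤ 1 := by
  rw [C_mul_X_eq_monomial]
  exact (totalDegree_monomial_le _ _).trans (by simp)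

lemma totalDegree_pderiv_le_sub_one (i : σ) (F : MvPolynomial σ R) :
    (pderiv i F).totalDegree ≤ F.totalDegree - 1 := by
  classical
  conv_lhs => rw [F.as_sum, map_sum]
  refine totalDegree_finsetSum_le fun d hd => ?_
  rw [pderiv_monomial]
  rcases Nat.eq_zero_or_pos (d i) with hdi | hdi
  · simp [hdi]
  refine (totalDegree_monomial_le _ _).trans ?_
  have hdeg : d.degree ≤ F.totalDegree := le_totalDegree hd
  have hsplit : (d - Finsupp.single i 1).degree + 1 = d.degree := by
    have hle : Finsupp.single i 1 ≤ d := Finsupp.single_le_iff.2 hdi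
    conv_rhs => rw [← tsub_add_cancel_of_le hle]
    rw [map_add, Finsupp.degree_single]
  change (d - Finsupp.single i 1).degree ≤ _
  omega

lemma totalDegree_pderiv_le (i : σ) (F : MvPolynomial σ R) :
    (pderiv i F).totalDegree ≤ F.totalDegree :=
  (totalDegree_pderiv_le_sub_one i F).trans (Nat.sub_le _ _)

end Degree

lemma exists_pow_mul_iterate_mem_span {R A : Type*} [CommRing R] [CommRing A] [Algebra R A]
    (D : Derivation R A A) {F G : A} {m : ℕ} (h : G ^ m * D (D F) ∈ Ideal.span {F, D F}) (k : ℕ) :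
    ∃ n, G ^ n * D^[k] F ∈ Ideal.span {F, D F} := by
  set J := Ideal.span {F, D F}
  have hF : F ∈ J := Ideal.subset_span (by simp)
  have hDF : D F ∈ J := Ideal.subset_span (by simp)
  have hD : ∀ j ∈ J, G ^ m * D j ∈ J := by
    intro j hj
    obtain ⟨a, b, rfl⟩ := Ideal.mem_span_pair.1 hj
    have hexpand : G ^ m * D (a * F + b * D F) = G ^ m * D a * F + G ^ m * (a + D b) * D F +
        b * (G ^ m * D (D F)) := by
      simp only [map_add, Derivation.leibniz, smul_eq_mul]
      ring
    rw [hexpand]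
    exact J.add_mem (J.add_mem (J.mul_mem_left _ hF) (J.mul_mem_left _ hDF)) (J.mul_mem_left _ h)
  induction k with
  | zero => exact ⟨0, by simpa using hF⟩
  | succ k ih =>
    obtain ⟨n, hn⟩ := ih
    rw [Function.iterate_succ_apply']
    refine ⟨m + n + 1, ?_⟩
    have hsplit : G ^ (m + n + 1) * D (D^[k] F) = G ^ m * D (G * (G ^ n * D^[k] F)) -
        G ^ m * ((n + 1) * D G) * (G ^ n * D^[k] F) := by
      rw [← mul_assoc, ← pow_succ', Derivation.leibniz, Derivation.leibniz_pow]
      simp only [smul_eq_mul, nsmul_eq_mul, Nat.add_sub_cancel]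
      push_cast
      ring
    rw [hsplit]
    exact J.sub_mem (hD _ (J.mul_mem_left _ hn)) (J.mul_mem_left _ hn)

/-! ### Ruled surfaces -/

section Flecnode

variable {K : Type*} [Field K]

lemma restrictLine_dirDeriv_eq_zero {q : Triple K} {F : MvPolynomial (Fin 3) K}
    (h : restrictLine q F = 0) : restrictLine q (dirDeriv (conicDir q.1) F) = 0 := by
  rw [restrictLine] at *
  rw [← derivative_lineRestrict, h, Polynomial.derivative_zero]

lemma dirDeriv_conicDir (a : K) (F : MvPolynomial (Fin 3) K) :
    dirDeriv (conicDir a) F = pderiv 0 F + C a * pderiv 1 F + C a ^ 2 * pderiv 2 F := by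
  simp [dirDeriv_eq_sum_pderiv, Fin.sum_univ_three]

lemma eval_dirDeriv_conicDir (x : Fin 3 → K) (a : K) (F : MvPolynomial (Fin 3) K) :
    eval x (dirDeriv (conicDir a) F) =
      eval x (pderiv 0 F) + a * eval x (pderiv 1 F) + a ^ 2 * eval x (pderiv 2 F) := by
  simp [dirDeriv_conicDir]

/-- The coefficients of the second derivative of `F` in direction `(1, a, a²)`, as a quartic
polynomial in `a`. -/
noncomputable def hessianCoeff (F : MvPolynomial (Fin 3) K) : Fin 5 → MvPolynomial (Fin 3) K :=
  ![pderiv 0 (pderiv 0 F), pderiv 0 (pderiv 1 F) + pderiv 1 (pderiv 0 F),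
    pderiv 0 (pderiv 2 F) + pderiv 1 (pderiv 1 F) + pderiv 2 (pderiv 0 F),
    pderiv 1 (pderiv 2 F) + pderiv 2 (pderiv 1 F), pderiv 2 (pderiv 2 F)]

/-- The coefficients of the quotient when `(∂₂F)³` times the second derivative of `F` in direction
`(1, a, a²)` is divided, as a polynomial in `a`, by the first derivative. -/
noncomputable def quotientCoeff (F : MvPolynomial (Fin 3) K) : Fin 3 → MvPolynomial (Fin 3) K :=
  ![pderiv 2 F ^ 2 * hessianCoeff F 2 - pderiv 2 F * hessianCoeff F 3 * pderiv 1 F -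
      hessianCoeff F 4 * (pderiv 0 F * pderiv 2 F - pderiv 1 F ^ 2),
    pderiv 2 F ^ 2 * hessianCoeff F 3 - pderiv 2 F * hessianCoeff F 4 * pderiv 1 F,
    pderiv 2 F ^ 2 * hessianCoeff F 4]

/-- The coefficients of the remainder in the division described at `quotientCoeff`. They vanish at
a point of the surface `F = 0` through which two lines of the surface pass, and they are divisible
by `F` when the surface is ruled. -/
noncomputable def remainderCoeff (F : MvPolynomial (Fin 3) K) : Fin 2 → MvPolynomial (Fin 3) K :=
  ![pderiv 2 F ^ 3 * hessianCoeff F 0 - quotientCoeff F 0 * pderiv 0 F,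
    pderiv 2 F ^ 3 * hessianCoeff F 1 - quotientCoeff F 1 * pderiv 0 F -
      quotientCoeff F 0 * pderiv 1 F]

lemma pderiv_pow_mul_dirDeriv_dirDeriv (F : MvPolynomial (Fin 3) K) (a : K) :
    pderiv 2 F ^ 3 * dirDeriv (conicDir a) (dirDeriv (conicDir a) F) =
      (quotientCoeff F 2 * C a ^ 2 + quotientCoeff F 1 * C a + quotientCoeff F 0) *
        dirDeriv (conicDir a) F + remainderCoeff F 0 + remainderCoeff F 1 * C a := by
  simp only [dirDeriv_conicDir, map_add, ← map_pow, pderiv_C_mul, remainderCoeff, quotientCoeff,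
    hessianCoeff, Matrix.cons_val]
  simp only [map_pow]
  ring

lemma totalDegree_hessianCoeff_le (F : MvPolynomial (Fin 3) K) (i : Fin 5) :
    (hessianCoeff F i).totalDegree ≤ F.totalDegree := by
  have hF (i j : Fin 3) : (pderiv i (pderiv j F)).totalDegree ≤ F.totalDegree :=
    (totalDegree_pderiv_le i _).trans (totalDegree_pderiv_le j F)
  fin_cases i
  · exact hF 0 0
  · exact totalDegree_add_le_of_le (hF 0 1) (hF 1 0)
  · exact totalDegree_add_le_of_le (totalDegree_add_le_of_le (hF 0 2) (hF 1 1)) (hF 2 0)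
  · exact totalDegree_add_le_of_le (hF 1 2) (hF 2 1)
  · exact hF 2 2

lemma totalDegree_quotientCoeff_le (F : MvPolynomial (Fin 3) K) (i : Fin 3) :
    (quotientCoeff F i).totalDegree ≤ 3 * F.totalDegree := by
  have hF (i : Fin 3) := totalDegree_pderiv_le i F
  have hsq (i : Fin 3) := totalDegree_pow_le_of_le 2 (hF i)
  have hH := totalDegree_hessianCoeff_le F
  have hsq_mul (i : Fin 5) : (pderiv 2 F ^ 2 * hessianCoeff F i).totalDegree ≤ 3 * F.totalDegree :=
    (totalDegree_mul_le_of_le (hsq 2) (hH i)).trans (by omega)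
  have hmul (i : Fin 5) :
      (pderiv 2 F * hessianCoeff F i * pderiv 1 F).totalDegree ≤ 3 * F.totalDegree :=
    (totalDegree_mul_le_of_le (totalDegree_mul_le_of_le (hF 2) (hH i)) (hF 1)).trans (by omega)
  have hdisc : (pderiv 0 F * pderiv 2 F - pderiv 1 F ^ 2).totalDegree ≤ 2 * F.totalDegree :=
    totalDegree_sub_le_of_le ((totalDegree_mul_le_of_le (hF 0) (hF 2)).trans (by omega)) (hsq 1)
  fin_cases i
  · exact totalDegree_sub_le_of_le (totalDegree_sub_le_of_le (hsq_mul 2) (hmul 3))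
      ((totalDegree_mul_le_of_le (hH 4) hdisc).trans (by omega))
  · exact totalDegree_sub_le_of_le (hsq_mul 3) (hmul 4)
  · exact hsq_mul 4

lemma totalDegree_remainderCoeff_le (F : MvPolynomial (Fin 3) K) (i : Fin 2) :
    (remainderCoeff F i).totalDegree ≤ 4 * F.totalDegree := by
  have hF (i : Fin 3) := totalDegree_pderiv_le i F
  have hH (i : Fin 5) : (pderiv 2 F ^ 3 * hessianCoeff F i).totalDegree ≤ 4 * F.totalDegree :=
    (totalDegree_mul_le_of_le (totalDegree_pow_le_of_le 3 (hF 2))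
      (totalDegree_hessianCoeff_le F i)).trans (by omega)
  have hQ (i j : Fin 3) : (quotientCoeff F i * pderiv j F).totalDegree ≤ 4 * F.totalDegree :=
    (totalDegree_mul_le_of_le (totalDegree_quotientCoeff_le F i) (hF j)).trans (by omega)
  fin_cases i
  · exact totalDegree_sub_le_of_le (hH 0) (hQ 0 0)
  · exact totalDegree_sub_le_of_le (totalDegree_sub_le_of_le (hH 1) (hQ 1 0)) (hQ 0 1)

-- Both directions are roots of the remainder, which has degree one in `a`.
lemma eval_remainderCoeff_eq_zero {F : MvPolynomial (Fin 3) K} {q r : Triple K}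
    (hq : restrictLine q F = 0) (hr : restrictLine r F = 0) (hqr : q.1 ≠ r.1) {t : K}
    (ht : linePoint q t = linePoint r t) (i : Fin 2) :
    eval (linePoint q t) (remainderCoeff F i) = 0 := by
  have remainder_root (s : Triple K) (hs : restrictLine s F = 0) :
      eval (linePoint s t) (remainderCoeff F 0) +
        eval (linePoint s t) (remainderCoeff F 1) * s.1 = 0 := by
    have h₁ := restrictLine_dirDeriv_eq_zero hs
    have h₂ := restrictLine_dirDeriv_eq_zero h₁
    have hdiv := congrArg (eval (linePoint s t)) (pderiv_pow_mul_dirDeriv_dirDeriv F s.1)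
    simp only [map_mul, map_add, eval_linePoint_eq_zero h₁, eval_linePoint_eq_zero h₂, mul_zero,
      zero_add, eval_C] at hdiv
    exact hdiv.symm
  have hq_root := remainder_root q hq
  have hr_root := remainder_root r hr
  rw [← ht] at hr_root
  have h₁ : eval (linePoint q t) (remainderCoeff F 1) = 0 :=
    (mul_eq_zero.1 (by linear_combination hq_root - hr_root :
      eval (linePoint q t) (remainderCoeff F 1) * (q.1 - r.1) = 0)).resolve_right
      (sub_ne_zero.2 hqr)
  fin_cases i
  · simpa [h₁] using hq_root
  · exact h₁

-- Modulo `F` and its derivative along `v = (1, a, a²)`, a power of `∂₂F` kills all higher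
-- derivatives along `v`, so `F` vanishes to infinite order along `v`.
theorem restrictLine_lineThrough_eq_zero [Infinite K] {p : ℕ} [CharP K p] (hp : p.Prime)
    {F : MvPolynomial (Fin 3) K} (hdeg : F.totalDegree < p) (hrem : ∀ i, F ∣ remainderCoeff F i)
    {x : Fin 3 → K} {a : K} (hx : eval x F = 0) (hx₂ : eval x (pderiv 2 F) ≠ 0)
    (hxa : eval x (dirDeriv (conicDir a) F) = 0) : restrictLine (lineThrough x a) F = 0 := by
  set D := dirDeriv (conicDir a)
  have hspan : pderiv 2 F ^ 3 * D (D F) ∈ Ideal.span {F, D F} := by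
    obtain ⟨u, hu⟩ := hrem 0
    obtain ⟨w, hw⟩ := hrem 1
    rw [pderiv_pow_mul_dirDeriv_dirDeriv, Ideal.mem_span_pair]
    refine ⟨u + w * C a,
      quotientCoeff F 2 * C a ^ 2 + quotientCoeff F 1 * C a + quotientCoeff F 0, ?_⟩
    rw [hu, hw]
    ring
  have iterate_eq_zero (k : ℕ) : eval x (D^[k] F) = 0 := by
    obtain ⟨n, hn⟩ := exists_pow_mul_iterate_mem_span D hspan k
    obtain ⟨u, w, huw⟩ := Ideal.mem_span_pair.1 hn
    have h := congrArg (eval x) huw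
    simp only [map_add, map_mul, hx, hxa, map_pow, mul_zero, add_zero] at h
    exact (mul_eq_zero.1 h.symm).resolve_left (pow_ne_zero n hx₂)
  have hres : lineRestrict x (conicDir a) F = 0 := by
    refine eq_zero_of_iterate_derivative_eval_eq_zero hp
      ((natDegree_lineRestrict_le _ _ _).trans_lt hdeg) 0 fun k => ?_
    rw [iterate_derivative_lineRestrict, eval_lineRestrict]
    simpa using iterate_eq_zero k
  refine Polynomial.funext fun t => ?_
  rw [eval_restrictLine, linePoint_lineThrough, ← eval_lineRestrict, hres, Polynomial.eval_zero,
    Polynomial.eval_zero]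

end Flecnode

section SecondLine

variable {K : Type*} [Field K]

lemma restrictLine_add_eq_zero_of_pderiv_eq_zero [Infinite K] {p : ℕ} [CharP K p] (hp : p.Prime)
    {F : MvPolynomial (Fin 3) K} (hdeg : F.totalDegree < p) (hF₂ : pderiv 2 F = 0) {q : Triple K}
    (hq : restrictLine q F = 0) (s : K) : restrictLine (q.1, q.2.1, q.2.2 + s) F = 0 := by
  refine Polynomial.funext fun t => ?_
  have hD : dirDeriv ![0, 0, 1] F = 0 := by
    simp [dirDeriv_eq_sum_pderiv, Fin.sum_univ_three, hF₂]
  have vertical_eq_zero : lineRestrict (linePoint q t) ![0, 0, 1] F = 0 := by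
    refine eq_zero_of_iterate_derivative_eval_eq_zero hp
      ((natDegree_lineRestrict_le _ _ _).trans_lt hdeg) 0 fun k => ?_
    cases k with
    | zero => simpa [eval_lineRestrict] using eval_linePoint_eq_zero hq t
    | succ k => simp [Function.iterate_succ_apply, derivative_lineRestrict, hD]
  have hs := eval_lineRestrict (linePoint q t) ![0, 0, 1] F s
  rw [vertical_eq_zero, Polynomial.eval_zero] at hs
  rw [eval_restrictLine, Polynomial.eval_zero, hs]
  congr 2
  ext i
  fin_cases i <;> simp [linePoint, add_assoc]

-- The surface is a cylinder over a line, that is, a plane containing the third axis.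
lemma fst_eq_of_pderiv_eq_zero [Infinite K] {p : ℕ} [CharP K p] (hp : p.Prime)
    {F : MvPolynomial (Fin 3) K} (hF : Irreducible F) (hdeg : F.totalDegree < p)
    (hF₂ : pderiv 2 F = 0) {q r : Triple K} (hq : restrictLine q F = 0)
    (hr : restrictLine r F = 0) : q.1 = r.1 := by
  classical
  let N : MvPolynomial (Fin 3) K := X 1 - C q.2.1 - C q.1 * X 0
  have hN_deg : N.totalDegree ≤ 1 := totalDegree_sub_le_of_le
    (totalDegree_sub_le_of_le (by simp) (by simp)) (totalDegree_C_mul_X_le _ _)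
  have hFN : F ∣ N := by
    by_contra hFN
    obtain ⟨T, hT⟩ := Infinite.exists_subset_card_eq K (2 * F.totalDegree + 1)
    have hle := card_le_of_restrictLine_eq_zero hF hFN
      (S := T.image fun s => (q.1, q.2.1, q.2.2 + s))
      (forall_mem_image.2 fun s _ =>
        restrictLine_add_eq_zero_of_pderiv_eq_zero hp hdeg hF₂ hq s)
      (forall_mem_image.2 fun s _ => Polynomial.funext fun t => by
        simp [eval_restrictLine, N, linePoint])
    rw [card_image_of_injective _ (fun s s' h => by simpa using h), hT] at hle
    nlinarith
  obtain ⟨G, hG⟩ := hFN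
  have hrN : restrictLine r N = 0 := by rw [hG, map_mul, hr, zero_mul]
  have h₀ := eval_linePoint_eq_zero hrN 0
  have h₁ := eval_linePoint_eq_zero hrN 1
  simp only [N, linePoint, map_sub, map_mul, eval_X, eval_C, Matrix.cons_val] at h₀ h₁
  linear_combination h₀ - h₁

/-- The constant coefficient `u` in the equation `u(x) + a v(x) = 0` expressing that the line
through `x` with direction `(1, a, a²)` meets the line `q`. -/
noncomputable def meetConst (q : Triple K) : MvPolynomial (Fin 3) K :=
  X 2 - C q.1 * X 1 - C q.2.2

/-- The linear coefficient `v` in the equation `u(x) + a v(x) = 0` expressing that the line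
through `x` with direction `(1, a, a²)` meets the line `q`. -/
noncomputable def meetCoeff (q : Triple K) : MvPolynomial (Fin 3) K :=
  C q.1 * X 0 + C q.2.1 - X 1

/-- The resultant in `a` of the derivative of `F` in direction `(1, a, a²)` and of the equation
`u + a v = 0` for a line of direction `(1, a, a²)` to meet `q`. -/
noncomputable def meetResultant (F : MvPolynomial (Fin 3) K) (q : Triple K) :
    MvPolynomial (Fin 3) K :=
  pderiv 0 F * meetCoeff q ^ 2 - pderiv 1 F * (meetConst q * meetCoeff q) +
    pderiv 2 F * meetConst q ^ 2

/-- The leading coefficient times the derivative at `q.1` of the quadratic polynomial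
`a ↦ dirDeriv (1, a, a²) F`. Where it does not vanish, this quadratic polynomial has a second root
besides `q.1`. -/
noncomputable def separant (F : MvPolynomial (Fin 3) K) (q : Triple K) : MvPolynomial (Fin 3) K :=
  pderiv 2 F * (C (2 * q.1) * pderiv 2 F + pderiv 1 F)

/-- The line through `linePoint q t` other than `q` itself which is tangent to the surface `F = 0`;
its direction is obtained from that of `q` by Vieta's formula. -/
noncomputable def secondLine (F : MvPolynomial (Fin 3) K) (q : Triple K) (t : K) : Triple K :=
  lineThrough (linePoint q t)
    (-eval (linePoint q t) (pderiv 1 F) / eval (linePoint q t) (pderiv 2 F) - q.1)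

lemma totalDegree_meetResultant_le (F : MvPolynomial (Fin 3) K) (q : Triple K) :
    (meetResultant F q).totalDegree ≤ F.totalDegree + 2 := by
  have hF (i : Fin 3) := totalDegree_pderiv_le i F
  have hu : (meetConst q).totalDegree ≤ 1 := totalDegree_sub_le_of_le
    (totalDegree_sub_le_of_le (by simp) (totalDegree_C_mul_X_le _ _)) (by simp)
  have hv : (meetCoeff q).totalDegree ≤ 1 := totalDegree_sub_le_of_le
    (totalDegree_add_le_of_le (totalDegree_C_mul_X_le _ _) (by simp)) (by simp)
  exact totalDegree_add_le_of_le
    (totalDegree_sub_le_of_le (totalDegree_mul_le_of_le (hF 0) (totalDegree_pow_le_of_le 2 hv))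
      (totalDegree_mul_le_of_le (hF 1) (totalDegree_mul_le_of_le hu hv)))
    (totalDegree_mul_le_of_le (hF 2) (totalDegree_pow_le_of_le 2 hu))

lemma meets_lineThrough_iff {q : Triple K} {x : Fin 3 → K} {a : K} :
    Meets q (lineThrough x a) ↔ eval x (meetConst q) + a * eval x (meetCoeff q) = 0 := by
  simp only [Meets, lineThrough, meetConst, meetCoeff, map_sub, map_add, map_mul, eval_X, eval_C]
  constructor <;> intro h <;> linear_combination -h

lemma eval_dirDeriv_linePoint_eq_zero {F : MvPolynomial (Fin 3) K} {q : Triple K}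
    (hq : restrictLine q F = 0) (t : K) :
    eval (linePoint q t) (pderiv 0 F) + q.1 * eval (linePoint q t) (pderiv 1 F) +
      q.1 ^ 2 * eval (linePoint q t) (pderiv 2 F) = 0 := by
  rw [← eval_dirDeriv_conicDir]
  exact eval_linePoint_eq_zero (restrictLine_dirDeriv_eq_zero hq) t

lemma restrictLine_meetResultant_eq_zero [Infinite K] {F : MvPolynomial (Fin 3) K}
    {q r : Triple K} (hr : restrictLine r F = 0) (h : Meets q r) :
    restrictLine r (meetResultant F q) = 0 := by
  refine Polynomial.funext fun s => ?_
  rw [eval_restrictLine, Polynomial.eval_zero]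
  rw [← lineThrough_linePoint_self r s, meets_lineThrough_iff] at h
  have hu : eval (linePoint r s) (meetConst q) = -(r.1 * eval (linePoint r s) (meetCoeff q)) := by
    linear_combination h
  simp only [meetResultant, map_add, map_sub, map_mul, map_pow, hu]
  linear_combination eval (linePoint r s) (meetCoeff q) ^ 2 * eval_dirDeriv_linePoint_eq_zero hr s

section

variable {F : MvPolynomial (Fin 3) K} {q : Triple K} {t : K}

lemma linePoint_secondLine (F : MvPolynomial (Fin 3) K) (q : Triple K) (t : K) :
    linePoint (secondLine F q t) t = linePoint q t :=
  linePoint_lineThrough_linePoint q t _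

lemma eval_pderiv_ne_zero_of_separant (ht : eval (linePoint q t) (separant F q) ≠ 0) :
    eval (linePoint q t) (pderiv 2 F) ≠ 0 := fun h =>
  ht (by simp [separant, h])

lemma secondLine_fst_mul (h : eval (linePoint q t) (pderiv 2 F) ≠ 0) :
    (secondLine F q t).1 * eval (linePoint q t) (pderiv 2 F) =
      -eval (linePoint q t) (pderiv 1 F) - q.1 * eval (linePoint q t) (pderiv 2 F) := by
  simp only [secondLine, lineThrough]
  field_simp

lemma secondLine_fst_ne (ht : eval (linePoint q t) (separant F q) ≠ 0) :
    (secondLine F q t).1 ≠ q.1 := by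
  intro h
  have hmul := secondLine_fst_mul (eval_pderiv_ne_zero_of_separant ht)
  rw [h] at hmul
  refine ht ?_
  simp only [separant, map_mul, map_add, eval_C]
  linear_combination eval (linePoint q t) (pderiv 2 F) * hmul

lemma restrictLine_secondLine_eq_zero [Infinite K] {p : ℕ} [CharP K p] (hp : p.Prime)
    (hdeg : F.totalDegree < p) (hrem : ∀ i, F ∣ remainderCoeff F i) (hq : restrictLine q F = 0)
    (ht : eval (linePoint q t) (separant F q) ≠ 0) : restrictLine (secondLine F q t) F = 0 := by
  have hF₂ := eval_pderiv_ne_zero_of_separant ht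
  refine restrictLine_lineThrough_eq_zero hp hdeg hrem (eval_linePoint_eq_zero hq t) hF₂ ?_
  rw [eval_dirDeriv_conicDir]
  change _ + (secondLine F q t).1 * _ + (secondLine F q t).1 ^ 2 * _ = 0
  linear_combination eval_dirDeriv_linePoint_eq_zero hq t +
    ((secondLine F q t).1 - q.1) * secondLine_fst_mul hF₂

lemma meets_or_meets_secondLine {q' : Triple K} (hq : restrictLine q F = 0)
    (hF₂ : eval (linePoint q t) (pderiv 2 F) ≠ 0) (hq' : F ∣ meetResultant F q') :
    Meets q' q ∨ Meets q' (secondLine F q t) := by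
  have hres : eval (linePoint q t) (meetResultant F q') = 0 := by
    obtain ⟨G, hG⟩ := hq'
    rw [hG, map_mul, eval_linePoint_eq_zero hq t, zero_mul]
  simp only [meetResultant, map_add, map_sub, map_mul, map_pow] at hres
  set u := eval (linePoint q t) (meetConst q')
  set v := eval (linePoint q t) (meetCoeff q')
  have hfactor : eval (linePoint q t) (pderiv 2 F) *
      ((u + q.1 * v) * (u + (secondLine F q t).1 * v)) = 0 := by
    linear_combination hres - v ^ 2 * eval_dirDeriv_linePoint_eq_zero hq t +
      (u * v + q.1 * v ^ 2) * secondLine_fst_mul hF₂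
  rcases mul_eq_zero.1 ((mul_eq_zero.1 hfactor).resolve_left hF₂) with h | h
  · left
    rw [← lineThrough_linePoint_self q t]
    exact meets_lineThrough_iff.2 h
  · exact Or.inr (meets_lineThrough_iff.2 h)

lemma eq_of_secondLine_eq {s : K} (ht : (secondLine F q t).1 ≠ q.1)
    (h : secondLine F q t = secondLine F q s) : t = s := by
  have h_t := congrFun (linePoint_secondLine F q t) 1
  have h_s := congrFun (linePoint_secondLine F q s) 1
  rw [← h] at h_s
  simp only [linePoint, Matrix.cons_val] at h_t h_s
  have hmul : ((secondLine F q t).1 - q.1) * (t - s) = 0 := by linear_combination h_t - h_s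
  exact sub_eq_zero.1 ((mul_eq_zero.1 hmul).resolve_left (sub_ne_zero.2 ht))

end

lemma restrictLine_separant_ne_zero {F : MvPolynomial (Fin 3) K} {q r : Triple K}
    (hq : restrictLine q F = 0) (hr : restrictLine r F = 0) {t : K}
    (ht : linePoint q t = linePoint r t) (hqr : q.1 ≠ r.1)
    (hF₂ : eval (linePoint q t) (pderiv 2 F) ≠ 0) : restrictLine q (separant F q) ≠ 0 := by
  intro h
  have hsep := eval_linePoint_eq_zero h t
  simp only [separant, map_mul, map_add, eval_C] at hsep
  have hsep' := (mul_eq_zero.1 hsep).resolve_left hF₂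
  have hDq := eval_dirDeriv_linePoint_eq_zero hq t
  have hDr := eval_dirDeriv_linePoint_eq_zero hr t
  rw [← ht] at hDr
  have hsquare : (q.1 - r.1) ^ 2 * eval (linePoint q t) (pderiv 2 F) = 0 := by
    linear_combination (q.1 - r.1) * hsep' - hDq + hDr
  exact mul_ne_zero (pow_ne_zero 2 (sub_ne_zero.2 hqr)) hF₂ hsquare

lemma infinite_setOf_eval_linePoint_ne_zero [Infinite K] {q : Triple K}
    {G : MvPolynomial (Fin 3) K} (h : restrictLine q G ≠ 0) :
    {t | eval (linePoint q t) G ≠ 0}.Infinite := by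
  convert (Polynomial.finite_setOfPred_isRoot h).infinite_compl using 1
  ext t
  simp [Polynomial.IsRoot, eval_restrictLine]

-- The second lines along `q` form an infinite family in the surface, all of which meet `q`.
lemma dvd_meetResultant [Infinite K] {p : ℕ} [CharP K p] (hp : p.Prime)
    {F : MvPolynomial (Fin 3) K} (hF : Irreducible F) (hdeg : F.totalDegree < p)
    (hrem : ∀ i, F ∣ remainderCoeff F i) {q : Triple K} (hq : restrictLine q F = 0)
    (hsep : restrictLine q (separant F q) ≠ 0) : F ∣ meetResultant F q := by
  classical
  by_contra hFN
  obtain ⟨T, hT, hT_card⟩ := (infinite_setOf_eval_linePoint_ne_zero hsep).exists_subset_card_eq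
    (2 * F.totalDegree * (F.totalDegree + 2) + 1)
  have secondLine_mem (s : K) (hs : s ∈ T) : restrictLine (secondLine F q s) F = 0 :=
    restrictLine_secondLine_eq_zero hp hdeg hrem hq (hT hs)
  have hle := card_le_of_restrictLine_eq_zero hF hFN (S := T.image (secondLine F q))
    (forall_mem_image.2 secondLine_mem)
    (forall_mem_image.2 fun s hs => restrictLine_meetResultant_eq_zero (secondLine_mem s hs)
      (meets_of_linePoint_eq (linePoint_secondLine F q s).symm))
  rw [card_image_of_injOn fun s hs s' _ h => eq_of_secondLine_eq (secondLine_fst_ne (hT hs)) h,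
    hT_card] at hle
  have := Nat.mul_le_mul_left (2 * F.totalDegree) (totalDegree_meetResultant_le F q)
  omega

end SecondLine

section Surface

variable {K : Type*} [Field K]

open scoped Classical in
/-- The number of members of `R` which meet `q`. -/
noncomputable def meetCount (q : Triple K) (R : Finset (Triple K)) : ℕ := #{r ∈ R | Meets q r}

open scoped Classical in
/-- The members of `R` which are contained in the surface `F = 0`. -/
noncomputable def linesIn (F : MvPolynomial (Fin 3) K) (R : Finset (Triple K)) :
    Finset (Triple K) :=
  {r ∈ R | restrictLine r F = 0}

open scoped Classical in
/-- Any two distinct lines are both met by at most `k` members of `P`. In terms of points and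
planes: at most `k` points of `P` are collinear. -/
def FewTransversals (k : ℕ) (P : Finset (Triple K)) : Prop :=
  ∀ ⦃r₁ r₂ : Triple K⦄, r₁ ≠ r₂ → #{q ∈ P | Meets q r₁ ∧ Meets q r₂} ≤ k

/-- The position of two families of lines needed for the incidence bound: within each family the
lines are pairwise skew and have few common transversals, and no line of the first family is
parallel to one of the second. -/
structure GeneralPosition (k : ℕ) (P R : Finset (Triple K)) : Prop where
  skew_left : (P : Set (Triple K)).Pairwise fun q q' => ¬ Meets q q'
  skew_right : (R : Set (Triple K)).Pairwise fun r r' => ¬ Meets r r'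
  fst_ne : ∀ q ∈ P, ∀ r ∈ R, q.1 ≠ r.1
  few_left : FewTransversals k P
  few_right : FewTransversals k R

variable {k : ℕ} {P R P' R' : Finset (Triple K)}

lemma FewTransversals.mono (h : FewTransversals k P) (hP : P' ⊆ P) : FewTransversals k P' := by
  classical
  exact fun _ _ hr => (card_le_card (filter_subset_filter _ hP)).trans (h hr)

lemma GeneralPosition.symm (h : GeneralPosition k P R) : GeneralPosition k R P :=
  ⟨h.skew_right, h.skew_left, fun r hr q hq => (h.fst_ne q hq r hr).symm, h.few_right, h.few_left⟩

lemma GeneralPosition.mono (h : GeneralPosition k P R) (hP : P' ⊆ P) (hR : R' ⊆ R) :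
    GeneralPosition k P' R' :=
  ⟨h.skew_left.mono (mod_cast hP), h.skew_right.mono (mod_cast hR),
    fun q hq r hr => h.fst_ne q (hP hq) r (hR hr), h.few_left.mono hP, h.few_right.mono hR⟩

lemma meetCount_le_card (q : Triple K) (R : Finset (Triple K)) : meetCount q R ≤ #R := by
  classical exact card_filter_le _ _

lemma mem_linesIn {F : MvPolynomial (Fin 3) K} {r : Triple K} :
    r ∈ linesIn F R ↔ r ∈ R ∧ restrictLine r F = 0 := by
  simp [linesIn]

lemma linesIn_subset (F : MvPolynomial (Fin 3) K) (R : Finset (Triple K)) : linesIn F R ⊆ R := by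
  classical exact filter_subset _ _

lemma GeneralPosition.meetCount_le_totalDegree (h : GeneralPosition k P R) {q : Triple K}
    (hq : q ∈ P) {f : MvPolynomial (Fin 3) K} (hf : restrictLine q f ≠ 0)
    (hroot : ∀ r ∈ R, ∀ t, linePoint q t = linePoint r t → eval (linePoint q t) f = 0) :
    meetCount q R ≤ f.totalDegree := by
  classical
  refine card_le_totalDegree_of_linePoint_eq hf
    (h.skew_right.mono (mod_cast filter_subset _ _)) fun r hr => ?_
  obtain ⟨hrR, hqr⟩ := mem_filter.1 hr
  obtain ⟨t, ht⟩ := hqr.exists_linePoint_eq (h.fst_ne q hq r hrR)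
  exact ⟨t, ht, hroot r hrR t ht⟩

lemma GeneralPosition.meetCount_linesIn_le_totalDegree (h : GeneralPosition k P R) {q : Triple K}
    (hq : q ∈ P) {F : MvPolynomial (Fin 3) K} (hF : restrictLine q F ≠ 0) :
    meetCount q (linesIn F R) ≤ F.totalDegree :=
  (h.mono subset_rfl (linesIn_subset F R)).meetCount_le_totalDegree hq hF fun r hr t ht => by
    rw [ht, eval_linePoint_eq_zero (mem_linesIn.1 hr).2]

lemma meetCount_linesIn_eq_zero_of_pderiv_eq_zero [Infinite K] {p : ℕ} [CharP K p] (hp : p.Prime)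
    {F : MvPolynomial (Fin 3) K} (hF : Irreducible F) (hdeg : F.totalDegree < p)
    (hF₂ : pderiv 2 F = 0) (h : GeneralPosition k P R) {q : Triple K} (hq : q ∈ P)
    (hqF : restrictLine q F = 0) : meetCount q (linesIn F R) = 0 := by
  have hempty : linesIn F R = ∅ := eq_empty_of_forall_notMem fun r hr =>
    h.fst_ne q hq r (linesIn_subset F R hr)
      (fst_eq_of_pderiv_eq_zero hp hF hdeg hF₂ hqF (mem_linesIn.1 hr).2)
  simp [hempty, meetCount]

lemma card_le_of_dvd_meetResultant [Infinite K] {F : MvPolynomial (Fin 3) K}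
    (hskew : (P : Set (Triple K)).Pairwise fun q q' => ¬ Meets q q') (hfew : FewTransversals k P)
    (hPF : ∀ q ∈ P, restrictLine q F = 0) (hsep : ∀ q ∈ P, restrictLine q (separant F q) ≠ 0)
    (hdvd : ∀ q ∈ P, F ∣ meetResultant F q) : #P ≤ k + 1 := by
  classical
  rcases P.eq_empty_or_nonempty with rfl | ⟨q₀, hq₀⟩
  · simp
  obtain ⟨t₁, ht₁, t₂, ht₂, hne⟩ :=
    (infinite_setOf_eval_linePoint_ne_zero (hsep q₀ hq₀)).nontrivial
  have hsub : P.erase q₀ ⊆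
      {q ∈ P | Meets q (secondLine F q₀ t₁) ∧ Meets q (secondLine F q₀ t₂)} := by
    intro q hq
    obtain ⟨hq_ne, hqP⟩ := mem_erase.1 hq
    have hmeet (t : K) (ht : eval (linePoint q₀ t) (separant F q₀) ≠ 0) :
        Meets q (secondLine F q₀ t) :=
      (meets_or_meets_secondLine (hPF q₀ hq₀) (eval_pderiv_ne_zero_of_separant ht)
        (hdvd q hqP)).resolve_left (hskew hqP hq₀ hq_ne)
    exact mem_filter.2 ⟨hqP, hmeet t₁ ht₁, hmeet t₂ ht₂⟩
  have hcard := (card_le_card hsub).trans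
    (hfew fun heq => hne (eq_of_secondLine_eq (secondLine_fst_ne ht₁) heq))
  have := card_erase_add_one hq₀
  omega

lemma not_dvd_pderiv {F : MvPolynomial (Fin 3) K} {i : Fin 3} (hF : pderiv i F ≠ 0) :
    ¬ F ∣ pderiv i F := by
  rintro ⟨G, hG⟩
  have hFG : F * G ≠ 0 := hG ▸ hF
  have hle := totalDegree_pderiv_le_sub_one i F
  rw [hG, totalDegree_mul_of_isDomain (left_ne_zero_of_mul hFG) (right_ne_zero_of_mul hFG)] at hle
  have hconst : F.totalDegree = 0 := by omega
  rw [totalDegree_eq_zero_iff_eq_C] at hconst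
  exact hF (by rw [hconst, pderiv_C])

open scoped Classical in
lemma exists_card_rich_le_of_dvd_remainderCoeff [Infinite K] {p : ℕ} [CharP K p] (hp : p.Prime)
    {F : MvPolynomial (Fin 3) K} (hF : Irreducible F) (hdeg : F.totalDegree < p)
    (hF₂ : pderiv 2 F ≠ 0) (hrem : ∀ i, F ∣ remainderCoeff F i) (h : GeneralPosition k P R) :
    ∃ P₁ ⊆ P, #P₁ ≤ 8 * F.totalDegree ^ 2 ∧
      #{q ∈ P \ P₁ | F.totalDegree < meetCount q (linesIn F R)} ≤ k + 1 := by
  set P₁ := linesIn (pderiv 2 F) (linesIn F P)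
  have hR := h.mono subset_rfl (linesIn_subset F R)
  refine ⟨P₁, (linesIn_subset _ _).trans (linesIn_subset _ _), ?_, ?_⟩
  · have hle := card_le_of_restrictLine_eq_zero hF (not_dvd_pderiv hF₂) (S := P₁)
      (fun q hq => (mem_linesIn.1 (linesIn_subset _ _ hq)).2) (fun q hq => (mem_linesIn.1 hq).2)
    nlinarith [totalDegree_pderiv_le 2 F]
  set rich := {q ∈ P \ P₁ | F.totalDegree < meetCount q (linesIn F R)}
  have rich_subset : rich ⊆ P := (filter_subset _ _).trans sdiff_subset
  have rich_in : ∀ q ∈ rich, restrictLine q F = 0 := fun q hq => by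
    by_contra hqF
    exact (h.meetCount_linesIn_le_totalDegree (rich_subset hq) hqF).not_gt (mem_filter.1 hq).2
  have rich_separant : ∀ q ∈ rich, restrictLine q (separant F q) ≠ 0 := fun q hq => by
    have hqP := rich_subset hq
    have hqF₂ : restrictLine q (pderiv 2 F) ≠ 0 := fun hqF₂ =>
      (mem_sdiff.1 (mem_filter.1 hq).1).2
        (mem_linesIn.2 ⟨mem_linesIn.2 ⟨hqP, rich_in q hq⟩, hqF₂⟩)
    by_contra hsep
    have hle := hR.meetCount_le_totalDegree hqP hqF₂ fun r hr t ht => by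
      by_contra hne
      exact restrictLine_separant_ne_zero (rich_in q hq) (mem_linesIn.1 hr).2 ht
        (hR.fst_ne q hqP r hr) hne hsep
    exact (hle.trans (totalDegree_pderiv_le 2 F)).not_gt (mem_filter.1 hq).2
  exact card_le_of_dvd_meetResultant (h.skew_left.mono (mod_cast rich_subset))
    (h.few_left.mono rich_subset) rich_in rich_separant
    fun q hq => dvd_meetResultant hp hF hdeg hrem (rich_in q hq) (rich_separant q hq)

lemma exists_meetCount_le_of_not_dvd_remainderCoeff [Infinite K] {F : MvPolynomial (Fin 3) K}
    (hF : Irreducible F) {i : Fin 2} (hrem : ¬ F ∣ remainderCoeff F i)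
    (h : GeneralPosition k P R) :
    ∃ P₁ ⊆ P, #P₁ ≤ 8 * F.totalDegree ^ 2 ∧
      ∀ q ∈ P, q ∉ P₁ → meetCount q (linesIn F R) ≤ 4 * F.totalDegree := by
  have hrem_deg := totalDegree_remainderCoeff_le F i
  have hR := h.mono subset_rfl (linesIn_subset F R)
  refine ⟨linesIn (remainderCoeff F i) (linesIn F P),
    (linesIn_subset _ _).trans (linesIn_subset _ _), ?_, fun q hq hq₁ => ?_⟩
  · have hle := card_le_of_restrictLine_eq_zero hF hrem
      (S := linesIn (remainderCoeff F i) (linesIn F P))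
      (fun q hq => (mem_linesIn.1 (linesIn_subset _ _ hq)).2) (fun q hq => (mem_linesIn.1 hq).2)
    nlinarith
  by_cases hqF : restrictLine q F = 0
  · have hq_rem : restrictLine q (remainderCoeff F i) ≠ 0 := fun hq_rem =>
      hq₁ (mem_linesIn.2 ⟨mem_linesIn.2 ⟨hq, hqF⟩, hq_rem⟩)
    exact (hR.meetCount_le_totalDegree hq hq_rem fun r hr t ht =>
      eval_remainderCoeff_eq_zero hqF (mem_linesIn.1 hr).2 (hR.fst_ne q hq r hr) ht i).trans
      hrem_deg
  · exact (h.meetCount_linesIn_le_totalDegree hq hqF).trans (by omega)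

open scoped Classical in
lemma exists_card_rich_le_of_irreducible [Infinite K] {p : ℕ} [CharP K p] (hp : p.Prime)
    {F : MvPolynomial (Fin 3) K} (hF : Irreducible F) (hdeg : F.totalDegree < p)
    (h : GeneralPosition k P R) :
    ∃ P₁ ⊆ P, #P₁ ≤ 8 * F.totalDegree ^ 2 ∧
      #{q ∈ P \ P₁ | 4 * F.totalDegree < meetCount q (linesIn F R)} ≤ k + 1 := by
  by_cases hF₂ : pderiv 2 F = 0
  · refine ⟨∅, empty_subset _, by simp, ?_⟩
    rw [filter_false_of_mem, card_empty]
    · omega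
    intro q hq
    rw [sdiff_empty] at hq
    by_cases hqF : restrictLine q F = 0
    · simp [meetCount_linesIn_eq_zero_of_pderiv_eq_zero hp hF hdeg hF₂ h hq hqF]
    · have := h.meetCount_linesIn_le_totalDegree hq hqF
      omega
  by_cases hrem : ∀ i, F ∣ remainderCoeff F i
  · obtain ⟨P₁, hP₁, hcard, hrich⟩ :=
      exists_card_rich_le_of_dvd_remainderCoeff hp hF hdeg hF₂ hrem h
    exact ⟨P₁, hP₁, hcard, (card_le_card
      (monotone_filter_right _ fun q _ hq => by omega)).trans hrich⟩
  · obtain ⟨i, hi⟩ := not_forall.1 hrem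
    obtain ⟨P₁, hP₁, hcard, hle⟩ := exists_meetCount_le_of_not_dvd_remainderCoeff hF hi h
    refine ⟨P₁, hP₁, hcard, ?_⟩
    rw [filter_false_of_mem, card_empty]
    · omega
    exact fun q hq => (hle q (mem_sdiff.1 hq).1 (mem_sdiff.1 hq).2).not_gt

open scoped Classical in
lemma sum_meetCount_le_add_card_rich_mul (P R : Finset (Triple K)) (m : ℕ) :
    ∑ q ∈ P, meetCount q R ≤ m * #P + #{q ∈ P | m < meetCount q R} * #R := by
  calc ∑ q ∈ P, meetCount q R
      ≤ ∑ q ∈ P, (m + if m < meetCount q R then #R else 0) := by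
        refine sum_le_sum fun q _ => ?_
        split_ifs with hq
        · exact (meetCount_le_card q R).trans (Nat.le_add_left _ _)
        · omega
    _ = m * #P + #{q ∈ P | m < meetCount q R} * #R := by
        rw [sum_add_distrib, ← sum_filter, sum_const, sum_const, smul_eq_mul, smul_eq_mul,
          mul_comm m]

open scoped Classical in
lemma meetCount_linesIn_mul (q : Triple K) (F G : MvPolynomial (Fin 3) K)
    (R : Finset (Triple K)) :
    meetCount q (linesIn (F * G) R) =
      meetCount q (linesIn F R) + meetCount q (linesIn G (R \ linesIn F R)) := by
  simp only [meetCount]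
  rw [← card_union_of_disjoint]
  · congr 1
    ext r
    simp only [mem_filter, mem_union, mem_linesIn, mem_sdiff, map_mul, mul_eq_zero]
    tauto
  · refine disjoint_left.2 fun r h₁ h₂ => ?_
    simp only [mem_filter, mem_linesIn, mem_sdiff] at h₁ h₂
    exact h₂.1.1.2 h₁.1

open scoped Classical in
theorem exists_sum_meetCount_linesIn_le [Infinite K] {p : ℕ} [CharP K p] (hp : p.Prime)
    {F : MvPolynomial (Fin 3) K} (hF : F ≠ 0) (hdeg : F.totalDegree < p)
    (h : GeneralPosition k P R) :
    ∃ P₁ ⊆ P, #P₁ ≤ 8 * F.totalDegree ^ 2 ∧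
      ∑ q ∈ P \ P₁, meetCount q (linesIn F R) ≤ 4 * F.totalDegree * #P + (k + 1) * #R := by
  induction F using WfDvdMonoid.induction_on_irreducible generalizing R with
  | zero => exact absurd rfl hF
  | unit u hu =>
    have hempty : linesIn u R = ∅ := eq_empty_of_forall_notMem fun r hr =>
      (hu.map (restrictLine r)).ne_zero (mem_linesIn.1 hr).2
    exact ⟨∅, empty_subset _, by simp, by simp [hempty, meetCount]⟩
  | mul G F hG hF_irr ih =>
    rw [totalDegree_mul_of_isDomain hF_irr.ne_zero hG] at hdeg ⊢
    obtain ⟨P₁, hP₁, hcard₁, hrich⟩ := exists_card_rich_le_of_irreducible hp hF_irr (by omega) h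
    obtain ⟨P₂, hP₂, hcard₂, hsum₂⟩ := ih hG (by omega) (h.mono subset_rfl
      (sdiff_subset (t := linesIn F R)))
    refine ⟨P₁ ∪ P₂, union_subset hP₁ hP₂, (card_union_le _ _).trans (by nlinarith), ?_⟩
    have hsum₁ : ∑ q ∈ P \ P₁, meetCount q (linesIn F R) ≤
        4 * F.totalDegree * #P + (k + 1) * #(linesIn F R) :=
      (sum_meetCount_le_add_card_rich_mul _ _ (4 * F.totalDegree)).trans (add_le_add
        (Nat.mul_le_mul_left _ (card_le_card sdiff_subset)) (Nat.mul_le_mul_right _ hrich))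
    have hR := card_sdiff_add_card_eq_card (linesIn_subset F R)
    calc ∑ q ∈ P \ (P₁ ∪ P₂), meetCount q (linesIn (F * G) R)
        = ∑ q ∈ P \ (P₁ ∪ P₂), meetCount q (linesIn F R) +
          ∑ q ∈ P \ (P₁ ∪ P₂), meetCount q (linesIn G (R \ linesIn F R)) := by
          simp only [meetCount_linesIn_mul, sum_add_distrib]
      _ ≤ ∑ q ∈ P \ P₁, meetCount q (linesIn F R) +
          ∑ q ∈ P \ P₂, meetCount q (linesIn G (R \ linesIn F R)) :=
          add_le_add
            (sum_le_sum_of_subset (sdiff_subset_sdiff subset_rfl subset_union_left))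
            (sum_le_sum_of_subset (sdiff_subset_sdiff subset_rfl subset_union_right))
      _ ≤ 4 * F.totalDegree * #P + (k + 1) * #(linesIn F R) +
          (4 * G.totalDegree * #P + (k + 1) * #(R \ linesIn F R)) := add_le_add hsum₁ hsum₂
      _ = 4 * (F.totalDegree + G.totalDegree) * #P + (k + 1) * #R := by
          rw [← hR]
          ring

end Surface

/-! ### The incidence bound in general position -/

section Partitioning

variable {K : Type*} [Field K]

lemma exists_restrictLine_eq_zero (S : Finset (Triple K)) {d : ℕ} (h : 6 * #S ≤ d ^ 2) :
    ∃ F : MvPolynomial (Fin 3) K, F ≠ 0 ∧ F.totalDegree ≤ d ∧ ∀ q ∈ S, restrictLine q F = 0 := by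
  let coeffs : restrictTotalDegree (Fin 3) K d →ₗ[K] (S × Fin (d + 1) → K) :=
    LinearMap.pi fun x => Polynomial.lcoeff K x.2 ∘ₗ
      (restrictLine x.1.1).toLinearMap ∘ₗ Submodule.subtype _
  have hdim : Module.finrank K (S × Fin (d + 1) → K) <
      Module.finrank K (restrictTotalDegree (Fin 3) K d) := by
    simp only [finrank_restrictTotalDegree, Module.finrank_pi, Fintype.card_prod,
      Fintype.card_coe, Fintype.card_fin]
    have := six_mul_choose_three d
    nlinarith
  have : FiniteDimensional K (restrictTotalDegree (Fin 3) K d) :=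
    Module.finite_of_finrank_pos (by omega)
  obtain ⟨F, hF, hF_ne⟩ :=
    Submodule.exists_mem_ne_zero_of_ne_bot (LinearMap.ker_ne_bot_of_finrank_lt (f := coeffs) hdim)
  have hFd : F.1.totalDegree ≤ d := (mem_restrictTotalDegree _ _ _).1 F.2
  refine ⟨F.1, fun h => hF_ne (Subtype.ext h), hFd, fun q hq => ?_⟩
  ext i
  rw [Polynomial.coeff_zero]
  by_cases hi : i < d + 1
  · simpa [coeffs] using congrFun (LinearMap.mem_ker.1 hF) (⟨q, hq⟩, ⟨i, hi⟩)
  · refine Polynomial.coeff_eq_zero_of_natDegree_lt ?_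
    have := natDegree_restrictLine_le q F.1
    omega

/-- The number of pairs consisting of a member of `P` and a member of `R` which meet. -/
noncomputable def incidences (P R : Finset (Triple K)) : ℕ := ∑ q ∈ P, meetCount q R

lemma incidences_comm (P R : Finset (Triple K)) : incidences P R = incidences R P := by
  classical
  calc ∑ q ∈ P, #{r ∈ R | Meets q r}
      = ∑ r ∈ R, #{q ∈ P | Meets q r} :=
        sum_card_bipartiteAbove_eq_sum_card_bipartiteBelow Meets
    _ = ∑ r ∈ R, #{q ∈ P | Meets r q} := by simp only [meets_comm]

lemma incidences_le_card_mul_card (P R : Finset (Triple K)) : incidences P R ≤ #P * #R :=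
  sum_le_card_nsmul P _ _ fun q _ => meetCount_le_card q R

lemma exists_cover_card_le {α : Type*} [DecidableEq α] {t M : ℕ} (P : Finset α)
    (h : #P ≤ t * M) : ∃ C : Fin M → Finset α, univ.biUnion C = P ∧ ∀ j, #(C j) ≤ t := by
  induction M generalizing P with
  | zero => exact ⟨fun _ => ∅, by simpa [eq_comm] using h, by simp⟩
  | succ M ih =>
    obtain ⟨S, hSP, hS⟩ := exists_subset_card_eq (min_le_right t #P)
    obtain ⟨C, hC, hC_card⟩ := ih (P \ S) (by
      rw [card_sdiff_of_subset hSP, hS]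
      grind)
    refine ⟨Fin.cons S C, ?_, Fin.forall_fin_succ.2 ⟨by simp [hS], by simpa using hC_card⟩⟩
    rw [Fin.univ_succ, cons_eq_insert, biUnion_insert, map_eq_image, image_biUnion]
    simp [hC, hSP]

lemma GeneralPosition.meetCount_le_mul_of_cover {M d k : ℕ} {P R : Finset (Triple K)}
    (h : GeneralPosition k P R) {r : Triple K} (hr : r ∈ R) [DecidableEq (Triple K)]
    {C : Fin M → Finset (Triple K)} (hC : univ.biUnion C = P)
    {F : Fin M → MvPolynomial (Fin 3) K} (hFd : ∀ j, (F j).totalDegree ≤ d)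
    (hFC : ∀ j, ∀ q ∈ C j, restrictLine q (F j) = 0) (hrF : ∀ j, restrictLine r (F j) ≠ 0) :
    meetCount r P ≤ M * d := by
  have hCP (j : Fin M) : C j ⊆ P := hC ▸ subset_biUnion_of_mem C (mem_univ j)
  have hcell (j : Fin M) : meetCount r (C j) ≤ d :=
    ((h.symm.mono subset_rfl (hCP j)).meetCount_le_totalDegree hr (hrF j) fun q hq t ht => by
      rw [ht, eval_linePoint_eq_zero (hFC j q hq)]).trans (hFd j)
  calc meetCount r P ≤ ∑ j, meetCount r (C j) := by
        simp only [meetCount, ← hC, filter_biUnion]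
        exact card_biUnion_le
    _ ≤ M * d := by simpa using sum_le_card_nsmul univ _ d fun j _ => hcell j

lemma incidences_le_add_of_subset [DecidableEq (Triple K)] {P P₁ R : Finset (Triple K)}
    (hP₁ : P₁ ⊆ P) {b : ℕ} (hb : ∑ q ∈ P \ P₁, meetCount q R ≤ b) :
    incidences P R ≤ b + incidences P₁ R := by
  rw [incidences, ← sum_sdiff hP₁]
  exact Nat.add_le_add_right hb _

lemma GeneralPosition.exists_incidences_linesIn_le [Infinite K] {p k d : ℕ} [CharP K p]
    (hp : p.Prime) {P R : Finset (Triple K)} (h : GeneralPosition k P R)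
    {F : MvPolynomial (Fin 3) K} (hF : F ≠ 0) (hFd : F.totalDegree ≤ d) (hdp : d < p)
    (hRF : ∀ r ∈ R, restrictLine r F = 0) :
    ∃ P₁ ⊆ P, #P₁ ≤ 8 * d ^ 2 ∧
      incidences P R ≤ 4 * d * #P + (k + 1) * #R + incidences P₁ R := by
  classical
  obtain ⟨P₁, hP₁, hcard, hsum⟩ :=
    exists_sum_meetCount_linesIn_le hp hF (hFd.trans_lt hdp) h
  have hlines : linesIn F R = R := filter_true_of_mem hRF
  rw [hlines] at hsum
  refine ⟨P₁, hP₁, hcard.trans (by gcongr), incidences_le_add_of_subset hP₁ (hsum.trans ?_)⟩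
  gcongr

/-- Polynomial partitioning: `P` is cut into `M` cells of at most `t` lines, and each cell is
placed on a surface of degree at most `d`. -/
theorem GeneralPosition.exists_incidences_le_sum [Infinite K] {p k M t d : ℕ} [CharP K p]
    (hp : p.Prime) {P R : Finset (Triple K)} (h : GeneralPosition k P R) (hPt : #P ≤ t * M)
    (htd : 6 * t ≤ d ^ 2) (hdp : d < p) :
    ∃ P' R' : Fin M → Finset (Triple K), (∀ j, P' j ⊆ P) ∧ (∀ j, R' j ⊆ R) ∧
      (∀ j, #(P' j) ≤ 8 * d ^ 2) ∧ ∑ j, #(R' j) ≤ #R ∧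
      incidences P R ≤ #R * (M * d) + M * (4 * d * #P) + (k + 1) * #R +
        ∑ j, incidences (P' j) (R' j) := by
  classical
  obtain ⟨C, hC, hCt⟩ := exists_cover_card_le P hPt
  choose F hF_ne hFd hFC using fun j => exists_restrictLine_eq_zero (C j)
    ((Nat.mul_le_mul_left 6 (hCt j)).trans htd)
  obtain ⟨R', hR'F, hR'_sup, hR'_disj⟩ := Fintype.exists_disjointed_le fun j => linesIn (F j) R
  have hR' (j : Fin M) : R' j ⊆ R := (hR'F j).trans (linesIn_subset _ _)
  choose P' hP' hP'_card hP'_inc using fun j =>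
    (h.mono subset_rfl (hR' j)).exists_incidences_linesIn_le hp (hF_ne j) (hFd j) hdp
      fun r hr => (mem_linesIn.1 (hR'F j hr)).2
  have hU : univ.biUnion R' ⊆ R := biUnion_subset.2 fun j _ => hR' j
  have hcard : ∑ j, #(R' j) = #(univ.biUnion R') :=
    (card_biUnion fun i _ j _ hij => hR'_disj hij).symm
  have houtside : ∑ r ∈ R \ univ.biUnion R', meetCount r P ≤ #R * (M * d) := by
    refine (sum_le_card_nsmul _ _ (M * d) fun r hr => ?_).trans
      (Nat.mul_le_mul_right _ (card_le_card sdiff_subset))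
    rw [← sup_eq_biUnion, hR'_sup, sup_eq_biUnion, mem_sdiff] at hr
    exact h.meetCount_le_mul_of_cover hr.1 hC hFd hFC fun j hj =>
      hr.2 (mem_biUnion.2 ⟨j, mem_univ j, mem_linesIn.2 ⟨hr.1, hj⟩⟩)
  refine ⟨P', R', hP', hR', hP'_card, hcard.trans_le (card_le_card hU), ?_⟩
  calc incidences P R
      ≤ #R * (M * d) + ∑ j, incidences P (R' j) := by
        rw [incidences_comm]
        refine (incidences_le_add_of_subset hU houtside).trans_eq ?_
        simp only [fun j => incidences_comm P (R' j)]
        rw [incidences, sum_biUnion fun i _ j _ hij => hR'_disj hij]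
        rfl
    _ ≤ #R * (M * d) + ∑ j, (4 * d * #P + (k + 1) * #(R' j) + incidences (P' j) (R' j)) := by
        gcongr with j
        exact hP'_inc j
    _ ≤ _ := by
        rw [sum_add_distrib, sum_add_distrib, sum_const, card_univ, Fintype.card_fin, smul_eq_mul,
          ← mul_sum, hcard, ← add_assoc, ← add_assoc]
        gcongr

end Partitioning

section Induction

/-- The incidence bound for families of `m` and `n` lines with at most `k` common transversals. -/
noncomputable def incidenceBound (ε k m n : ℝ) : ℝ :=
  m * √n + n * √m + k * (m + n) * (m * n) ^ ε

variable {ε k m n : ℝ} {M : ℕ}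

lemma incidenceBound_comm (ε k m n : ℝ) : incidenceBound ε k m n = incidenceBound ε k n m := by
  rw [incidenceBound, incidenceBound, mul_comm m n, add_comm m n]
  ring

lemma incidenceBound_nonneg (hk : 0 ≤ k) (hm : 0 ≤ m) (hn : 0 ≤ n) :
    0 ≤ incidenceBound ε k m n := by
  rw [incidenceBound]
  positivity

/-- The number `M` of cells is so large that the cells, having at most `384 / M` times as many
lines in the first family, contribute in total at most half of the incidence bound. -/
structure IsCellCount (ε : ℝ) (M : ℕ) : Prop where
  le : 1536 ≤ M
  mul_sqrt_le : 384 * √M ≤ M / 2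
  mul_rpow_le : 385 * (384 / (M : ℝ)) ^ ε ≤ 1 / 2

lemma exists_isCellCount (hε : 0 < ε) : ∃ M, IsCellCount ε M := by
  have hlim : Filter.Tendsto (fun M : ℕ => 385 * (384 / (M : ℝ)) ^ ε) Filter.atTop (nhds 0) := by
    simpa [Real.zero_rpow hε.ne'] using
      ((tendsto_const_div_atTop_nhds_zero_nat 384).rpow_const (Or.inr hε.le)).const_mul (385 : ℝ)
  obtain ⟨M, hM_rpow, hM⟩ := ((hlim.eventually (gt_mem_nhds (by norm_num : (0 : ℝ) < 1 / 2))).and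
    (Filter.eventually_ge_atTop 1000000)).exists
  refine ⟨M, by omega, ?_, hM_rpow.le⟩
  have hM' : (1000000 : ℝ) ≤ M := mod_cast hM
  have hsqrt : (768 : ℝ) ≤ √M := Real.le_sqrt_of_sq_le (by linarith)
  nlinarith [Real.mul_self_sqrt (by positivity : (0 : ℝ) ≤ M)]

lemma IsCellCount.cast_pos (hM : IsCellCount ε M) : (0 : ℝ) < M := by
  have := hM.le
  positivity

variable {a c : Fin M → ℝ}

lemma IsCellCount.sum_mul_sqrt_le (hM : IsCellCount ε M) (hm : 0 ≤ m)
    (ha : ∀ j, a j ≤ 384 * m / M) (hc₀ : ∀ j, 0 ≤ c j) (hc : ∑ j, c j ≤ n) :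
    ∑ j, a j * √(c j) ≤ 1 / 2 * (m * √n) := by
  have hMpos := hM.cast_pos
  have hsqrt : ∑ j, √(c j) ≤ √M * √n := calc
    ∑ j, √(c j) = ∑ j, √1 * √(c j) := by simp
    _ ≤ √(∑ _j : Fin M, 1) * √(∑ j, c j) :=
      Real.sum_sqrt_mul_sqrt_le univ (fun _ => zero_le_one) hc₀
    _ ≤ √M * √n := by simpa using by gcongr
  calc ∑ j, a j * √(c j) ≤ ∑ j, 384 * m / M * √(c j) := by
        gcongr with j
        exact ha j
    _ = 384 * m / M * ∑ j, √(c j) := (mul_sum ..).symm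
    _ ≤ 384 * m / M * (√M * √n) := by gcongr
    _ = 384 * √M * (m * √n) / M := by ring
    _ ≤ M / 2 * (m * √n) / M := by
        gcongr
        exact hM.mul_sqrt_le
    _ = _ := by field_simp

lemma IsCellCount.sum_sqrt_mul_le (hM : IsCellCount ε M) (hm : 0 ≤ m)
    (ha : ∀ j, a j ≤ 384 * m / M) (hc₀ : ∀ j, 0 ≤ c j) (hc : ∑ j, c j ≤ n) :
    ∑ j, c j * √(a j) ≤ 1 / 2 * (n * √m) := by
  have hMpos := hM.cast_pos
  have hM_le : (1536 : ℝ) ≤ M := mod_cast hM.le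
  have hsqrt (j : Fin M) : √(a j) ≤ 1 / 2 * √m := by
    refine Real.sqrt_le_iff.2 ⟨by positivity, (ha j).trans ?_⟩
    rw [mul_pow, Real.sq_sqrt hm, div_le_iff₀ hMpos]
    nlinarith
  calc ∑ j, c j * √(a j) ≤ ∑ j, c j * (1 / 2 * √m) := by
        gcongr with j
        · exact hc₀ j
        · exact hsqrt j
    _ = (∑ j, c j) * (1 / 2 * √m) := (sum_mul ..).symm
    _ ≤ n * (1 / 2 * √m) := by gcongr
    _ = _ := by ring

lemma IsCellCount.sum_add_mul_rpow_le (hM : IsCellCount ε M) (hε : 0 < ε) (hk : 0 ≤ k) (hm : 0 ≤ m)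
    (ha₀ : ∀ j, 0 ≤ a j) (ha : ∀ j, a j ≤ 384 * m / M) (hc₀ : ∀ j, 0 ≤ c j) (hc : ∑ j, c j ≤ n) :
    ∑ j, k * (a j + c j) * (a j * c j) ^ ε ≤ 1 / 2 * (k * (m + n) * (m * n) ^ ε) := by
  have hMpos := hM.cast_pos
  have hn : 0 ≤ n := (sum_nonneg fun j _ => hc₀ j).trans hc
  have hrpow (j : Fin M) : (a j * c j) ^ ε ≤ (384 / (M : ℝ)) ^ ε * (m * n) ^ ε := by
    have hcn : c j ≤ n := (single_le_sum (fun i _ => hc₀ i) (mem_univ j)).trans hc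
    rw [← Real.mul_rpow (by positivity) (by positivity)]
    refine Real.rpow_le_rpow (mul_nonneg (ha₀ j) (hc₀ j)) ?_ hε.le
    calc a j * c j ≤ 384 * m / M * n := mul_le_mul (ha j) hcn (hc₀ j) (by positivity)
      _ = _ := by ring
  have hsum : ∑ j, (a j + c j) ≤ 385 * (m + n) := by
    have ha_sum : ∑ j, a j ≤ 384 * m := calc
      ∑ j, a j ≤ ∑ _j : Fin M, 384 * m / M := sum_le_sum fun j _ => ha j
      _ = 384 * m := by
        simp only [sum_const, card_univ, Fintype.card_fin, nsmul_eq_mul]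
        field_simp
    rw [sum_add_distrib]
    linarith
  calc ∑ j, k * (a j + c j) * (a j * c j) ^ ε
      ≤ ∑ j, k * (a j + c j) * ((384 / (M : ℝ)) ^ ε * (m * n) ^ ε) := by
        refine sum_le_sum fun j _ => mul_le_mul_of_nonneg_left (hrpow j) ?_
        exact mul_nonneg hk (add_nonneg (ha₀ j) (hc₀ j))
    _ = (∑ j, (a j + c j)) * (k * ((384 / (M : ℝ)) ^ ε * (m * n) ^ ε)) := by
        rw [sum_mul]
        exact sum_congr rfl fun j _ => by ring
    _ ≤ 385 * (m + n) * (k * ((384 / (M : ℝ)) ^ ε * (m * n) ^ ε)) := by gcongr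
    _ = 385 * (384 / (M : ℝ)) ^ ε * (k * (m + n) * (m * n) ^ ε) := by ring
    _ ≤ _ := by
        gcongr
        exact hM.mul_rpow_le

lemma IsCellCount.sum_incidenceBound_le (hM : IsCellCount ε M) (hε : 0 < ε) (hk : 0 ≤ k)
    (hm : 0 ≤ m) (ha₀ : ∀ j, 0 ≤ a j) (ha : ∀ j, a j ≤ 384 * m / M) (hc₀ : ∀ j, 0 ≤ c j)
    (hc : ∑ j, c j ≤ n) :
    ∑ j, incidenceBound ε k (a j) (c j) ≤ 1 / 2 * incidenceBound ε k m n := by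
  simp only [incidenceBound, sum_add_distrib, mul_add]
  exact add_le_add (add_le_add (hM.sum_mul_sqrt_le hm ha hc₀ hc) (hM.sum_sqrt_mul_le hm ha hc₀ hc))
    (by simpa only [mul_add] using hM.sum_add_mul_rpow_le hε hk hm ha₀ ha hc₀ hc)

lemma cutting_cost_le_incidenceBound {d : ℝ} (hε : 0 < ε) (hk : 1 ≤ k) (hm : 1 ≤ m) (hmn : m ≤ n)
    (hMpos : (0 : ℝ) < M) (hd : d ^ 2 ≤ 48 * m / M) :
    n * (M * d) + M * (4 * d * m) + (k + 1) * n ≤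
      (5 * √(48 * M) + 2) * incidenceBound ε k m n := by
  have hn : 1 ≤ n := hm.trans hmn
  have hMd : M * d ≤ √(48 * M) * √m := by
    rw [← Real.sqrt_mul (by positivity)]
    refine Real.le_sqrt_of_sq_le ?_
    calc (M * d) ^ 2 = M ^ 2 * d ^ 2 := by ring
      _ ≤ M ^ 2 * (48 * m / M) := by gcongr
      _ = 48 * M * m := by field_simp
  have houtside : n * (M * d) ≤ √(48 * M) * (n * √m) := calc
    n * (M * d) ≤ n * (√(48 * M) * √m) := by gcongr
    _ = _ := by ring
  have hsurface : M * (4 * d * m) ≤ 4 * √(48 * M) * (m * √n) := calc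
    M * (4 * d * m) = 4 * (M * d) * m := by ring
    _ ≤ 4 * (√(48 * M) * √m) * m := by gcongr
    _ ≤ 4 * (√(48 * M) * √n) * m := by gcongr
    _ = _ := by ring
  have htransversal : (k + 1) * n ≤ 2 * (k * (m + n) * (m * n) ^ ε) := calc
    (k + 1) * n ≤ 2 * k * (m + n) := by gcongr <;> linarith
    _ ≤ 2 * k * (m + n) * (m * n) ^ ε :=
      le_mul_of_one_le_right (by positivity) (Real.one_le_rpow (by nlinarith) hε.le)
    _ = _ := by ring
  have h₁ : 0 ≤ m * √n := by positivity
  have h₂ : 0 ≤ n * √m := by positivity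
  have h₃ : 0 ≤ k * (m + n) * (m * n) ^ ε := by positivity
  have h₄ : 0 ≤ √(48 * (M : ℝ)) := by positivity
  rw [incidenceBound]
  nlinarith [mul_nonneg h₄ h₁, mul_nonneg h₄ h₂, mul_nonneg h₄ h₃]

variable {K : Type*} [Field K]

lemma incidences_le_of_card_le {P : Finset (Triple K)} (R : Finset (Triple K)) (hk : 0 ≤ k)
    (hP : #P ≤ M) : (incidences P R : ℝ) ≤ √M * incidenceBound ε k #P #R := by
  have hsqrt : (#P : ℝ) ≤ √M * √(#P : ℝ) := by
    nth_rw 1 [← Real.mul_self_sqrt (Nat.cast_nonneg #P)]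
    gcongr
  calc (incidences P R : ℝ) ≤ #P * #R := mod_cast incidences_le_card_mul_card P R
    _ ≤ √M * √(#P : ℝ) * #R := by gcongr
    _ = √M * (#R * √(#P : ℝ)) := by ring
    _ ≤ √M * incidenceBound ε k #P #R := by
        gcongr
        rw [incidenceBound, add_right_comm]
        exact le_add_of_nonneg_left (by positivity)

lemma exists_cell_size_degree {M N p : ℕ} (hM : 1536 ≤ M) (hMN : M ≤ N) (hNp : N ≤ p ^ 2) :
    ∃ t d : ℕ, N ≤ t * M ∧ 6 * t ≤ d ^ 2 ∧ d < p ∧ M * d ^ 2 ≤ 48 * N := by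
  have hN : M * (N / M) ≤ N := Nat.mul_div_le N M
  have hsqrt := Nat.sqrt_le' (6 * (N / M + 1))
  have hsqrt' := Nat.lt_succ_sqrt' (6 * (N / M + 1))
  have hsqrt_pos : 0 < Nat.sqrt (6 * (N / M + 1)) := Nat.sqrt_pos.2 (by positivity)
  set d := Nat.sqrt (6 * (N / M + 1)) + 1 with hd
  have hd_le : M * d ^ 2 ≤ 48 * N := by
    have : d ^ 2 ≤ 24 * (N / M + 1) := by nlinarith
    nlinarith
  refine ⟨N / M + 1, d, ?_, hsqrt'.le, ?_, hd_le⟩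
  · exact (mul_comm M _ ▸ Nat.lt_mul_div_succ N (by omega)).le
  · refine lt_of_pow_lt_pow_left₀ 2 (Nat.zero_le p) ?_
    nlinarith

lemma GeneralPosition.exists_cells [Infinite K] {p k : ℕ} [CharP K p] (hp : p.Prime)
    {P R : Finset (Triple K)} (h : GeneralPosition k P R) (hM : 1536 ≤ M) (hMP : M ≤ #P)
    (hPp : #P ≤ p ^ 2) :
    ∃ (d : ℕ) (P' R' : Fin M → Finset (Triple K)), (d : ℝ) ^ 2 ≤ 48 * #P / M ∧
      (∀ j, GeneralPosition k (P' j) (R' j)) ∧ (∀ j, (#(P' j) : ℝ) ≤ 384 * #P / M) ∧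
      (∀ j, #(P' j) < #P) ∧ (∑ j, #(R' j) ≤ #R) ∧
      incidences P R ≤ #R * (M * d) + M * (4 * d * #P) + (k + 1) * #R +
        ∑ j, incidences (P' j) (R' j) := by
  obtain ⟨t, d, htM, htd, hdp, hd⟩ := exists_cell_size_degree hM hMP hPp
  obtain ⟨P', R', hP', hR', hP'_card, hR'_card, hinc⟩ :=
    h.exists_incidences_le_sum hp htM htd hdp
  have hcard (j : Fin M) : M * #(P' j) ≤ 384 * #P := by nlinarith [hP'_card j]
  have hMpos : (0 : ℝ) < M := mod_cast (by omega : 0 < M)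
  refine ⟨d, P', R', ?_, fun j => h.mono (hP' j) (hR' j), fun j => ?_, fun j => ?_, hR'_card, hinc⟩
  · rw [le_div_iff₀' hMpos]
    exact_mod_cast hd
  · rw [le_div_iff₀' hMpos]
    exact_mod_cast hcard j
  · nlinarith [hcard j]

/-- The constant for which the induction on the number of lines closes up. -/
noncomputable def incidenceConst (M : ℕ) : ℝ := 2 * (5 * √(48 * M) + 2) + √M

theorem GeneralPosition.incidences_le_incidenceBound [Infinite K] {p k : ℕ} [CharP K p]
    (hp : p.Prime) (hε : 0 < ε) (hM : IsCellCount ε M) (hk : 1 ≤ k) {P R : Finset (Triple K)}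
    (h : GeneralPosition k P R) (hmin : min #P #R ≤ p ^ 2) :
    (incidences P R : ℝ) ≤ incidenceConst M * incidenceBound ε k #P #R := by
  induction hs : #P + #R using Nat.strong_induction_on generalizing P R with
  | _ s ih =>
  subst hs
  wlog hPR : #P ≤ #R generalizing P R with hwlog
  · rw [incidences_comm, incidenceBound_comm]
    exact hwlog h.symm (min_comm #P #R ▸ hmin) (by rwa [add_comm #R]) (le_of_not_ge hPR)
  rw [min_eq_left hPR] at hmin
  have hB : 0 ≤ incidenceBound ε k #P #R := incidenceBound_nonneg (by simp) (by simp) (by simp)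
  have hconst : 0 ≤ 5 * √(48 * (M : ℝ)) + 2 := by positivity
  rcases le_total #P M with hPM | hMP
  · refine (incidences_le_of_card_le (ε := ε) R (Nat.cast_nonneg k) hPM).trans ?_
    gcongr
    rw [incidenceConst]
    linarith
  · obtain ⟨d, P', R', hd, hpos, hP', hP'_lt, hR', hinc⟩ := h.exists_cells hp hM.le hMP hmin
    have hR'_le (j : Fin M) : #(R' j) ≤ #R := (single_le_sum (by simp) (mem_univ j)).trans hR'
    have hcells : ∑ j, (incidences (P' j) (R' j) : ℝ) ≤
        incidenceConst M * (1 / 2 * incidenceBound ε k #P #R) := calc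
      _ ≤ ∑ j, incidenceConst M * incidenceBound ε k #(P' j) #(R' j) := by
        refine sum_le_sum fun j _ => ih _ ?_ (hpos j) ?_ rfl
        · exact add_lt_add_of_lt_of_le (hP'_lt j) (hR'_le j)
        · exact (min_le_left _ _).trans ((hP'_lt j).le.trans hmin)
      _ ≤ _ := by
        rw [← mul_sum]
        refine mul_le_mul_of_nonneg_left ?_ (by rw [incidenceConst]; positivity)
        exact hM.sum_incidenceBound_le hε (by simp) (by simp) (by simp) hP' (by simp)
          (mod_cast hR')
    have hcost := cutting_cost_le_incidenceBound (k := k) (n := #R) hε (mod_cast hk)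
      (mod_cast (show 1 ≤ #P by have := hM.le; omega)) (mod_cast hPR) hM.cast_pos hd
    have hhalf : (5 * √(48 * M) + 2) * incidenceBound ε k #P #R ≤
        incidenceConst M / 2 * incidenceBound ε k #P #R := by
      gcongr
      rw [incidenceConst]
      linarith [Real.sqrt_nonneg M]
    have hinc' : (incidences P R : ℝ) ≤ #R * (M * d) + M * (4 * d * #P) + (k + 1) * #R +
        ∑ j, (incidences (P' j) (R' j) : ℝ) := mod_cast hinc
    linarith

end Induction

/-! ### Moving arbitrary families into general position -/

section Twist

variable {K : Type*} [Field K]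

/-- The change of coordinates, depending on a generic parameter `s`, which is applied to the first
family of an incidence problem to bring it into general position. -/
def twistLeft (s : K) (q : Triple K) : Triple K :=
  (q.1, q.2.1, s * q.1 + s ^ 2 * q.2.1 + s ^ 3 * q.2.2)

/-- The change of coordinates of the second family matching `twistLeft s` on the first. -/
def twistRight (s : K) (r : Triple K) : Triple K :=
  (s ^ 3 * r.1 + s ^ 2, s ^ 3 * r.2.1 - s, s ^ 3 * r.2.2)

variable {s : K}

lemma meets_twist (hs : s ≠ 0) {q r : Triple K} :
    Meets (twistLeft s q) (twistRight s r) ↔ Meets q r := by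
  unfold Meets twistLeft twistRight
  refine ⟨fun h => mul_left_cancel₀ (pow_ne_zero 3 hs) ?_, fun h => ?_⟩
  · linear_combination h
  · linear_combination s ^ 3 * h

lemma twistLeft_bijective (hs : s ≠ 0) : Function.Bijective (twistLeft s) :=
  Function.bijective_iff_has_inverse.2
    ⟨fun q => (q.1, q.2.1, (q.2.2 - s * q.1 - s ^ 2 * q.2.1) / s ^ 3),
      fun q => Prod.ext rfl (Prod.ext rfl (by simp only [twistLeft]; field_simp; ring)),
      fun q => Prod.ext rfl (Prod.ext rfl (by simp only [twistLeft]; field_simp; ring))⟩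

lemma twistRight_bijective (hs : s ≠ 0) : Function.Bijective (twistRight s) :=
  Function.bijective_iff_has_inverse.2
    ⟨fun r => ((r.1 - s ^ 2) / s ^ 3, (r.2.1 + s) / s ^ 3, r.2.2 / s ^ 3),
      fun r => by simp [twistRight, hs],
      fun r => by simp [twistRight, hs, mul_div_cancel₀]⟩

lemma finite_setOf_exists_eval_cubic_eq_zero {ι : Type*} (S : Finset ι) (f : ι → Cubic K)
    (hf : ∀ i ∈ S, f i ≠ 0) :
    {s | ∃ i ∈ S, (f i).d + (f i).c * s + (f i).b * s ^ 2 + (f i).a * s ^ 3 = 0}.Finite := by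
  convert finite_setOf_exists_eval_eq_zero S (fun i => (f i).toPoly)
    (fun i hi => (Cubic.toPoly_eq_zero_iff _).not.2 (hf i hi)) using 7 with s i
  simp only [Cubic.toPoly, Polynomial.eval_add, Polynomial.eval_mul, Polynomial.eval_C,
    Polynomial.eval_pow, Polynomial.eval_X]
  ring

lemma finite_setOf_meets_twistLeft (P : Finset (Triple K)) :
    {s | ∃ x ∈ P.offDiag, Meets (twistLeft s x.1) (twistLeft s x.2)}.Finite := by
  refine (finite_setOf_exists_eval_cubic_eq_zero P.offDiag (fun x =>
    ⟨x.1.2.2 - x.2.2.2, x.1.2.1 - x.2.2.1, x.1.1 - x.2.1,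
      x.1.1 * x.2.2.1 - x.2.1 * x.1.2.1⟩) ?_).subset ?_
  · rintro ⟨q, r⟩ hx h
    obtain ⟨h₃, h₂, h₁, -⟩ := Cubic.ext_iff.1 h
    exact (mem_offDiag.1 hx).2.2
      (Prod.ext (sub_eq_zero.1 h₁) (Prod.ext (sub_eq_zero.1 h₂) (sub_eq_zero.1 h₃)))
  · rintro s ⟨x, hx, h⟩
    refine ⟨x, hx, ?_⟩
    simp only [Meets, twistLeft] at h
    linear_combination h

lemma finite_setOf_meets_twistRight (R : Finset (Triple K)) :
    {s | s ≠ 0 ∧ ∃ x ∈ R.offDiag, Meets (twistRight s x.1) (twistRight s x.2)}.Finite := by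
  refine (finite_setOf_exists_eval_cubic_eq_zero R.offDiag (fun x =>
    ⟨x.1.1 * x.2.2.1 - x.2.1 * x.1.2.1, x.2.2.1 - x.1.2.1, x.2.1 - x.1.1,
      x.1.2.2 - x.2.2.2⟩) ?_).subset ?_
  · rintro ⟨q, r⟩ hx h
    obtain ⟨-, h₂, h₁, h₃⟩ := Cubic.ext_iff.1 h
    exact (mem_offDiag.1 hx).2.2
      (Prod.ext (sub_eq_zero.1 h₁).symm (Prod.ext (sub_eq_zero.1 h₂).symm (sub_eq_zero.1 h₃)))
  · rintro s ⟨hs, x, hx, h⟩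
    refine ⟨x, hx, mul_left_cancel₀ (pow_ne_zero 3 hs) ?_⟩
    simp only [Meets, twistRight] at h
    linear_combination h

lemma finite_setOf_fst_twist_eq (P R : Finset (Triple K)) :
    {s | ∃ x ∈ P ×ˢ R, (twistLeft s x.1).1 = (twistRight s x.2).1}.Finite := by
  refine (finite_setOf_exists_eval_cubic_eq_zero (P ×ˢ R)
    (fun x => ⟨-x.2.1, -1, 0, x.1.1⟩) ?_).subset ?_
  · exact fun x _ h => neg_ne_zero.2 one_ne_zero (Cubic.ext_iff.1 h).2.1
  · rintro s ⟨x, hx, h⟩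
    refine ⟨x, hx, ?_⟩
    simp only [twistLeft, twistRight] at h
    linear_combination h

lemma FewTransversals.image [DecidableEq K] {k : ℕ} {P : Finset (Triple K)}
    (h : FewTransversals k P) {f g : Triple K → Triple K} (hg : g.Surjective)
    (hfg : ∀ q r, Meets (f q) (g r) ↔ Meets q r) :
    FewTransversals k (P.image f) := by
  classical
  intro r₁ r₂ hr
  obtain ⟨r₁, rfl⟩ := hg r₁
  obtain ⟨r₂, rfl⟩ := hg r₂
  rw [filter_image]
  refine card_image_le.trans ?_
  simp only [hfg]
  exact h (ne_of_apply_ne g hr)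

theorem exists_generalPosition_image_twist [Infinite K] [DecidableEq K] {k : ℕ}
    {P R : Finset (Triple K)} (hP : FewTransversals k P) (hR : FewTransversals k R) :
    ∃ s : K, s ≠ 0 ∧ GeneralPosition k (P.image (twistLeft s)) (R.image (twistRight s)) := by
  obtain ⟨s, hs⟩ := (((finite_setOf_meets_twistLeft P).union
    (finite_setOf_meets_twistRight R)).union ((finite_setOf_fst_twist_eq P R).union
      (Set.finite_singleton 0))).exists_notMem
  simp only [Set.mem_union, Set.mem_ofPred_eq, Set.mem_singleton_iff, not_or, not_and,
    not_exists] at hs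
  obtain ⟨⟨hleft, hright⟩, hfst, hs₀⟩ := hs
  refine ⟨s, hs₀, ?_, ?_, ?_, hP.image (twistRight_bijective hs₀).surjective
    fun _ _ => meets_twist hs₀, hR.image (twistLeft_bijective hs₀).surjective fun _ _ => ?_⟩
  · simp only [coe_image]
    rintro _ ⟨q, hq, rfl⟩ _ ⟨q', hq', rfl⟩ hne
    exact hleft (q, q') (mem_offDiag.2 ⟨hq, hq', ne_of_apply_ne _ hne⟩)
  · simp only [coe_image]
    rintro _ ⟨r, hr, rfl⟩ _ ⟨r', hr', rfl⟩ hne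
    exact hright hs₀ (r, r') (mem_offDiag.2 ⟨hr, hr', ne_of_apply_ne _ hne⟩)
  · simp only [mem_image]
    rintro _ ⟨q, hq, rfl⟩ _ ⟨r, hr, rfl⟩
    exact hfst (q, r) (mem_product.2 ⟨hq, hr⟩)
  · rw [meets_comm, meets_twist hs₀, meets_comm]

lemma incidences_image {L : Type*} [Field L] [DecidableEq L] {P R : Finset (Triple K)}
    {f g : Triple K → Triple L} (hf : f.Injective) (hg : g.Injective)
    (hfg : ∀ q r, Meets (f q) (g r) ↔ Meets q r) :
    incidences (P.image f) (R.image g) = incidences P R := by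
  classical
  rw [incidences, sum_image hf.injOn]
  refine sum_congr rfl fun q _ => ?_
  rw [meetCount, filter_image, card_image_of_injective _ hg]
  simp only [hfg, meetCount]

end Twist

section BaseChange

variable {K L : Type*} [Field K] [Field L]

/-- Extension of scalars for triples. -/
def mapTriple (f : K →+* L) (q : Triple K) : Triple L := (f q.1, f q.2.1, f q.2.2)

lemma mapTriple_injective (f : K →+* L) : Function.Injective (mapTriple f) :=
  f.injective.prodMap (f.injective.prodMap f.injective)

lemma meets_mapTriple (f : K →+* L) {q r : Triple K} :
    Meets (mapTriple f q) (mapTriple f r) ↔ Meets q r := by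
  simp only [Meets, mapTriple, ← map_sub, ← map_mul, f.injective.eq_iff]

open scoped Classical in
/-- Any two distinct lines, possibly defined only over the algebraic closure, are both met by at
most `k` members of `P`. -/
def FewGeometricTransversals (k : ℕ) (P : Finset (Triple K)) : Prop :=
  FewTransversals k (P.image (mapTriple (algebraMap K (AlgebraicClosure K))))

/-- A point–plane incidence bound of Rudnev type, with `ε`-loss. -/
theorem exists_incidences_le {ε : ℝ} (hε : 0 < ε) : ∃ C : ℝ, 0 ≤ C ∧
    ∀ {K : Type*} [Field K] {p k : ℕ} [CharP K p] {P R : Finset (Triple K)}, p.Prime → 1 ≤ k →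
      FewGeometricTransversals k P → FewGeometricTransversals k R → min #P #R ≤ p ^ 2 →
      (incidences P R : ℝ) ≤ C * incidenceBound ε k #P #R := by
  classical
  obtain ⟨M, hM⟩ := exists_isCellCount hε
  refine ⟨incidenceConst M, by rw [incidenceConst]; positivity, ?_⟩
  intro K _ p k _ P R hp hk hP hR hmin
  have : CharP (AlgebraicClosure K) p :=
    charP_of_injective_algebraMap (algebraMap K (AlgebraicClosure K)).injective p
  have : Infinite (AlgebraicClosure K) := IsAlgClosed.instInfinite
  obtain ⟨s, hs, hpos⟩ := exists_generalPosition_image_twist hP hR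
  have hleft := (twistLeft_bijective hs).injective
  have hright := (twistRight_bijective hs).injective
  have hmap := mapTriple_injective (algebraMap K (AlgebraicClosure K))
  have hbound := hpos.incidences_le_incidenceBound hp hε hM hk
  rw [incidences_image hleft hright fun _ _ => meets_twist hs,
    incidences_image hmap hmap fun _ _ => meets_mapTriple _, card_image_of_injective _ hleft,
    card_image_of_injective _ hright, card_image_of_injective _ hmap,
    card_image_of_injective _ hmap] at hbound
  exact hbound hmin

end BaseChange

/-! ### Rich lines -/

section RichLines

variable {K : Type*} [Field K] [DecidableEq K] (A : Finset K)

/-- The number of points of `A × A` on the line `y = l.1 * x + l.2`. -/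
def richness (l : K × K) : ℕ := #{c ∈ A | l.1 * c + l.2 ∈ A}

lemma richness_le_card (l : K × K) : richness A l ≤ #A := card_filter_le _ _

variable [Fintype K]

lemma sum_richness_row (a : K) : ∑ b, richness A (a, b) = #A ^ 2 := by
  have hcol : ∀ c ∈ A, #{b | a * c + b ∈ A} = #A := fun c _ =>
    card_nbij' (a * c + ·) (· - a * c) (by simp [Set.MapsTo]) (by simp [Set.MapsTo])
      (by simp [Set.LeftInvOn]) (by simp [Set.LeftInvOn])
  simp_rw [richness, card_filter]
  rw [sum_comm]
  simp_rw [← card_filter]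
  rw [sum_const_nat hcol, sq]

lemma sum_richness : ∑ l, richness A l = Fintype.card K * #A ^ 2 := by
  rw [Fintype.sum_prod_type, sum_const_nat fun a _ => sum_richness_row A a, card_univ]

lemma sum_card_offDiag_le :
    ∑ l : K × K, #({c ∈ A | l.1 * c + l.2 ∈ A} : Finset K).offDiag ≤ #A ^ 4 := by
  have hpow : #A ^ 4 = #((A ×ˢ A) ×ˢ (A ×ˢ A)) := by simp only [card_product]; ring
  rw [← card_sigma, hpow]
  refine card_le_card_of_injOn
    (fun x => (x.2, (x.1.1 * x.2.1 + x.1.2, x.1.1 * x.2.2 + x.1.2))) ?_ ?_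
  · rintro ⟨l, c, d⟩ hx
    simp only [coe_sigma, Set.mem_sigma_iff, mem_coe, mem_offDiag, mem_filter] at hx
    simp [hx]
  · rintro ⟨⟨a, b⟩, c, d⟩ hx ⟨⟨a', b'⟩, c', d'⟩ - h
    simp only [coe_sigma, Set.mem_sigma_iff, mem_coe, mem_offDiag] at hx
    simp only [Prod.mk.injEq] at h
    obtain ⟨⟨rfl, rfl⟩, hc, hd⟩ := h
    obtain rfl : a = a' :=
      mul_right_cancel₀ (sub_ne_zero.2 hx.2.2.2) (by linear_combination hc - hd)
    obtain rfl : b = b' := by linear_combination hc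
    rfl

lemma sum_richness_sq_le : ∑ l, richness A l ^ 2 ≤ Fintype.card K * #A ^ 2 + #A ^ 4 := by
  have hsq : ∀ l : K × K,
      richness A l ^ 2 = richness A l + #({c ∈ A | l.1 * c + l.2 ∈ A} : Finset K).offDiag := by
    intro l
    rw [offDiag_card, ← richness, sq, Nat.add_sub_cancel' (Nat.le_mul_self _)]
  simp_rw [hsq, sum_add_distrib, sum_richness]
  gcongr
  exact sum_card_offDiag_le A

/-- The lines containing at least `H` points of `A × A`. -/
noncomputable def richLines (H : ℝ) : Finset (K × K) := {l | H ≤ richness A l}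

variable {A} {H : ℝ}

lemma mem_richLines {l : K × K} : l ∈ richLines A H ↔ H ≤ richness A l := by simp [richLines]

lemma card_richLines_le (hH : 1 < H) : #(richLines A H) ≤ #A ^ 4 := by
  refine le_trans ?_ (sum_card_offDiag_le A)
  refine le_trans ?_ (sum_le_sum_of_subset (subset_univ (richLines A H)))
  rw [card_eq_sum_ones]
  refine sum_le_sum fun l hl => ?_
  have htwo : 1 < richness A l := by exact_mod_cast hH.trans_le (mem_richLines.1 hl)
  obtain ⟨c, hc, d, hd, hcd⟩ := one_lt_card.1 htwo
  exact card_pos.2 ⟨(c, d), mem_offDiag.2 ⟨hc, hd, hcd⟩⟩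

lemma sum_richness_sub_mean_sq_le :
    ∑ l, ((richness A l : ℝ) - (#A : ℝ) ^ 2 / Fintype.card K) ^ 2 ≤
      Fintype.card K * (#A : ℝ) ^ 2 := by
  have hq : (Fintype.card K : ℝ) ≠ 0 := by exact_mod_cast Fintype.card_ne_zero
  have hmean : ∑ l, (richness A l : ℝ) = Fintype.card K * (#A : ℝ) ^ 2 := by
    exact_mod_cast sum_richness A
  have hsq : ∑ l, (richness A l : ℝ) ^ 2 ≤ Fintype.card K * (#A : ℝ) ^ 2 + (#A : ℝ) ^ 4 := by
    exact_mod_cast sum_richness_sq_le A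
  simp_rw [sub_sq, sum_add_distrib, sum_sub_distrib, ← sum_mul, ← mul_sum, hmean, sum_const,
    card_univ, Fintype.card_prod, nsmul_eq_mul]
  push_cast
  field_simp
  linarith

lemma card_richLines_mul_sq_le (hH₀ : 0 ≤ H) (hH : 2 * (#A : ℝ) ^ 2 / Fintype.card K ≤ H) :
    #(richLines A H) * H ^ 2 ≤ 4 * Fintype.card K * (#A : ℝ) ^ 2 := by
  set mean : ℝ := (#A : ℝ) ^ 2 / Fintype.card K with hmean
  have hdev : ∀ l ∈ richLines A H, (H / 2) ^ 2 ≤ ((richness A l : ℝ) - mean) ^ 2 := by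
    intro l hl
    rw [mul_div_assoc] at hH
    have := mem_richLines.1 hl
    gcongr
    linarith
  have hsum : #(richLines A H) * (H / 2) ^ 2 ≤ Fintype.card K * (#A : ℝ) ^ 2 :=
    calc #(richLines A H) * (H / 2) ^ 2
      _ ≤ ∑ l ∈ richLines A H, ((richness A l : ℝ) - mean) ^ 2 := by
        rw [← nsmul_eq_mul]; exact card_nsmul_le_sum _ _ _ hdev
      _ ≤ ∑ l, ((richness A l : ℝ) - mean) ^ 2 :=
        sum_le_univ_sum_of_nonneg fun _ => sq_nonneg _
      _ ≤ _ := sum_richness_sub_mean_sq_le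
  linarith

lemma card_concurrent_richLines_le {E : Type*} [Field E] (f : K →+* E) {w u : E} (hH : 2 ≤ H)
    {S : Finset (K × K)} (hS : S ⊆ richLines A H) (hconc : ∀ l ∈ S, f l.2 + f l.1 * w = u) :
    (#S : ℝ) ≤ 2 * (#A : ℝ) ^ 2 / H := by
  classical
  let points (l : K × K) : Finset K := {c ∈ {c ∈ A | l.1 * c + l.2 ∈ A} | f c ≠ w}
  have hpoints : ∀ l ∈ S, H / 2 ≤ #(points l) := by
    intro l hl
    have hone : #{c ∈ {c ∈ A | l.1 * c + l.2 ∈ A} | ¬ f c ≠ w} ≤ 1 := by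
      refine card_le_one.2 fun a ha b hb => f.injective ?_
      rw [not_not.1 (mem_filter.1 ha).2, not_not.1 (mem_filter.1 hb).2]
    have hadd : richness A l ≤ #(points l) + 1 := by
      rw [richness, ← card_filter_add_card_filter_not (fun c => f c ≠ w)]
      gcongr
    have : (richness A l : ℝ) ≤ #(points l) + 1 := by exact_mod_cast hadd
    linarith [mem_richLines.1 (hS hl)]
  -- Away from their common point, the lines are disjoint.
  have hdisjoint : ∑ l ∈ S, #(points l) ≤ #(A ×ˢ A) := by
    rw [← card_sigma]
    refine card_le_card_of_injOn (fun x => (x.2, x.1.1 * x.2 + x.1.2)) ?_ ?_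
    · rintro ⟨l, c⟩ hx
      simp only [coe_sigma, Set.mem_sigma_iff, mem_coe, points, mem_filter] at hx
      simp [hx]
    · rintro ⟨⟨a, b⟩, c⟩ hx ⟨⟨a', b'⟩, c'⟩ hx' h
      simp only [coe_sigma, Set.mem_sigma_iff, mem_coe, points, mem_filter] at hx hx'
      obtain ⟨rfl, h⟩ := Prod.mk.injEq .. ▸ h
      have hf : f a * f c + f b = f a' * f c + f b' := by simpa using congrArg f h
      obtain rfl : a = a' := f.injective <| mul_right_cancel₀ (sub_ne_zero.2 hx.2.2) <| by
        linear_combination hf - hconc _ hx.1 + hconc _ hx'.1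
      obtain rfl : b = b' := by linear_combination h
      rfl
  rw [card_product] at hdisjoint
  have hdisjoint' : ∑ l ∈ S, (#(points l) : ℝ) ≤ (#A : ℝ) * #A := by exact_mod_cast hdisjoint
  have hlower := card_nsmul_le_sum S (fun l => (#(points l) : ℝ)) _ hpoints
  rw [nsmul_eq_mul] at hlower
  rw [le_div_iff₀ (by linarith)]
  linarith

end RichLines

section FewGeometricTransversals

variable {K : Type*} [Field K]

lemma eq_of_meets_of_fst_eq {q q' r₁ r₂ : Triple K} (hr : r₁.1 ≠ r₂.1) (h₁ : Meets q r₁)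
    (h₂ : Meets q r₂) (h₁' : Meets q' r₁) (h₂' : Meets q' r₂) (h : q.1 = q'.1) : q = q' := by
  simp only [Meets] at h₁ h₂ h₁' h₂'
  have hsnd : q.2.1 = q'.2.1 := mul_left_cancel₀ (sub_ne_zero.2 hr) <| by
    linear_combination h₂ - h₁ + h₁' - h₂' - (r₂.2.1 - r₁.2.1) * h
  refine Prod.ext h (Prod.ext hsnd ?_)
  linear_combination h₁ - h₁' + r₁.1 * hsnd - r₁.2.1 * h

lemma eq_of_meets_of_snd_fst_eq {q q' r₁ r₂ : Triple K} (hr : r₁ ≠ r₂) (hfst : r₁.1 = r₂.1)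
    (h₁ : Meets q r₁) (h₂ : Meets q r₂) (h₁' : Meets q' r₁) (h₂' : Meets q' r₂)
    (h : q.2.1 = q'.2.1) : q = q' := by
  simp only [Meets] at h₁ h₂ h₁' h₂'
  have hne : r₁.2.1 - r₂.2.1 ≠ 0 := fun hsnd => hr <| by
    refine Prod.ext hfst (Prod.ext (sub_eq_zero.1 hsnd) ?_)
    linear_combination h₂ - h₁ + q.1 * hsnd - q.2.1 * hfst
  have hq : q.1 = q'.1 := mul_right_cancel₀ hne <| by
    linear_combination h₁ - h₂ - h₁' + h₂' + (r₁.1 - r₂.1) * h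
  refine Prod.ext hq (Prod.ext h ?_)
  linear_combination h₁ - h₁' + r₁.1 * h - r₁.2.1 * hq

/-- The members of `P` meeting two given lines either are determined by their second coordinate,
or are determined by their first coordinate `a` and have third coordinate affine in `a`. -/
lemma fewGeometricTransversals_add [DecidableEq K] {P : Finset (Triple K)} {m n : ℕ}
    (hm : #(P.image fun q => q.2.1) ≤ m)
    (hn : ∀ (w u : AlgebraicClosure K) (S : Finset (Triple K)), S ⊆ P →
      Set.InjOn (fun q => q.1) (S : Set (Triple K)) →
      (∀ q ∈ S, algebraMap K _ q.2.2 + algebraMap K _ q.1 * w = u) → #S ≤ n) :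
    FewGeometricTransversals (m + n) P := by
  classical
  intro r₁ r₂ hr
  set ι := algebraMap K (AlgebraicClosure K)
  rw [filter_image]
  refine card_image_le.trans ?_
  set S : Finset (Triple K) := {q ∈ P | Meets (mapTriple ι q) r₁ ∧ Meets (mapTriple ι q) r₂}
  have hmeets : ∀ q ∈ S, Meets (mapTriple ι q) r₁ ∧ Meets (mapTriple ι q) r₂ := fun q hq =>
    (mem_filter.1 hq).2
  have hSP : S ⊆ P := filter_subset _ _
  by_cases hfst : r₁.1 = r₂.1
  · refine le_add_right (le_trans ?_ hm)
    refine card_le_card_of_injOn (fun q => q.2.1) (fun q hq => mem_image_of_mem _ (hSP hq)) ?_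
    intro q hq q' hq' h
    exact mapTriple_injective ι <| eq_of_meets_of_snd_fst_eq hr hfst (hmeets q hq).1
      (hmeets q hq).2 (hmeets q' hq').1 (hmeets q' hq').2 (congrArg ι h)
  · set κ := (r₁.1 - r₂.1)⁻¹
    have hκ_mul : (r₁.1 - r₂.1) * κ = 1 := mul_inv_cancel₀ (sub_ne_zero.2 hfst)
    refine le_add_left (hn (r₁.2.1 - r₁.1 * κ * (r₁.2.1 - r₂.2.1))
      (r₁.2.2 + r₁.1 * κ * (r₂.2.2 - r₁.2.2)) S hSP ?_ ?_)
    · intro q hq q' hq' h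
      exact mapTriple_injective ι <| eq_of_meets_of_fst_eq hfst (hmeets q hq).1
        (hmeets q hq).2 (hmeets q' hq').1 (hmeets q' hq').2 (congrArg ι h)
    · intro q hq
      obtain ⟨h₁, h₂⟩ := hmeets q hq
      simp only [Meets, mapTriple] at h₁ h₂
      linear_combination h₁ - r₁.1 * κ * (h₁ - h₂) - r₁.1 * ι q.2.1 * hκ_mul

lemma incidences_eq_card_filter [DecidableEq K] (P R : Finset (Triple K)) :
    incidences P R = #{x ∈ P ×ˢ R | x.1.2.2 - x.2.2.2 = x.2.1 * x.1.2.1 - x.1.1 * x.2.2.1} := by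
  classical
  simp_rw [incidences, meetCount, card_filter, sum_product, Meets]
  refine sum_congr rfl fun q _ => sum_congr rfl fun r _ => ?_
  congr

end FewGeometricTransversals

section RichLineTriples

variable {K : Type*} [DecidableEq K] (A : Finset K) (L : Finset (K × K))

/-- The triples `(l.1, c, l.2)` for `l ∈ L` and `c ∈ A`, arranged so that `(a, c', b)` meets
`(a', c, b')` if and only if `a * c + b = a' * c' + b'`. -/
def richLineTriples : Finset (Triple K) := (L ×ˢ A).image fun x => (x.1.1, x.2, x.1.2)

variable {A L}

lemma mem_richLineTriples {q : Triple K} :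
    q ∈ richLineTriples A L ↔ (q.1, q.2.2) ∈ L ∧ q.2.1 ∈ A := by
  simp only [richLineTriples, mem_image, mem_product]
  exact ⟨by rintro ⟨x, h, rfl⟩; exact h, fun h => ⟨((q.1, q.2.2), q.2.1), h, rfl⟩⟩

lemma card_richLineTriples : #(richLineTriples A L) = #L * #A := by
  rw [richLineTriples, card_image_of_injective, card_product]
  rintro ⟨⟨a, b⟩, c⟩ ⟨⟨a', b'⟩, c'⟩ h
  simp only [Prod.mk.injEq] at h ⊢
  tauto

variable [Field K]

lemma sq_sum_richness_le :
    (∑ l ∈ L, richness A l) ^ 2 ≤ #A * incidences (richLineTriples A L) (richLineTriples A L) := by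
  let fiber (a : K) : Finset ((K × K) × K) := {x ∈ L ×ˢ A | x.1.1 * x.2 + x.1.2 = a}
  have hsum : ∑ l ∈ L, richness A l = ∑ a ∈ A, #(fiber a) := by
    simp_rw [fiber, richness, card_filter, sum_product]
    symm
    rw [sum_comm]
    refine sum_congr rfl fun l _ => ?_
    rw [sum_comm]
    simp_rw [sum_ite_eq]
  have hfiber : ∑ a ∈ A, #(fiber a) ^ 2 ≤
      incidences (richLineTriples A L) (richLineTriples A L) := by
    simp_rw [sq, ← card_product]
    rw [← card_sigma, incidences_eq_card_filter]
    refine card_le_card_of_injOn (fun x => ((x.2.1.1.1, x.2.2.2, x.2.1.1.2),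
      (x.2.2.1.1, x.2.1.2, x.2.2.1.2))) ?_ ?_
    · rintro ⟨a, ⟨⟨l, b⟩, c⟩, ⟨⟨l', b'⟩, c'⟩⟩ hx
      simp only [coe_sigma, Set.mem_sigma_iff, mem_coe, fiber, mem_filter, mem_product] at hx
      simp only [mem_coe, mem_filter, mem_product, mem_richLineTriples, hx, true_and]
      linear_combination hx.2.1.2 - hx.2.2.2
    · rintro ⟨a, ⟨⟨l, b⟩, c⟩, ⟨⟨l', b'⟩, c'⟩⟩ hx ⟨a₂, ⟨⟨l₂, b₂⟩, c₂⟩, ⟨⟨l₂', b₂'⟩, c₂'⟩⟩ hy hxy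
      simp only [coe_sigma, Set.mem_sigma_iff, mem_coe, fiber, mem_filter, mem_product] at hx hy
      simp only [Prod.mk.injEq] at hxy
      obtain ⟨⟨rfl, rfl, rfl⟩, rfl, rfl, rfl⟩ := hxy
      obtain rfl : a = a₂ := hx.2.1.2.symm.trans hy.2.1.2
      rfl
  rw [hsum]
  exact sq_sum_le_card_mul_sum_sq.trans (Nat.mul_le_mul_left _ hfiber)

variable [Fintype K] {H : ℝ}

lemma fewGeometricTransversals_richLineTriples (hH : 2 ≤ H) (hL : L ⊆ richLines A H) :
    FewGeometricTransversals (#A + ⌊2 * (#A : ℝ) ^ 2 / H⌋₊) (richLineTriples A L) := by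
  refine fewGeometricTransversals_add (card_le_card ?_) fun w u S hS hinj hconc => Nat.le_floor ?_
  · intro c hc
    obtain ⟨q, hq, rfl⟩ := mem_image.1 hc
    exact (mem_richLineTriples.1 hq).2
  · have hcard : #(S.image fun q => (q.1, q.2.2)) = #S :=
      card_image_of_injOn fun q hq q' hq' h => hinj hq hq' (Prod.ext_iff.1 h).1
    rw [← hcard]
    refine card_concurrent_richLines_le (algebraMap K _) (w := w) (u := u) hH ?_ ?_
    · intro l hl
      obtain ⟨q, hq, rfl⟩ := mem_image.1 hl
      exact hL (mem_richLineTriples.1 (hS hq)).1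
    · intro l hl
      obtain ⟨q, hq, rfl⟩ := mem_image.1 hl
      exact hconc q hq

end RichLineTriples

section LineBound

/-- With loss at most `T`, every family `P` of at most `N` triples over `K` with few transversals
satisfies the incidence bound that holds for `#P ≤ q ^ 2`, where `q = #K`. -/
def HasIncidenceBound (K : Type*) [Field K] [Fintype K] (N : ℕ) (T : ℝ) : Prop :=
  ∀ ⦃P : Finset (Triple K)⦄ ⦃k : ℕ⦄, 1 ≤ k → FewGeometricTransversals k P →
    #P ≤ Fintype.card K ^ 2 → #P ≤ N →
    (incidences P P : ℝ) ≤ T * (#P * √(#P : ℝ) + k * #P)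

variable {K : Type*} [Field K] [Fintype K] [DecidableEq K] {A : Finset K} {T H : ℝ}

lemma mul_pow_four_le_of_sq_mul_le {x N k : ℝ} (hT : 1 ≤ T) (hx : 0 < x) (hH : 0 ≤ H) (hHN : H ≤ N)
    (hk : k * H ≤ 3 * N ^ 2) (h : H ^ 2 * x ≤ T * N ^ 2 * (√(x * N) + k)) :
    x * H ^ 4 ≤ 6 * T ^ 2 * N ^ 5 := by
  have hN : 0 ≤ N := hH.trans hHN
  rcases le_total k √(x * N) with hle | hle
  · have hroot : H ^ 2 * x ≤ T * N ^ 2 * (√(x * N) + √(x * N)) := h.trans (by gcongr)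
    refine le_of_mul_le_mul_right ?_ hx
    calc x * H ^ 4 * x = (H ^ 2 * x) ^ 2 := by ring
      _ ≤ (T * N ^ 2 * (√(x * N) + √(x * N))) ^ 2 := by gcongr
      _ = 4 * T ^ 2 * N ^ 4 * √(x * N) ^ 2 := by ring
      _ = 4 * T ^ 2 * N ^ 5 * x := by rw [Real.sq_sqrt (by positivity)]; ring
      _ ≤ 6 * T ^ 2 * N ^ 5 * x := by gcongr; norm_num
  · have hk' : H ^ 2 * x ≤ T * N ^ 2 * (k + k) := h.trans (by gcongr)
    calc x * H ^ 4 = H ^ 2 * x * H ^ 2 := by ring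
      _ ≤ T * N ^ 2 * (k + k) * H ^ 2 := by gcongr
      _ = 2 * T * N ^ 2 * (k * H) * H := by ring
      _ ≤ 2 * T * N ^ 2 * (3 * N ^ 2) * N := by gcongr
      _ = 6 * T * N ^ 5 := by ring
      _ ≤ 6 * T ^ 2 * N ^ 5 := by gcongr; exact le_self_pow₀ hT two_ne_zero

lemma card_mul_pow_four_le_of_subset_richLines (hinc : HasIncidenceBound K (#A ^ 6) T)
    (hT : 1 ≤ T) (hH : 2 ≤ H) {L : Finset (K × K)} (hL : L ⊆ richLines A H)
    (hcard : #L * #A ≤ Fintype.card K ^ 2) : #L * H ^ 4 ≤ 6 * T ^ 2 * (#A : ℝ) ^ 5 := by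
  rcases L.eq_empty_or_nonempty with rfl | ⟨l, hl⟩
  · simp only [card_empty, Nat.cast_zero, zero_mul]; positivity
  have hHA : H ≤ #A := (mem_richLines.1 (hL hl)).trans (by exact_mod_cast richness_le_card A l)
  have hA : 1 ≤ #A := by exact_mod_cast (by linarith : (1 : ℝ) ≤ #A)
  have hx : (0 : ℝ) < #L := by exact_mod_cast card_pos.2 ⟨l, hl⟩
  set k := #A + ⌊2 * (#A : ℝ) ^ 2 / H⌋₊ with hk
  have hkH : k * H ≤ 3 * (#A : ℝ) ^ 2 := by
    have hfloor := (le_div_iff₀ (by linarith)).1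
      (Nat.floor_le (by positivity : 0 ≤ 2 * (#A : ℝ) ^ 2 / H))
    rw [hk, Nat.cast_add, add_mul]
    nlinarith
  have hsmall : #L * #A ≤ #A ^ 6 :=
    calc #L * #A ≤ #A ^ 4 * #A := by
          gcongr; exact (card_le_card hL).trans (card_richLines_le (by linarith))
      _ ≤ #A ^ 6 := by rw [← pow_succ]; exact Nat.pow_le_pow_right hA (by norm_num)
  have hbound := hinc (by lia) (fewGeometricTransversals_richLineTriples hH hL)
    (card_richLineTriples.trans_le hcard) (card_richLineTriples.trans_le hsmall)
  rw [card_richLineTriples, ← hk, Nat.cast_mul] at hbound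
  refine mul_pow_four_le_of_sq_mul_le hT hx (by linarith) hHA hkH (le_of_mul_le_mul_right ?_ hx)
  have hsum : H * #L ≤ ∑ l ∈ L, (richness A l : ℝ) := by
    rw [mul_comm, ← nsmul_eq_mul]
    exact card_nsmul_le_sum _ _ _ fun l hl => mem_richLines.1 (hL hl)
  calc H ^ 2 * #L * #L = (H * #L) ^ 2 := by ring
    _ ≤ (∑ l ∈ L, (richness A l : ℝ)) ^ 2 := by gcongr
    _ ≤ #A * incidences (richLineTriples A L) (richLineTriples A L) := by
      exact_mod_cast sq_sum_richness_le
    _ ≤ #A * (T * (#L * #A * √(#L * #A : ℝ) + k * (#L * #A))) := by gcongr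
    _ = _ := by ring

lemma card_mul_sq_le_of_card_richLines (hinc : HasIncidenceBound K (#A ^ 6) T) (hT : 1 ≤ T)
    (hH : 2 ≤ H) (hcard : Fintype.card K ^ 2 ≤ #(richLines A H) * #A) :
    Fintype.card K * H ^ 2 ≤ 4 * T * (#A : ℝ) ^ 3 := by
  have hq := Fintype.card_pos (α := K)
  have hA : 0 < #A := Nat.pos_of_ne_zero fun h => by rw [h] at hcard; nlinarith
  obtain ⟨L, hL, hLcard⟩ := exists_subset_card_eq (s := richLines A H)
    (n := Fintype.card K ^ 2 / #A) (Nat.div_le_of_le_mul (by rwa [mul_comm]))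
  have hlines := card_mul_pow_four_le_of_subset_richLines hinc hT hH hL
    (hLcard ▸ Nat.div_mul_le_self _ _)
  have hlarge : Fintype.card K ^ 2 ≤ 2 * (#L * #A) := by
    have hone : 1 ≤ #L := by
      rw [hLcard, Nat.one_le_div_iff hA]
      exact (card_le_univ A).trans (Nat.le_self_pow two_ne_zero _)
    have hdiv := Nat.lt_div_mul_add (a := Fintype.card K ^ 2) hA
    rw [← hLcard] at hdiv
    nlinarith
  have hlarge' : (Fintype.card K : ℝ) ^ 2 ≤ 2 * (#L * #A) := by exact_mod_cast hlarge
  refine le_of_sq_le_sq ?_ (by positivity)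
  calc (Fintype.card K * H ^ 2) ^ 2 = (Fintype.card K : ℝ) ^ 2 * H ^ 4 := by ring
    _ ≤ 2 * (#L * #A) * H ^ 4 := by gcongr
    _ = 2 * #A * (#L * H ^ 4) := by ring
    _ ≤ 2 * #A * (6 * T ^ 2 * (#A : ℝ) ^ 5) := by gcongr
    _ = 12 * (T ^ 2 * (#A : ℝ) ^ 6) := by ring
    _ ≤ 16 * (T ^ 2 * (#A : ℝ) ^ 6) := by gcongr; norm_num
    _ = _ := by ring

theorem card_richLines_mul_pow_four_le (hinc : HasIncidenceBound K (#A ^ 6) T) (hT : 1 ≤ T)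
    (hH : 2 ≤ H) (hHq : 2 * (#A : ℝ) ^ 2 / Fintype.card K ≤ H) :
    #(richLines A H) * H ^ 4 ≤ 16 * T ^ 2 * (#A : ℝ) ^ 5 := by
  rcases le_total (#(richLines A H) * #A) (Fintype.card K ^ 2) with hsmall | hlarge
  · refine (card_mul_pow_four_le_of_subset_richLines hinc hT hH subset_rfl hsmall).trans ?_
    gcongr
    norm_num
  · have hvar := card_richLines_mul_sq_le (by linarith) hHq
    have hH_sq := card_mul_sq_le_of_card_richLines hinc hT hH hlarge
    calc #(richLines A H) * H ^ 4 = #(richLines A H) * H ^ 2 * H ^ 2 := by ring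
      _ ≤ 4 * Fintype.card K * (#A : ℝ) ^ 2 * H ^ 2 := by gcongr
      _ = 4 * (#A : ℝ) ^ 2 * (Fintype.card K * H ^ 2) := by ring
      _ ≤ 4 * (#A : ℝ) ^ 2 * (4 * T * (#A : ℝ) ^ 3) := by gcongr
      _ = 16 * T * (#A : ℝ) ^ 5 := by ring
      _ ≤ 16 * T ^ 2 * (#A : ℝ) ^ 5 := by gcongr; exact le_self_pow₀ hT two_ne_zero

end LineBound

/-! ### Ratios of differences -/

lemma exists_dyadic_level {α : Type*} {S : Finset α} {f : α → ℕ} {g : α → ℝ} {B : ℕ} {T : ℝ}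
    (hT : (Nat.log 2 B + 1 : ℝ) ≤ T) (hB : ∀ s ∈ S, f s ≤ B) (hg : ∀ s ∈ S, 0 ≤ g s)
    (hfg : ∀ s ∈ S, f s = 0 → g s = 0) :
    ∃ κ : ℝ, 1 ≤ κ ∧ ∃ S' ⊆ S, (∀ s ∈ S', κ ≤ f s ∧ f s ≤ 2 * κ) ∧
      ∑ s ∈ S, g s ≤ T * ∑ s ∈ S', g s := by
  let level (j : ℕ) : Finset α := {s ∈ {s ∈ S | f s ≠ 0} | Nat.log 2 (f s) = j}
  obtain ⟨j, -, hj⟩ := exists_max_image (range (Nat.log 2 B + 1))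
    (fun j => ∑ s ∈ level j, g s) ⟨0, by simp⟩
  have hlevel : level j ⊆ S := (filter_subset _ _).trans (filter_subset _ _)
  refine ⟨2 ^ j, one_le_pow₀ one_le_two, level j, hlevel, fun s hs => ?_, ?_⟩
  · obtain ⟨hS, rfl⟩ := mem_filter.1 hs
    rw [← pow_succ']
    exact ⟨by exact_mod_cast Nat.pow_log_le_self 2 (mem_filter.1 hS).2,
      by exact_mod_cast (Nat.lt_pow_succ_log_self one_lt_two _).le⟩
  · have hmaps : ∀ s ∈ {s ∈ S | f s ≠ 0}, Nat.log 2 (f s) ∈ range (Nat.log 2 B + 1) := fun s hs =>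
      mem_range_succ_iff.2 (Nat.log_mono_right (hB s (mem_filter.1 hs).1))
    have hpos : ∑ s ∈ S, g s = ∑ s ∈ S with f s ≠ 0, g s :=
      (sum_filter_of_ne fun s hs => mt (hfg s hs)).symm
    rw [hpos, ← sum_fiberwise_of_maps_to hmaps]
    refine (sum_le_card_nsmul _ _ _ hj).trans ?_
    rw [nsmul_eq_mul, card_range, Nat.cast_add_one]
    exact mul_le_mul_of_nonneg_right hT (sum_nonneg fun s hs => hg s (hlevel hs))

section Correlation

variable {G R : Type*} [CommGroup G] [Fintype G] [CommSemiring R]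

/-- The multiplicative autocorrelation of a function on a finite commutative group. -/
def correlation (n : G → R) (l : G) : R := ∑ m, n (l * m) * n m

lemma sum_mul_mul_div (n h : G → R) :
    ∑ x, ∑ y, n x * n y * h (x / y) = ∑ l, correlation n l * h l := by
  simp_rw [correlation, sum_mul]
  rw [sum_comm, sum_comm (s := univ) (t := univ) (f := fun l m => n (l * m) * n m * h l)]
  refine sum_congr rfl fun y _ => ?_
  rw [← Equiv.sum_comp (Equiv.mulRight y)]
  simp

lemma sum_correlation (n : G → R) : ∑ l, correlation n l = (∑ x, n x) ^ 2 := by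
  simpa [sq, sum_mul_sum] using (sum_mul_mul_div n fun _ => 1).symm

end Correlation

section RatioCount

variable {K : Type*} [Field K] [DecidableEq K] (A : Finset K)

/-- The number of representations of `x` as a difference of two elements of `A`. -/
def diffCount (x : Kˣ) : ℕ := #{y ∈ A ×ˢ A | y.1 - y.2 = (x : K)}

variable [Fintype K]

lemma sum_diffCount_le : ∑ x, diffCount A x ≤ #A ^ 2 := by
  simp_rw [diffCount]
  rw [← card_sigma, sq, ← card_product]
  refine card_le_card_of_injOn Sigma.snd ?_ ?_
  · rintro ⟨x, y⟩ h
    simp_all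
  · rintro ⟨x, y⟩ h ⟨x', y'⟩ h' rfl
    simp only [coe_sigma, Set.mem_sigma_iff, mem_coe, mem_filter] at h h'
    obtain rfl : x = x' := Units.ext (h.2.2.symm.trans h'.2.2)
    rfl

/-- The number of representations of `u` as a ratio of two nonzero differences of elements
of `A`. -/
def ratioCount (u : Kˣ) : ℕ := correlation (diffCount A) u

lemma cast_ratioCount (u : Kˣ) :
    (ratioCount A u : ℝ) = correlation (fun x => (diffCount A x : ℝ)) u := by
  simp [ratioCount, correlation]

lemma sum_ratioCount_le : ∑ u, ratioCount A u ≤ #A ^ 4 :=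
  calc ∑ u, ratioCount A u = (∑ x, diffCount A x) ^ 2 := sum_correlation _
    _ ≤ (#A ^ 2) ^ 2 := Nat.pow_le_pow_left (sum_diffCount_le A) 2
    _ = #A ^ 4 := by ring

lemma ratioCount_le_sum_richness_sq (u : Kˣ) :
    ratioCount A u ≤ ∑ b, richness A ((u : K), b) ^ 2 := by
  simp_rw [ratioCount, correlation, diffCount, richness, sq, ← card_product]
  rw [← card_sigma, ← card_sigma]
  refine card_le_card_of_injOn (fun x => ⟨x.2.1.1 - u * x.2.2.1, x.2.2⟩) ?_ ?_
  · rintro ⟨m, ⟨a, b⟩, c, d⟩ h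
    simp only [coe_sigma, Set.mem_sigma_iff, mem_coe, mem_filter, mem_product, Units.val_mul] at h
    have hb : u * d + (a - u * c) = b := by linear_combination h.2.1.2 - u * h.2.2.2
    simp [h, hb]
  · rintro ⟨m, ⟨a, b⟩, c, d⟩ h ⟨m', ⟨a', b'⟩, c', d'⟩ h' heq
    simp only [coe_sigma, Set.mem_sigma_iff, mem_coe, mem_filter, mem_product] at h h'
    simp only [Sigma.mk.injEq, heq_eq_eq, Prod.mk.injEq] at heq
    obtain ⟨heq, rfl, rfl⟩ := heq
    obtain rfl : m = m' := Units.ext (h.2.2.2.symm.trans h'.2.2.2)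
    obtain rfl : a = a' := by linear_combination heq
    obtain rfl : b = b' := by linear_combination h'.2.1.2 - h.2.1.2
    rfl

lemma ratioCount_le (u : Kˣ) : ratioCount A u ≤ #A ^ 3 :=
  calc ratioCount A u ≤ ∑ b, richness A ((u : K), b) ^ 2 := ratioCount_le_sum_richness_sq A u
    _ ≤ ∑ b, #A * richness A ((u : K), b) := by
      gcongr with b
      rw [sq]
      exact Nat.mul_le_mul_right _ (richness_le_card A _)
    _ = #A ^ 3 := by rw [← mul_sum, sum_richness_row]; ring

/-- The elements with at least `κ` representations as a ratio of differences of elements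
of `A`. -/
noncomputable def popularRatios (κ : ℝ) : Finset Kˣ := {u | κ ≤ ratioCount A u}

variable {A} {κ T H : ℝ}

lemma mem_popularRatios {u : Kˣ} : u ∈ popularRatios A κ ↔ κ ≤ ratioCount A u := by
  simp [popularRatios]

lemma card_popularRatios_mul_le : #(popularRatios A κ) * κ ≤ (#A : ℝ) ^ 4 :=
  calc #(popularRatios A κ) * κ ≤ ∑ u ∈ popularRatios A κ, (ratioCount A u : ℝ) := by
        rw [← nsmul_eq_mul]
        exact card_nsmul_le_sum _ _ _ fun u hu => mem_popularRatios.1 hu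
    _ ≤ ∑ u, (ratioCount A u : ℝ) := sum_le_univ_sum_of_nonneg fun u => Nat.cast_nonneg _
    _ ≤ (#A : ℝ) ^ 4 := by exact_mod_cast sum_ratioCount_le A

lemma half_ratioCount_le_sum_filter_richness_sq (hH₀ : 0 ≤ H) {u : Kˣ}
    (hH : 2 * (#A : ℝ) ^ 2 * H ≤ ratioCount A u) :
    (ratioCount A u : ℝ) / 2 ≤ ∑ b with H ≤ richness A ((u : K), b),
      (richness A ((u : K), b) : ℝ) ^ 2 := by
  have htotal : (ratioCount A u : ℝ) ≤ ∑ b, (richness A ((u : K), b) : ℝ) ^ 2 := by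
    exact_mod_cast ratioCount_le_sum_richness_sq A u
  have hpoor : ∑ b with ¬ H ≤ richness A ((u : K), b), (richness A ((u : K), b) : ℝ) ^ 2 ≤
      (#A : ℝ) ^ 2 * H :=
    calc ∑ b with ¬ H ≤ richness A ((u : K), b), (richness A ((u : K), b) : ℝ) ^ 2
      _ ≤ ∑ b with ¬ H ≤ richness A ((u : K), b), (richness A ((u : K), b) : ℝ) * H := by
        refine sum_le_sum fun b hb => ?_
        rw [sq]
        exact mul_le_mul_of_nonneg_left (not_le.1 (mem_filter.1 hb).2).le (Nat.cast_nonneg _)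
      _ ≤ ∑ b, (richness A ((u : K), b) : ℝ) * H :=
        sum_le_sum_of_subset_of_nonneg (subset_univ _) fun _ _ _ => by positivity
      _ = (#A : ℝ) ^ 2 * H := by
        rw [← sum_mul]
        exact_mod_cast congrArg (fun s : ℕ => s * H) (sum_richness_row A u)
  rw [← sum_filter_add_sum_filter_not univ fun b => H ≤ richness A ((u : K), b)] at htotal
  linarith

lemma card_popularRatios_mul_half_le (hH₀ : 0 ≤ H) (hH : 2 * (#A : ℝ) ^ 2 * H ≤ κ) :
    #(popularRatios A κ) * (κ / 2) ≤ ∑ l ∈ richLines A H, (richness A l : ℝ) ^ 2 := by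
  let row (a : K) : ℝ := ∑ b with H ≤ richness A (a, b), (richness A (a, b) : ℝ) ^ 2
  have hrow : ∀ u ∈ popularRatios A κ, κ / 2 ≤ row u := by
    intro u hu
    have hκ := mem_popularRatios.1 hu
    have := half_ratioCount_le_sum_filter_richness_sq hH₀ (hH.trans hκ)
    linarith
  calc #(popularRatios A κ) * (κ / 2) ≤ ∑ u ∈ popularRatios A κ, row u := by
        rw [← nsmul_eq_mul]
        exact card_nsmul_le_sum _ _ _ hrow
    _ = ∑ a ∈ (popularRatios A κ).map ⟨Units.val, Units.val_injective⟩, row a := by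
      rw [sum_map]; rfl
    _ ≤ ∑ a, row a :=
      sum_le_univ_sum_of_nonneg fun a => sum_nonneg fun b _ => by positivity
    _ = ∑ l ∈ richLines A H, (richness A l : ℝ) ^ 2 := by
      simp_rw [row, richLines, sum_filter, Fintype.sum_prod_type]

lemma sum_richness_sq_richLines_mul_le (hinc : HasIncidenceBound K (#A ^ 6) T)
    (hT : (Nat.log 2 (#A ^ 3) + 1 : ℝ) ≤ T) (hH : 4 ≤ H)
    (hHq : 4 * (#A : ℝ) ^ 2 / Fintype.card K ≤ H) :
    (∑ l ∈ richLines A H, (richness A l : ℝ) ^ 2) * H ^ 2 ≤ 256 * T ^ 3 * (#A : ℝ) ^ 5 := by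
  have hT₁ : 1 ≤ T := le_trans (by simp) hT
  obtain ⟨κ, -, S, hS, hκ, hsum⟩ := exists_dyadic_level (S := richLines A H) (f := richness A)
    (g := fun l => (richness A l : ℝ) ^ 2) hT
    (fun l _ => (richness_le_card A l).trans (Nat.le_self_pow three_ne_zero _))
    (fun _ _ => by positivity) (fun _ _ h => by simp [h])
  suffices hlevel : (∑ l ∈ S, (richness A l : ℝ) ^ 2) * H ^ 2 ≤ 256 * T ^ 2 * (#A : ℝ) ^ 5 by
    calc (∑ l ∈ richLines A H, (richness A l : ℝ) ^ 2) * H ^ 2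
      _ ≤ T * (∑ l ∈ S, (richness A l : ℝ) ^ 2) * H ^ 2 := by gcongr
      _ = T * ((∑ l ∈ S, (richness A l : ℝ) ^ 2) * H ^ 2) := by ring
      _ ≤ T * (256 * T ^ 2 * (#A : ℝ) ^ 5) := by gcongr
      _ = _ := by ring
  rcases S.eq_empty_or_nonempty with rfl | ⟨l, hl⟩
  · simp only [sum_empty, zero_mul]; positivity
  have hHκ : H ≤ 2 * κ := (mem_richLines.1 (hS hl)).trans (hκ l hl).2
  have hlines := card_richLines_mul_pow_four_le (H := κ) hinc hT₁ (by linarith) (by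
    rw [show 2 * (#A : ℝ) ^ 2 / Fintype.card K = 4 * (#A : ℝ) ^ 2 / Fintype.card K / 2 by ring]
    linarith)
  have hsub : S ⊆ richLines A κ := fun l hl => mem_richLines.2 (hκ l hl).1
  have hS_sum : ∑ l ∈ S, (richness A l : ℝ) ^ 2 ≤ #(richLines A κ) * (2 * κ) ^ 2 := by
    refine (sum_le_card_nsmul S _ ((2 * κ) ^ 2) fun l hl => ?_).trans ?_
    · have := (hκ l hl).2
      gcongr
    · rw [nsmul_eq_mul]
      gcongr
  calc (∑ l ∈ S, (richness A l : ℝ) ^ 2) * H ^ 2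
    _ ≤ #(richLines A κ) * (2 * κ) ^ 2 * (2 * κ) ^ 2 := by gcongr
    _ = 16 * (#(richLines A κ) * κ ^ 4) := by ring
    _ ≤ 16 * (16 * T ^ 2 * (#A : ℝ) ^ 5) := by gcongr
    _ = _ := by ring

lemma card_popularRatios_mul_pow_three_le_of_rich (hinc : HasIncidenceBound K (#A ^ 6) T)
    (hT : (Nat.log 2 (#A ^ 3) + 1 : ℝ) ≤ T) (hH : 4 ≤ H)
    (hHq : 4 * (#A : ℝ) ^ 2 / Fintype.card K ≤ H) :
    #(popularRatios A (2 * (#A : ℝ) ^ 2 * H)) * (2 * (#A : ℝ) ^ 2 * H) ^ 3 ≤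
      2048 * T ^ 3 * (#A : ℝ) ^ 9 := by
  have hsum := card_popularRatios_mul_half_le (A := A) (by linarith : 0 ≤ H) le_rfl
  have hlevel := sum_richness_sq_richLines_mul_le hinc hT hH hHq
  calc #(popularRatios A (2 * (#A : ℝ) ^ 2 * H)) * (2 * (#A : ℝ) ^ 2 * H) ^ 3
    _ = #(popularRatios A (2 * (#A : ℝ) ^ 2 * H)) * (2 * (#A : ℝ) ^ 2 * H / 2) * H ^ 2 *
        (8 * (#A : ℝ) ^ 4) := by ring
    _ ≤ (∑ l ∈ richLines A H, (richness A l : ℝ) ^ 2) * H ^ 2 * (8 * (#A : ℝ) ^ 4) := by gcongr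
    _ ≤ 256 * T ^ 3 * (#A : ℝ) ^ 5 * (8 * (#A : ℝ) ^ 4) := by gcongr
    _ = _ := by ring

lemma card_popularRatios_mul_pow_three_le (hinc : HasIncidenceBound K (#A ^ 6) T)
    (hT : (Nat.log 2 (#A ^ 3) + 1 : ℝ) ≤ T) (hA : #A ^ 3 ≤ Fintype.card K ^ 2) (hκ : 0 < κ) :
    #(popularRatios A κ) * κ ^ 3 ≤ 2048 * T ^ 3 * (#A : ℝ) ^ 9 := by
  have hT₁ : 1 ≤ T ^ 3 := one_le_pow₀ (le_trans (by simp) hT)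
  have hfirst := card_popularRatios_mul_le (A := A) (κ := κ)
  have hA' : (#A : ℝ) ^ 3 ≤ (Fintype.card K : ℝ) ^ 2 := by exact_mod_cast hA
  have hq : (0 : ℝ) < Fintype.card K := by exact_mod_cast Fintype.card_pos
  rcases A.eq_empty_or_nonempty with rfl | hne
  · simp only [card_empty, Nat.cast_zero, ne_eq, OfNat.ofNat_ne_zero, not_false_eq_true, zero_pow,
      mul_zero] at hfirst ⊢
    nlinarith [sq_nonneg κ]
  have hN : (1 : ℝ) ≤ #A := by exact_mod_cast hne.card_pos
  rcases le_or_gt (κ * Fintype.card K) (8 * (#A : ℝ) ^ 4) with hκq | hκq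
  · refine le_of_mul_le_mul_right ?_ (by positivity : (0 : ℝ) < (Fintype.card K : ℝ) ^ 2)
    calc #(popularRatios A κ) * κ ^ 3 * (Fintype.card K : ℝ) ^ 2
      _ = #(popularRatios A κ) * κ * (κ * Fintype.card K) ^ 2 := by ring
      _ ≤ (#A : ℝ) ^ 4 * (8 * (#A : ℝ) ^ 4) ^ 2 := by gcongr
      _ = 64 * 1 * (#A : ℝ) ^ 9 * (#A : ℝ) ^ 3 := by ring
      _ ≤ 2048 * T ^ 3 * (#A : ℝ) ^ 9 * (Fintype.card K : ℝ) ^ 2 := by gcongr; norm_num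
  rcases le_or_gt κ (8 * (#A : ℝ) ^ 2) with hκA | hκA
  · calc #(popularRatios A κ) * κ ^ 3 = #(popularRatios A κ) * κ * κ ^ 2 := by ring
      _ ≤ (#A : ℝ) ^ 4 * (8 * (#A : ℝ) ^ 2) ^ 2 := by gcongr
      _ = 64 * 1 * (#A : ℝ) ^ 8 := by ring
      _ ≤ 2048 * T ^ 3 * (#A : ℝ) ^ 9 := by gcongr <;> norm_num
  obtain ⟨H, rfl⟩ : ∃ H, κ = 2 * (#A : ℝ) ^ 2 * H := ⟨κ / (2 * (#A : ℝ) ^ 2), by field_simp⟩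
  refine card_popularRatios_mul_pow_three_le_of_rich hinc hT ?_ ?_
  · exact le_of_mul_le_mul_left (by linarith) (by positivity : 0 < 2 * (#A : ℝ) ^ 2)
  · rw [div_le_iff₀ hq]
    exact le_of_mul_le_mul_left (by linarith) (by positivity : 0 < 2 * (#A : ℝ) ^ 2)

theorem sum_ratioCount_pow_three_le (hinc : HasIncidenceBound K (#A ^ 6) T)
    (hT : (Nat.log 2 (#A ^ 3) + 1 : ℝ) ≤ T) (hA : #A ^ 3 ≤ Fintype.card K ^ 2) :
    ∑ u, (ratioCount A u : ℝ) ^ 3 ≤ 2 ^ 14 * T ^ 4 * (#A : ℝ) ^ 9 := by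
  have hT₁ : 1 ≤ T := le_trans (by simp) hT
  obtain ⟨κ, hκ₁, S, -, hκ, hsum⟩ := exists_dyadic_level (S := univ) (f := ratioCount A)
    (g := fun u => (ratioCount A u : ℝ) ^ 3) hT (fun u _ => ratioCount_le A u)
    (fun _ _ => by positivity) (fun _ _ h => by simp [h])
  have hpopular := card_popularRatios_mul_pow_three_le hinc hT hA (κ := κ) (by linarith)
  have hsub : S ⊆ popularRatios A κ := fun u hu => mem_popularRatios.2 (hκ u hu).1
  have hS : ∑ u ∈ S, (ratioCount A u : ℝ) ^ 3 ≤ #(popularRatios A κ) * (2 * κ) ^ 3 := by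
    refine (sum_le_card_nsmul S _ ((2 * κ) ^ 3) fun u hu => ?_).trans ?_
    · have := (hκ u hu).2
      gcongr
    · rw [nsmul_eq_mul]
      gcongr
  calc ∑ u, (ratioCount A u : ℝ) ^ 3 ≤ T * (#(popularRatios A κ) * (2 * κ) ^ 3) :=
        hsum.trans (by gcongr)
    _ = 8 * T * (#(popularRatios A κ) * κ ^ 3) := by ring
    _ ≤ 8 * T * (2048 * T ^ 3 * (#A : ℝ) ^ 9) := by gcongr
    _ = _ := by ring

end RatioCount

/-! ### Popular dilates in a finite group -/

section DilateSum

variable {G : Type*} [CommGroup G] [Fintype G]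

lemma sum_mul_translate_mul_translate (n : G → ℝ) (x y : G) :
    ∑ m, n (m * x) * n (m * y) = correlation n (x / y) := by
  rw [correlation, ← Equiv.sum_comp (Equiv.mulRight y) fun m => n (x / y * m) * n m]
  refine sum_congr rfl fun m _ => ?_
  rw [Equiv.coe_mulRight]
  beta_reduce
  rw [show x / y * (m * y) = m * x by rw [mul_left_comm, div_mul_cancel]]

lemma sum_div_mul_div (n : G → ℝ) (x y : G) :
    ∑ m, n (x / m) * n (y / m) = correlation n (x / y) := by
  rw [← sum_mul_translate_mul_translate, ← Equiv.sum_comp (Equiv.inv G)]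
  simp [div_eq_mul_inv, mul_comm]

lemma sum_sq_sum_mul_translate {ι : Type*} (n : G → ℝ) (s : Finset ι) (a : ι → ℝ) (b : ι → G) :
    ∑ m, (∑ i ∈ s, a i * n (m * b i)) ^ 2 =
      ∑ z ∈ s ×ˢ s, a z.1 * a z.2 * correlation n (b z.1 / b z.2) := by
  simp_rw [← sum_mul_translate_mul_translate, mul_sum, sum_comm (s := s ×ˢ s), sq, sum_mul_sum,
    sum_product]
  exact sum_congr rfl fun m _ => sum_congr rfl fun i _ => sum_congr rfl fun j _ => by ring

/-- The sum of `n` over the dilate of `Λ` by `y`. -/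
def dilateSum {R : Type*} [AddCommMonoid R] (n : G → R) (Λ : Finset G) (y : G) : R :=
  ∑ l ∈ Λ, n (l * y)

/-- The triple correlation of `n` with two dilates of `f`. -/
def tripleCorrelation (n f : G → ℝ) (z : G × G) : ℝ := ∑ x, n x * f (x / z.1) * f (x / z.2)

lemma sum_sum_mul_div_eq_sum_mul_dilateSum (n h : G → ℝ) (Λ : Finset G) :
    ∑ x, n x * ∑ l ∈ Λ, h (x / l) = ∑ y, h y * dilateSum n Λ y := by
  simp_rw [dilateSum, mul_sum]
  rw [sum_comm, sum_comm (t := Λ)]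
  refine sum_congr rfl fun l _ => ?_
  rw [← Equiv.sum_comp (Equiv.mulLeft l)]
  exact sum_congr rfl fun y _ => by simp [mul_comm]

variable {n f : G → ℝ} {Λ : Finset G}

lemma correlation_nonneg (hn : 0 ≤ n) (l : G) : 0 ≤ correlation n l :=
  sum_nonneg fun _ _ => mul_nonneg (hn _) (hn _)

lemma sum_mul_mul_sq_correlation (n : G → ℝ) :
    ∑ x, ∑ y, n x * n y * correlation n (x / y) ^ 2 = ∑ l, correlation n l ^ 3 := by
  rw [sum_mul_mul_div n fun l => correlation n l ^ 2]
  exact sum_congr rfl fun l _ => by ring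

lemma tripleCorrelation_nonneg (hn : 0 ≤ n) (hf : 0 ≤ f) (z : G × G) :
    0 ≤ tripleCorrelation n f z :=
  sum_nonneg fun _ _ => mul_nonneg (mul_nonneg (hn _) (hf _)) (hf _)

lemma sum_mul_tripleCorrelation (n f : G → ℝ) (Λ : Finset G) (h : G × G → ℝ) :
    ∑ z ∈ Λ ×ˢ Λ, tripleCorrelation n f z * h z =
      ∑ x, n x * ∑ z ∈ Λ ×ˢ Λ, f (x / z.1) * f (x / z.2) * h z := by
  simp_rw [tripleCorrelation, sum_mul, mul_sum]
  rw [sum_comm]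
  exact sum_congr rfl fun x _ => sum_congr rfl fun z _ => by ring

lemma sq_sum_mul_sq_dilateSum_le (hn : 0 ≤ n) (f : G → ℝ) (Λ : Finset G) :
    (∑ y, f y * dilateSum n Λ y ^ 2) ^ 2 ≤
      (∑ x, n x) * #Λ * ∑ z ∈ Λ ×ˢ Λ, tripleCorrelation n f z * correlation n (z.2 / z.1) := by
  let r (x m : G) : ℝ := ∑ l ∈ Λ, f (x / l) * n (m * (x / l))
  have hsum : ∑ y, f y * dilateSum n Λ y ^ 2 = ∑ z ∈ univ ×ˢ Λ, n z.1 * r z.1 z.2 := by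
    have hr (x : G) : ∑ m ∈ Λ, r x m = ∑ l ∈ Λ, f (x / l) * dilateSum n Λ (x / l) := by
      simp_rw [r, dilateSum, mul_sum]
      exact sum_comm
    simp_rw [sum_product, ← mul_sum, hr]
    rw [sum_sum_mul_div_eq_sum_mul_dilateSum n fun y => f y * dilateSum n Λ y]
    simp_rw [sq, mul_assoc]
  have hsq (x : G) : ∑ m, r x m ^ 2 =
      ∑ z ∈ Λ ×ˢ Λ, f (x / z.1) * f (x / z.2) * correlation n (z.2 / z.1) := by
    simp_rw [r, sum_sq_sum_mul_translate, div_div_div_cancel_left]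
  have hcauchy : (∑ z ∈ univ ×ˢ Λ, n z.1 * r z.1 z.2) ^ 2 ≤
      (∑ z ∈ univ ×ˢ Λ, n z.1) * ∑ z ∈ univ ×ˢ Λ, n z.1 * r z.1 z.2 ^ 2 :=
    sum_sq_le_sum_mul_sum_of_sq_le_mul _ (fun z _ => hn z.1)
      (fun z _ => mul_nonneg (hn z.1) (sq_nonneg _)) fun z _ => by
        rw [mul_pow, sq (n z.1), mul_assoc]
  have hmass : ∑ z ∈ univ ×ˢ Λ, n z.1 = (∑ x, n x) * #Λ := by
    simp [sum_product, sum_mul, mul_comm]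
  rw [hsum, sum_mul_tripleCorrelation, ← hmass]
  refine hcauchy.trans (mul_le_mul_of_nonneg_left ?_ (sum_nonneg fun z _ => hn z.1))
  simp_rw [← hsq, sum_product, ← mul_sum]
  refine sum_le_sum fun x _ => ?_
  exact mul_le_mul_of_nonneg_left (sum_le_univ_sum_of_nonneg fun _ => sq_nonneg _) (hn x)

lemma sum_sq_tripleCorrelation_self (n : G → ℝ) :
    ∑ z, tripleCorrelation n n z ^ 2 = ∑ l, correlation n l ^ 3 := by
  have hexpand (z : G × G) : tripleCorrelation n n z ^ 2 = ∑ x, ∑ y,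
      n x * n y * ((n (x / z.1) * n (y / z.1)) * (n (x / z.2) * n (y / z.2))) := by
    rw [tripleCorrelation, sq, sum_mul_sum]
    exact sum_congr rfl fun x _ => sum_congr rfl fun y _ => by ring
  simp_rw [hexpand]
  rw [sum_comm, ← sum_mul_mul_sq_correlation]
  refine sum_congr rfl fun x _ => ?_
  rw [sum_comm]
  refine sum_congr rfl fun y _ => ?_
  rw [← sum_div_mul_div, sq, sum_mul_sum, ← mul_sum, Fintype.sum_prod_type]

lemma sum_sq_tripleCorrelation_le (hn : 0 ≤ n) (hf : 0 ≤ f) (hfn : f ≤ n) (S : Finset (G × G)) :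
    ∑ z ∈ S, tripleCorrelation n f z ^ 2 ≤ ∑ l, correlation n l ^ 3 := by
  rw [← sum_sq_tripleCorrelation_self]
  refine (sum_le_univ_sum_of_nonneg fun _ => sq_nonneg _).trans (sum_le_sum fun z _ => ?_)
  refine pow_le_pow_left₀ (tripleCorrelation_nonneg hn hf z) (sum_le_sum fun x _ => ?_) 2
  exact mul_le_mul (mul_le_mul_of_nonneg_left (hfn _) (hn x)) (hfn _) (hf _)
    (mul_nonneg (hn _) (hn _))

lemma sum_tripleCorrelation_mul_sq_correlation_le (hn : 0 ≤ n) (hf : 0 ≤ f) (hfn : f ≤ n) {D : ℝ}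
    (hD : ∀ y, f y * dilateSum n Λ y ≤ D * n y) :
    ∑ z ∈ Λ ×ˢ Λ, tripleCorrelation n f z * correlation n (z.2 / z.1) ^ 2 ≤
      D * ∑ l, correlation n l ^ 3 := by
  let s (y : G) : ℝ := ∑ z, n z * correlation n (y / z) ^ 2
  have hs (y : G) : 0 ≤ s y := sum_nonneg fun z _ => mul_nonneg (hn z) (sq_nonneg _)
  have hinner (x l : G) : ∑ l' ∈ Λ, f (x / l) * f (x / l') * correlation n (l' / l) ^ 2 ≤
      f (x / l) * s (x / l) := by
    simp_rw [mul_assoc, ← mul_sum]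
    refine mul_le_mul_of_nonneg_left ?_ (hf _)
    rw [show s (x / l) = ∑ l', n (x / l') * correlation n (l' / l) ^ 2 by
      simpa using
        (Equiv.sum_comp (Equiv.divLeft x) fun z => n z * correlation n (x / l / z) ^ 2).symm]
    refine le_trans (sum_le_sum fun l' _ => mul_le_mul_of_nonneg_right (hfn _) (sq_nonneg _)) ?_
    exact sum_le_univ_sum_of_nonneg fun l' => mul_nonneg (hn _) (sq_nonneg _)
  calc ∑ z ∈ Λ ×ˢ Λ, tripleCorrelation n f z * correlation n (z.2 / z.1) ^ 2
    _ = ∑ x, n x * ∑ l ∈ Λ, ∑ l' ∈ Λ, f (x / l) * f (x / l') * correlation n (l' / l) ^ 2 := by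
      rw [sum_mul_tripleCorrelation]
      simp_rw [sum_product]
    _ ≤ ∑ x, n x * ∑ l ∈ Λ, f (x / l) * s (x / l) :=
      sum_le_sum fun x _ => mul_le_mul_of_nonneg_left (sum_le_sum fun l _ => hinner x l) (hn x)
    _ = ∑ y, f y * s y * dilateSum n Λ y :=
      sum_sum_mul_div_eq_sum_mul_dilateSum n (fun y => f y * s y) Λ
    _ ≤ ∑ y, D * (n y * s y) := sum_le_sum fun y _ => by
      nlinarith [mul_le_mul_of_nonneg_right (hD y) (hs y)]
    _ = D * ∑ l, correlation n l ^ 3 := by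
      simp_rw [← sum_mul_mul_sq_correlation, ← mul_sum, s, mul_sum, mul_assoc]

lemma pow_three_sum_mul_le {ι : Type*} (S : Finset ι) {R w : ι → ℝ} (hR : 0 ≤ R) (hw : 0 ≤ w) :
    (∑ i ∈ S, R i * w i) ^ 3 ≤ (∑ i ∈ S, R i * w i ^ 2) * (∑ i ∈ S, R i ^ 2) * ∑ i ∈ S, w i := by
  have hsqrt (i : ι) : √(w i) ^ 2 = w i := Real.sq_sqrt (hw i)
  let v (i : ι) : ℝ := R i * √(w i)
  have hv (i : ι) : 0 ≤ v i := mul_nonneg (hR i) (Real.sqrt_nonneg _)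
  have hholder : (∑ i ∈ S, R i * w i) ^ 3 ≤ (∑ i ∈ S, v i) ^ 2 * ∑ i ∈ S, R i * w i ^ 2 := by
    have h := Real.inner_le_weight_mul_Lp_of_nonneg S (p := 3) (by norm_num) v
      (fun i => √(w i)) hv fun i => Real.sqrt_nonneg _
    have hl (i : ι) : v i * √(w i) = R i * w i := by rw [mul_assoc, ← sq, hsqrt]
    have hr (i : ι) : v i * √(w i) ^ (3 : ℝ) = R i * w i ^ 2 := by
      rw [show (3 : ℝ) = (3 : ℕ) by norm_num, Real.rpow_natCast]
      linear_combination R i * (√(w i) ^ 2 + w i) * hsqrt i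
    simp_rw [hl, hr] at h
    have h0 : 0 ≤ ∑ i ∈ S, v i := sum_nonneg fun i _ => hv i
    have h1 : 0 ≤ ∑ i ∈ S, R i * w i ^ 2 :=
      sum_nonneg fun i _ => mul_nonneg (hR i) (sq_nonneg _)
    refine (pow_le_pow_left₀ (sum_nonneg fun i _ => mul_nonneg (hR i) (hw i)) h 3).trans_eq ?_
    rw [mul_pow, ← Real.rpow_mul_natCast h0, ← Real.rpow_mul_natCast h1]
    norm_num
  have hcauchy : (∑ i ∈ S, v i) ^ 2 ≤ (∑ i ∈ S, R i ^ 2) * ∑ i ∈ S, w i := by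
    simpa only [hsqrt] using sum_mul_sq_le_sq_mul_sq S R fun i => √(w i)
  refine hholder.trans ?_
  rw [mul_comm, mul_assoc]
  exact mul_le_mul_of_nonneg_left hcauchy
    (sum_nonneg fun i _ => mul_nonneg (hR i) (sq_nonneg _))

lemma pow_six_sum_mul_sq_dilateSum_le (hn : 0 ≤ n) (hf : 0 ≤ f) (hfn : f ≤ n) {D : ℝ}
    (hD : ∀ y, f y * dilateSum n Λ y ≤ D * n y) :
    (∑ y, f y * dilateSum n Λ y ^ 2) ^ 6 ≤
      D * (∑ l, correlation n l ^ 3) ^ 2 * (∑ z ∈ Λ ×ˢ Λ, correlation n (z.2 / z.1)) *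
        ((∑ x, n x) * #Λ) ^ 3 := by
  have hE : 0 ≤ ∑ z ∈ Λ ×ˢ Λ, correlation n (z.2 / z.1) :=
    sum_nonneg fun z _ => correlation_nonneg hn _
  have hS : 0 ≤ (∑ x, n x) * #Λ := mul_nonneg (sum_nonneg fun x _ => hn x) (Nat.cast_nonneg _)
  have hcubic := sum_tripleCorrelation_mul_sq_correlation_le hn hf hfn hD
  calc (∑ y, f y * dilateSum n Λ y ^ 2) ^ 6 = ((∑ y, f y * dilateSum n Λ y ^ 2) ^ 2) ^ 3 := by ring
    _ ≤ ((∑ x, n x) * #Λ *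
          ∑ z ∈ Λ ×ˢ Λ, tripleCorrelation n f z * correlation n (z.2 / z.1)) ^ 3 :=
      pow_le_pow_left₀ (sq_nonneg _) (sq_sum_mul_sq_dilateSum_le hn f Λ) 3
    _ ≤ ((∑ x, n x) * #Λ) ^ 3 *
          (D * (∑ l, correlation n l ^ 3) * (∑ l, correlation n l ^ 3) *
            ∑ z ∈ Λ ×ˢ Λ, correlation n (z.2 / z.1)) := by
      rw [mul_pow]
      refine mul_le_mul_of_nonneg_left ?_ (pow_nonneg hS 3)
      refine (pow_three_sum_mul_le (Λ ×ˢ Λ) (tripleCorrelation_nonneg hn hf)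
        fun z => correlation_nonneg hn (z.2 / z.1)).trans (mul_le_mul_of_nonneg_right ?_ hE)
      refine mul_le_mul hcubic (sum_sq_tripleCorrelation_le hn hf hfn _)
        (sum_nonneg fun _ _ => sq_nonneg _) (le_trans (sum_nonneg fun z _ => ?_) hcubic)
      exact mul_nonneg (tripleCorrelation_nonneg hn hf z) (sq_nonneg _)
    _ = _ := by ring

end DilateSum

section DilateTriples

variable {K : Type*} [Field K] [DecidableEq K] {A : Finset K} {L : Finset Kˣ} {T : ℝ}

/-- The triples `(a, l, b * l)` with `a, b ∈ A` and `l ∈ L`. Two of them meet exactly when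
`(b - a') * l = (b' - a) * l'`, so that their incidences count ratios of differences. -/
def dilateTriples (A : Finset K) (L : Finset Kˣ) : Finset (Triple K) :=
  ((A ×ˢ A) ×ˢ L).image fun x => (x.1.1, (x.2 : K), x.1.2 * x.2)

lemma card_dilateTriples : #(dilateTriples A L) = #A ^ 2 * #L := by
  rw [dilateTriples, card_image_of_injective, card_product, card_product, sq]
  rintro ⟨⟨a, b⟩, l⟩ ⟨⟨a', b'⟩, l'⟩ h
  simp only [Prod.mk.injEq, Units.val_inj] at h
  obtain ⟨rfl, rfl, hb⟩ := h
  rw [mul_right_cancel₀ l.ne_zero hb]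

lemma fewGeometricTransversals_dilateTriples :
    FewGeometricTransversals (#L + #A) (dilateTriples A L) := by
  refine fewGeometricTransversals_add ?_ fun w u S hS hinj _ =>
    card_le_card_of_injOn (fun q => q.1) (fun q hq => ?_) hinj
  · refine (card_le_card ?_).trans (card_image_le (s := L) (f := fun l : Kˣ => (l : K)))
    intro l hl
    simp only [dilateTriples, mem_image, mem_product] at hl ⊢
    obtain ⟨_, ⟨x, hx, rfl⟩, rfl⟩ := hl
    exact ⟨x.2, hx.2, rfl⟩
  · obtain ⟨x, hx, rfl⟩ := mem_image.1 (hS hq)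
    exact (mem_product.1 (mem_product.1 hx).1).1

variable [Fintype K]

lemma sum_ratioCount_div_le_incidences :
    ∑ z ∈ L ×ˢ L, ratioCount A (z.2 / z.1) ≤
      incidences (dilateTriples A L) (dilateTriples A L) := by
  simp_rw [incidences_eq_card_filter, ratioCount, correlation, diffCount, ← card_product]
  simp_rw [← card_sigma]
  refine card_le_card_of_injOn (fun x => ((x.2.2.2.2, (x.1.1 : K), x.2.2.1.1 * x.1.1),
    (x.2.2.1.2, (x.1.2 : K), x.2.2.2.1 * x.1.2))) ?_ ?_
  · rintro ⟨⟨l, l'⟩, m, ⟨b, a'⟩, b', a⟩ h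
    simp only [coe_sigma, Set.mem_sigma_iff, mem_coe, mem_filter, mem_product, Units.val_mul,
      Units.val_div_eq_div_val] at h
    obtain ⟨⟨hl, hl'⟩, -, ⟨⟨hb, ha'⟩, hba⟩, ⟨hb', ha⟩, hm⟩ := h
    have hratio : (b - a') * l = (b' - a) * l' := by
      rw [hba, hm, mul_right_comm, div_mul_cancel₀ _ l.ne_zero, mul_comm]
    simp only [coe_filter, mem_product, Set.mem_ofPred_eq]
    refine ⟨⟨mem_image.2 ⟨((a, b), l), by simp [*], rfl⟩,
      mem_image.2 ⟨((a', b'), l'), by simp [*], rfl⟩⟩, ?_⟩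
    linear_combination hratio
  · rintro ⟨⟨l, l'⟩, m, ⟨b, a'⟩, b', a⟩ h ⟨⟨k, k'⟩, n, ⟨d, c'⟩, d', c⟩ h' heq
    simp only [Prod.mk.injEq, Units.val_inj] at heq
    obtain ⟨⟨rfl, rfl, hb⟩, rfl, rfl, hb'⟩ := heq
    obtain rfl := mul_right_cancel₀ l.ne_zero hb
    obtain rfl := mul_right_cancel₀ l'.ne_zero hb'
    simp only [coe_sigma, Set.mem_sigma_iff, mem_coe, mem_product, mem_filter] at h h'
    obtain rfl : m = n := Units.ext (h.2.2.2.2.symm.trans h'.2.2.2.2)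
    rfl

lemma sum_ratioCount_div_le (hinc : HasIncidenceBound K (#A ^ 6) T) (hT : 0 ≤ T)
    (hL₀ : L.Nonempty) (hL : #L ≤ #A ^ 2) (hLq : #A ^ 2 * #L ≤ Fintype.card K ^ 2) :
    ∑ z ∈ L ×ˢ L, (ratioCount A (z.2 / z.1) : ℝ) ≤ 3 * T * (#A : ℝ) ^ 3 * (#L * √(#L : ℝ)) := by
  have hL_pos : 1 ≤ #L := hL₀.card_pos
  have hA_pos : 1 ≤ #A := Nat.pos_of_ne_zero fun h => by
    rw [h, zero_pow two_ne_zero] at hL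
    lia
  have hsmall : #A ^ 2 * #L ≤ #A ^ 6 :=
    calc #A ^ 2 * #L ≤ #A ^ 2 * #A ^ 2 := by gcongr
      _ ≤ #A ^ 6 := by rw [← pow_add]; exact Nat.pow_le_pow_right hA_pos (by norm_num)
  have hbound := hinc (by lia) fewGeometricTransversals_dilateTriples
    (card_dilateTriples.trans_le hLq) (card_dilateTriples.trans_le hsmall)
  obtain ⟨s, hs, hs₀⟩ : ∃ s : ℝ, (#L : ℝ) = s ^ 2 ∧ 0 ≤ s :=
    ⟨√(#L : ℝ), (Real.sq_sqrt (Nat.cast_nonneg _)).symm, Real.sqrt_nonneg _⟩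
  have hs_one : 1 ≤ s := (one_le_sq_iff₀ hs₀).1 (hs ▸ by exact_mod_cast hL_pos)
  have hsA : s ≤ #A := le_of_sq_le_sq (hs ▸ by exact_mod_cast hL) (Nat.cast_nonneg _)
  have hsum : s ^ 2 + #A ≤ 2 * (#A * s) := by nlinarith
  calc ∑ z ∈ L ×ˢ L, (ratioCount A (z.2 / z.1) : ℝ)
    _ ≤ incidences (dilateTriples A L) (dilateTriples A L) := by
      exact_mod_cast sum_ratioCount_div_le_incidences
    _ ≤ T * (#A ^ 2 * s ^ 2 * (#A * s) + (s ^ 2 + #A) * (#A ^ 2 * s ^ 2)) := by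
      rw [card_dilateTriples] at hbound
      push_cast [hs] at hbound
      rwa [← mul_pow, Real.sqrt_sq (by positivity), mul_pow] at hbound
    _ ≤ T * (#A ^ 2 * s ^ 2 * (#A * s) + 2 * (#A * s) * (#A ^ 2 * s ^ 2)) := by gcongr
    _ = 3 * T * (#A : ℝ) ^ 3 * (#L * √(#L : ℝ)) := by rw [hs, Real.sqrt_sq hs₀]; ring

end DilateTriples

section SecondMoment

variable {K : Type*} [Field K] [DecidableEq K] [Fintype K] {A : Finset K} {Λ Y : Finset Kˣ}
  {T κ g : ℝ}

lemma sum_ratioCount_eq (A : Finset K) (Λ : Finset Kˣ) :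
    ∑ l ∈ Λ, ratioCount A l = ∑ y, diffCount A y * dilateSum (diffCount A) Λ y := by
  simp_rw [ratioCount, correlation, dilateSum, mul_sum]
  rw [sum_comm]
  simp_rw [mul_comm]

lemma exists_dilateSum_level (hT : (Nat.log 2 (#A ^ 3) + 1 : ℝ) ≤ T)
    (hΛ : Λ ⊆ popularRatios A κ) :
    ∃ g : ℝ, 1 ≤ g ∧ ∃ Y : Finset Kˣ,
      (∀ y ∈ Y, g ≤ dilateSum (diffCount A) Λ y ∧ dilateSum (diffCount A) Λ y ≤ 2 * g) ∧
      #Λ * κ ≤ 2 * T * (g * ∑ y ∈ Y, (diffCount A y : ℝ)) := by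
  have hT₀ : 0 ≤ T := le_trans (by positivity) hT
  have hbound (y : Kˣ) : dilateSum (diffCount A) Λ y ≤ #A ^ 3 :=
    calc dilateSum (diffCount A) Λ y ≤ ∑ l, diffCount A (l * y) :=
          sum_le_univ_sum_of_nonneg (by simp)
      _ = ∑ l, diffCount A l := Equiv.sum_comp (Equiv.mulRight y) _
      _ ≤ #A ^ 2 := sum_diffCount_le A
      _ ≤ #A ^ 3 := by
        rcases A.eq_empty_or_nonempty with rfl | hA
        · simp
        · exact Nat.pow_le_pow_right hA.card_pos (by norm_num)
  obtain ⟨g, hg, Y, -, hY, hsum⟩ := exists_dyadic_level (S := univ)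
    (f := dilateSum (diffCount A) Λ)
    (g := fun y => diffCount A y * ((dilateSum (diffCount A) Λ y : ℕ) : ℝ)) hT
    (fun y _ => hbound y) (fun y _ => by positivity) fun y _ h => by simp [h]
  refine ⟨g, hg, Y, hY, ?_⟩
  calc #Λ * κ ≤ ∑ l ∈ Λ, (ratioCount A l : ℝ) := by
        rw [← nsmul_eq_mul]
        exact card_nsmul_le_sum _ _ _ fun l hl => mem_popularRatios.1 (hΛ hl)
    _ = ∑ y, diffCount A y * ((dilateSum (diffCount A) Λ y : ℕ) : ℝ) := by
      exact_mod_cast sum_ratioCount_eq A Λ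
    _ ≤ T * ∑ y ∈ Y, diffCount A y * ((dilateSum (diffCount A) Λ y : ℕ) : ℝ) := hsum
    _ ≤ T * ∑ y ∈ Y, diffCount A y * (2 * g) := by
      gcongr with y hy
      exact (hY y hy).2
    _ = 2 * T * (g * ∑ y ∈ Y, (diffCount A y : ℝ)) := by rw [← sum_mul]; ring

lemma pow_six_level_le (hg : 0 ≤ g)
    (hY : ∀ y ∈ Y, g ≤ dilateSum (diffCount A) Λ y ∧ dilateSum (diffCount A) Λ y ≤ 2 * g) :
    (g ^ 2 * ∑ y ∈ Y, (diffCount A y : ℝ)) ^ 6 ≤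
      2 * g * (∑ u, (ratioCount A u : ℝ) ^ 3) ^ 2 *
        (∑ z ∈ Λ ×ˢ Λ, (ratioCount A (z.2 / z.1) : ℝ)) * ((#A : ℝ) ^ 2 * #Λ) ^ 3 := by
  let n (x : Kˣ) : ℝ := diffCount A x
  let f (y : Kˣ) : ℝ := if y ∈ Y then n y else 0
  have hn : 0 ≤ n := fun x => Nat.cast_nonneg _
  have hf : 0 ≤ f := fun y => by dsimp only [f]; split_ifs; exacts [hn y, le_rfl]
  have hfn : f ≤ n := fun y => by dsimp only [f]; split_ifs; exacts [le_rfl, hn y]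
  have hcast (y : Kˣ) : dilateSum n Λ y = dilateSum (diffCount A) Λ y := by simp [dilateSum, n]
  have hfd (y : Kˣ) : f y * dilateSum n Λ y ≤ 2 * g * n y := by
    dsimp only [f]
    split_ifs with hy
    · rw [mul_comm, hcast]
      exact mul_le_mul_of_nonneg_right (hY y hy).2 (hn y)
    · rw [zero_mul]
      exact mul_nonneg (by positivity) (hn y)
  have hlower : g ^ 2 * ∑ y ∈ Y, n y ≤ ∑ y, f y * dilateSum n Λ y ^ 2 := by
    simp only [f, ite_mul, zero_mul, sum_ite_mem, univ_inter, mul_sum]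
    refine sum_le_sum fun y hy => ?_
    rw [mul_comm, hcast]
    exact mul_le_mul_of_nonneg_left (pow_le_pow_left₀ hg (hY y hy).1 2) (hn y)
  have hmass : ∑ x, n x ≤ (#A : ℝ) ^ 2 := by
    dsimp only [n]
    exact_mod_cast sum_diffCount_le A
  have hmass₀ : 0 ≤ ∑ x, n x := sum_nonneg fun x _ => hn x
  have hlower₀ : 0 ≤ g ^ 2 * ∑ y ∈ Y, n y :=
    mul_nonneg (sq_nonneg g) (sum_nonneg fun y _ => hn y)
  refine (pow_le_pow_left₀ hlower₀ hlower 6).trans ?_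
  refine (pow_six_sum_mul_sq_dilateSum_le hn hf hfn hfd).trans ?_
  simp_rw [cast_ratioCount]
  gcongr
  exact mul_nonneg (by positivity) (sum_nonneg fun z _ => correlation_nonneg hn _)

lemma pow_eleven_level_le (hinc : HasIncidenceBound K (#A ^ 6) T)
    (hT : (Nat.log 2 (#A ^ 3) + 1 : ℝ) ≤ T) (hA : #A ^ 3 ≤ Fintype.card K ^ 2)
    (hΛ₀ : Λ.Nonempty) (hΛ : #Λ ≤ #A ^ 2) (hΛq : #A ^ 2 * #Λ ≤ Fintype.card K ^ 2) (hg : 0 < g)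
    (hY : ∀ y ∈ Y, g ≤ dilateSum (diffCount A) Λ y ∧ dilateSum (diffCount A) Λ y ≤ 2 * g) :
    (g * ∑ y ∈ Y, (diffCount A y : ℝ)) ^ 11 ≤
      2 ^ 31 * T ^ 9 * (#A : ℝ) ^ 37 * (#Λ ^ 4 * √(#Λ : ℝ)) := by
  have hT₀ : 0 ≤ T := le_trans (by positivity) hT
  have hcube := sum_ratioCount_pow_three_le hinc hT hA
  have hpair := sum_ratioCount_div_le hinc hT₀ hΛ₀ hΛ hΛq
  have hsix := pow_six_level_le hg.le hY
  have hmass : ∑ y ∈ Y, (diffCount A y : ℝ) ≤ (#A : ℝ) ^ 2 := by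
    exact_mod_cast (sum_le_univ_sum_of_nonneg (by simp)).trans (sum_diffCount_le A)
  have hmass₀ : 0 ≤ ∑ y ∈ Y, (diffCount A y : ℝ) := by positivity
  generalize ∑ y ∈ Y, (diffCount A y : ℝ) = m at *
  refine le_of_mul_le_mul_left ?_ hg
  calc g * (g * m) ^ 11 = (g ^ 2 * m) ^ 6 * m ^ 5 := by ring
    _ ≤ 2 * g * (2 ^ 14 * T ^ 4 * #A ^ 9) ^ 2 * (3 * T * (#A : ℝ) ^ 3 * (#Λ * √(#Λ : ℝ))) *
          ((#A : ℝ) ^ 2 * #Λ) ^ 3 * ((#A : ℝ) ^ 2) ^ 5 := by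
      gcongr
      exact hsix.trans (by gcongr)
    _ = g * (6 * 2 ^ 28 * (T ^ 9 * (#A : ℝ) ^ 37 * (#Λ ^ 4 * √(#Λ : ℝ)))) := by ring
    _ ≤ g * (2 ^ 31 * (T ^ 9 * (#A : ℝ) ^ 37 * (#Λ ^ 4 * √(#Λ : ℝ)))) := by
      gcongr
      norm_num
    _ = _ := by ring

lemma pow_seventeen_card_mul_sq_le (hinc : HasIncidenceBound K (#A ^ 6) T)
    (hT : (Nat.log 2 (#A ^ 3) + 1 : ℝ) ≤ T) (hA : #A ^ 3 ≤ Fintype.card K ^ 2)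
    (hΛ₀ : Λ.Nonempty) (hΛ : #Λ ≤ #A ^ 2) (hΛq : #A ^ 2 * #Λ ≤ Fintype.card K ^ 2)
    (hκ : 0 < κ) (hΛκ : Λ ⊆ popularRatios A κ) :
    (#Λ * κ ^ 2) ^ 17 ≤ 2 ^ 128 * T ^ 52 * (#A : ℝ) ^ 110 := by
  have hT₀ : 0 ≤ T := le_trans (by positivity) hT
  have hx : (0 : ℝ) < #Λ := by exact_mod_cast hΛ₀.card_pos
  obtain ⟨g, hg, Y, hY, hlevel⟩ := exists_dilateSum_level hT hΛκ
  have heleven := pow_eleven_level_le hinc hT hA hΛ₀ hΛ hΛq (by linarith) hY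
  have hcube : #Λ * κ ^ 3 ≤ 2048 * T ^ 3 * (#A : ℝ) ^ 9 :=
    (mul_le_mul_of_nonneg_right (by exact_mod_cast card_le_card hΛκ) (by positivity)).trans
      (card_popularRatios_mul_pow_three_le hinc hT hA hκ)
  have hlinear : (#Λ * κ) ^ 11 ≤ 2 ^ 42 * T ^ 20 * (#A : ℝ) ^ 37 * (#Λ ^ 4 * √(#Λ : ℝ)) :=
    calc (#Λ * κ) ^ 11 ≤ (2 * T * (g * ∑ y ∈ Y, (diffCount A y : ℝ))) ^ 11 := by gcongr
      _ = 2 ^ 11 * T ^ 11 * (g * ∑ y ∈ Y, (diffCount A y : ℝ)) ^ 11 := by ring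
      _ ≤ 2 ^ 11 * T ^ 11 * (2 ^ 31 * T ^ 9 * (#A : ℝ) ^ 37 * (#Λ ^ 4 * √(#Λ : ℝ))) := by gcongr
      _ = _ := by ring
  have hsq : #Λ ^ 13 * κ ^ 22 ≤ 2 ^ 84 * T ^ 40 * (#A : ℝ) ^ 74 := by
    refine le_of_mul_le_mul_left ?_ (pow_pos hx 9)
    calc (#Λ : ℝ) ^ 9 * (#Λ ^ 13 * κ ^ 22) = ((#Λ * κ) ^ 11) ^ 2 := by ring
      _ ≤ (2 ^ 42 * T ^ 20 * (#A : ℝ) ^ 37 * (#Λ ^ 4 * √(#Λ : ℝ))) ^ 2 := by gcongr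
      _ = 2 ^ 84 * T ^ 40 * (#A : ℝ) ^ 74 * #Λ ^ 8 * √(#Λ : ℝ) ^ 2 := by ring
      _ = _ := by rw [Real.sq_sqrt hx.le]; ring
  calc (#Λ * κ ^ 2) ^ 17 = #Λ ^ 13 * κ ^ 22 * (#Λ * κ ^ 3) ^ 4 := by ring
    _ ≤ 2 ^ 84 * T ^ 40 * (#A : ℝ) ^ 74 * (2048 * T ^ 3 * (#A : ℝ) ^ 9) ^ 4 :=
      mul_le_mul hsq (pow_le_pow_left₀ (by positivity) hcube 4) (by positivity)
        (le_trans (by positivity) hsq)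
    _ = 2 ^ 84 * 2048 ^ 4 * T ^ 52 * (#A : ℝ) ^ 110 := by ring
    _ = 2 ^ 128 * T ^ 52 * (#A : ℝ) ^ 110 := by norm_num

lemma card_mul_le_of_subset_popularRatios (hκ : 0 ≤ κ) (hΛκ : Λ ⊆ popularRatios A κ) :
    #Λ * κ ≤ (#A : ℝ) ^ 4 :=
  (mul_le_mul_of_nonneg_right (by exact_mod_cast card_le_card hΛκ) hκ).trans
    card_popularRatios_mul_le

lemma card_mul_sq_le_div (hκ : 0 ≤ κ) (hΛκ : Λ ⊆ popularRatios A κ)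
    (hΛq : Fintype.card K ^ 2 ≤ #A ^ 2 * #Λ) :
    #Λ * κ ^ 2 ≤ (#A : ℝ) ^ 10 / Fintype.card K ^ 2 := by
  have hΛq : (Fintype.card K : ℝ) ^ 2 ≤ #A ^ 2 * #Λ := by exact_mod_cast hΛq
  have hfirst := card_mul_le_of_subset_popularRatios hκ hΛκ
  rw [le_div_iff₀ (by positivity)]
  calc #Λ * κ ^ 2 * (Fintype.card K : ℝ) ^ 2 ≤ #Λ * κ ^ 2 * (#A ^ 2 * #Λ) := by gcongr
    _ = #A ^ 2 * (#Λ * κ) ^ 2 := by ring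
    _ ≤ #A ^ 2 * ((#A : ℝ) ^ 4) ^ 2 := by gcongr
    _ = (#A : ℝ) ^ 10 := by ring

lemma card_mul_sq_le_pow_six (hκ : 0 ≤ κ) (hΛκ : Λ ⊆ popularRatios A κ) (hA : A.Nonempty)
    (hΛ : #A ^ 2 ≤ #Λ) : #Λ * κ ^ 2 ≤ (#A : ℝ) ^ 6 := by
  have hΛ : (#A : ℝ) ^ 2 ≤ #Λ := by exact_mod_cast hΛ
  have hN : 0 < (#A : ℝ) := by exact_mod_cast hA.card_pos
  have hfirst := card_mul_le_of_subset_popularRatios hκ hΛκ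
  refine le_of_mul_le_mul_left ?_ (pow_pos hN 2)
  calc #A ^ 2 * (#Λ * κ ^ 2) ≤ #Λ * (#Λ * κ ^ 2) := by gcongr
    _ = (#Λ * κ) ^ 2 := by ring
    _ ≤ ((#A : ℝ) ^ 4) ^ 2 := by gcongr
    _ = #A ^ 2 * (#A : ℝ) ^ 6 := by ring

lemma card_mul_sq_le (hinc : HasIncidenceBound K (#A ^ 6) T)
    (hT : (Nat.log 2 (#A ^ 3) + 1 : ℝ) ≤ T) (hA : #A ^ 3 ≤ Fintype.card K ^ 2)
    (hA₀ : A.Nonempty) (hκ : 0 < κ) (hΛκ : Λ ⊆ popularRatios A κ) :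
    #Λ * κ ^ 2 ≤
      (#A : ℝ) ^ 10 / Fintype.card K ^ 2 + 2 ^ 8 * T ^ 4 * (#A : ℝ) ^ (110 / 17 : ℝ) := by
  have hT₁ : 1 ≤ T := le_trans (by simp) hT
  have hN : (1 : ℝ) ≤ #A := by exact_mod_cast hA₀.card_pos
  have hmain₀ : 0 ≤ 2 ^ 8 * T ^ 4 * (#A : ℝ) ^ (110 / 17 : ℝ) := by positivity
  rcases Λ.eq_empty_or_nonempty with rfl | hΛ₀
  · simp only [card_empty, Nat.cast_zero, zero_mul]
    positivity
  rcases le_total (Fintype.card K ^ 2) (#A ^ 2 * #Λ) with hΛq | hΛq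
  · exact le_add_of_le_of_nonneg (card_mul_sq_le_div hκ.le hΛκ hΛq) hmain₀
  refine le_add_of_nonneg_of_le (by positivity) ?_
  rcases le_total (#A ^ 2) #Λ with hΛ | hΛ
  · calc #Λ * κ ^ 2 ≤ (#A : ℝ) ^ ((6 : ℕ) : ℝ) := by
          rw [Real.rpow_natCast]
          exact card_mul_sq_le_pow_six hκ.le hΛκ hA₀ hΛ
      _ ≤ 1 * (#A : ℝ) ^ (110 / 17 : ℝ) := by
        rw [one_mul]
        exact Real.rpow_le_rpow_of_exponent_le hN (by norm_num)
      _ ≤ 2 ^ 8 * T ^ 4 * (#A : ℝ) ^ (110 / 17 : ℝ) := by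
        gcongr
        exact one_le_mul_of_one_le_of_one_le (by norm_num) (one_le_pow₀ hT₁)
  · refine le_of_pow_le_pow_left₀ (n := 17) (by norm_num) hmain₀ ?_
    calc (#Λ * κ ^ 2) ^ 17 ≤ 2 ^ 128 * T ^ 52 * (#A : ℝ) ^ 110 :=
          pow_seventeen_card_mul_sq_le hinc hT hA hΛ₀ hΛ hΛq hκ hΛκ
      _ ≤ 2 ^ 136 * T ^ 68 * (#A : ℝ) ^ 110 := by gcongr <;> norm_num [hT₁]
      _ = (2 ^ 8 * T ^ 4 * (#A : ℝ) ^ (110 / 17 : ℝ)) ^ 17 := by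
        rw [mul_pow, mul_pow, ← Real.rpow_mul_natCast (Nat.cast_nonneg _), ← Real.rpow_natCast]
        norm_num [← pow_mul]

theorem sum_ratioCount_sq_le (hinc : HasIncidenceBound K (#A ^ 6) T)
    (hT : (Nat.log 2 (#A ^ 3) + 1 : ℝ) ≤ T) (hA₀ : A.Nonempty) :
    ∑ u, (ratioCount A u : ℝ) ^ 2 ≤ 4 * T *
      ((#A : ℝ) ^ 10 / Fintype.card K ^ 2 + 2 ^ 8 * T ^ 4 * (#A : ℝ) ^ (110 / 17 : ℝ)) := by
  have hT₁ : 1 ≤ T := le_trans (by simp) hT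
  rcases le_total (#A ^ 3) (Fintype.card K ^ 2) with hA | hA
  · obtain ⟨κ, hκ, Λ, -, hΛ, hsum⟩ := exists_dyadic_level (S := univ) (f := ratioCount A)
      (g := fun u => (ratioCount A u : ℝ) ^ 2) hT (fun u _ => ratioCount_le A u)
      (fun u _ => sq_nonneg _) fun u _ h => by simp [h]
    have hlevel := card_mul_sq_le hinc hT hA hA₀ (by linarith : 0 < κ) fun u hu =>
      mem_popularRatios.2 (hΛ u hu).1
    calc ∑ u, (ratioCount A u : ℝ) ^ 2 ≤ T * ∑ u ∈ Λ, (ratioCount A u : ℝ) ^ 2 := hsum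
      _ ≤ T * (#Λ • (2 * κ) ^ 2) := by
        gcongr
        exact sum_le_card_nsmul _ _ _ fun u hu =>
          pow_le_pow_left₀ (Nat.cast_nonneg _) (hΛ u hu).2 2
      _ = 4 * T * (#Λ * κ ^ 2) := by rw [nsmul_eq_mul]; ring
      _ ≤ _ := by gcongr
  · have hA : (Fintype.card K : ℝ) ^ 2 ≤ (#A : ℝ) ^ 3 := by exact_mod_cast hA
    have hseven : ∑ u, ratioCount A u ^ 2 ≤ #A ^ 7 :=
      calc ∑ u, ratioCount A u ^ 2 ≤ ∑ u, #A ^ 3 * ratioCount A u := by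
            gcongr with u
            rw [sq]
            exact Nat.mul_le_mul_right _ (ratioCount_le A u)
        _ ≤ #A ^ 3 * #A ^ 4 := by
          rw [← mul_sum]
          exact Nat.mul_le_mul_left _ (sum_ratioCount_le A)
        _ = #A ^ 7 := by ring
    calc ∑ u, (ratioCount A u : ℝ) ^ 2 ≤ (#A : ℝ) ^ 7 := by exact_mod_cast hseven
      _ ≤ (#A : ℝ) ^ 10 / Fintype.card K ^ 2 := by
        rw [le_div_iff₀ (by positivity), show (#A : ℝ) ^ 10 = #A ^ 7 * #A ^ 3 by ring]
        gcongr
      _ ≤ 1 * ((#A : ℝ) ^ 10 / Fintype.card K ^ 2 +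
            2 ^ 8 * T ^ 4 * (#A : ℝ) ^ (110 / 17 : ℝ)) := by
        rw [one_mul]
        exact le_add_of_nonneg_right (by positivity)
      _ ≤ _ := by
        gcongr
        linarith

end SecondMoment

/-! ### The energy bound over prime fields -/

section Energy

variable {K : Type*} [Field K] [DecidableEq K] (A : Finset K)

/-- The quadruples of elements of `A` whose two differences are nonzero and have ratio `u`. -/
def ratioQuadruples (u : Kˣ) : Finset ((K × K) × (K × K)) :=
  {x ∈ (A ×ˢ A) ×ˢ (A ×ˢ A) | x.1.1 - x.1.2 = u * (x.2.1 - x.2.2) ∧ x.2.1 - x.2.2 ≠ 0}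

lemma card_ratioQuadruples_le [Fintype K] (u : Kˣ) : #(ratioQuadruples A u) ≤ ratioCount A u := by
  have hcover : ratioQuadruples A u ⊆ univ.biUnion fun m : Kˣ =>
      {y ∈ A ×ˢ A | y.1 - y.2 = ((u * m : Kˣ) : K)} ×ˢ {y ∈ A ×ˢ A | y.1 - y.2 = (m : K)} := by
    intro x hx
    obtain ⟨hxA, hxu, hx₀⟩ := mem_filter.1 hx
    obtain ⟨hx₁, hx₂⟩ := mem_product.1 hxA
    exact mem_biUnion.2 ⟨Units.mk0 _ hx₀, mem_univ _,
      mem_product.2 ⟨mem_filter.2 ⟨hx₁, hxu⟩, mem_filter.2 ⟨hx₂, rfl⟩⟩⟩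
  refine (card_le_card hcover).trans (card_biUnion_le.trans_eq ?_)
  simp only [card_product, ratioCount, correlation, diffCount]

lemma card_filter_mul_sub_eq_zero_le :
    #{x ∈ (A ×ˢ A) ×ˢ (A ×ˢ A) | (x.1.1 - x.1.2) * (x.2.1 - x.2.2) = 0} ≤ 2 * #A ^ 3 := by
  have hcover : {x ∈ (A ×ˢ A) ×ˢ (A ×ˢ A) | (x.1.1 - x.1.2) * (x.2.1 - x.2.2) = 0} ⊆
      A.diag ×ˢ (A ×ˢ A) ∪ (A ×ˢ A) ×ˢ A.diag := by
    intro x hx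
    simp only [mem_filter, mem_product, mul_eq_zero, sub_eq_zero] at hx
    simp only [mem_union, mem_product, mem_diag]
    tauto
  calc _ ≤ #(A.diag ×ˢ (A ×ˢ A)) + #((A ×ˢ A) ×ˢ A.diag) :=
        (card_le_card hcover).trans (card_union_le _ _)
    _ = 2 * #A ^ 3 := by simp only [card_product, diag_card]; ring

lemma card_filter_mul_sub_ne_zero_le [Fintype K] :
    #{x ∈ ((A ×ˢ A) ×ˢ (A ×ˢ A)) ×ˢ ((A ×ˢ A) ×ˢ (A ×ˢ A)) |
        (x.1.1.1 - x.1.1.2) * (x.1.2.1 - x.1.2.2) = (x.2.1.1 - x.2.1.2) * (x.2.2.1 - x.2.2.2) ∧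
        (x.1.1.1 - x.1.1.2) * (x.1.2.1 - x.1.2.2) ≠ 0} ≤ ∑ u, ratioCount A u ^ 2 := by
  calc _ ≤ #(univ.biUnion fun u : Kˣ => ratioQuadruples A u ×ˢ ratioQuadruples A u) := by
        refine card_le_card_of_injOn (fun x => ((x.1.1, x.2.1), (x.2.2, x.1.2))) ?_ ?_
        · rintro ⟨⟨a, b⟩, c, d⟩ hx
          simp only [coe_filter, mem_product, Set.mem_ofPred_eq] at hx
          obtain ⟨⟨⟨ha, hb⟩, hc, hd⟩, heq, hne⟩ := hx
          have hb₀ := right_ne_zero_of_mul hne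
          have ha₀ := left_ne_zero_of_mul hne
          have hc₀ := left_ne_zero_of_mul (heq ▸ hne)
          simp only [ratioQuadruples, coe_biUnion, coe_univ, Set.mem_univ, Set.iUnion_true,
            Set.mem_iUnion, mem_coe, mem_product, mem_filter]
          refine ⟨Units.mk0 _ (div_ne_zero ha₀ hc₀), ⟨⟨ha, hc⟩, ?_, hc₀⟩, ⟨hd, hb⟩, ?_, hb₀⟩
          · rw [Units.val_mk0, div_mul_cancel₀ _ hc₀]
          · rw [Units.val_mk0, div_mul_eq_mul_div, heq, mul_div_cancel_left₀ _ hc₀]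
        · rintro ⟨⟨a, b⟩, c, d⟩ - ⟨⟨a', b'⟩, c', d'⟩ - h
          simp only [Prod.mk.injEq] at h ⊢
          tauto
    _ ≤ ∑ u, #(ratioQuadruples A u) ^ 2 :=
        card_biUnion_le.trans_eq (by simp only [card_product, sq])
    _ ≤ ∑ u, ratioCount A u ^ 2 := by
        gcongr with u
        exact card_ratioQuadruples_le A u

end Energy

lemma DtimesTwo_le {p : ℕ} [Fact p.Prime] (A : Finset (ZMod p)) :
    DtimesTwo p A ≤ ∑ u, ratioCount A u ^ 2 + 4 * #A ^ 6 := by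
  let Z := {x ∈ (A ×ˢ A) ×ˢ (A ×ˢ A) | (x.1.1 - x.1.2) * (x.2.1 - x.2.2) = 0}
  have hZ : #(Z ×ˢ Z) ≤ 4 * #A ^ 6 :=
    calc #(Z ×ˢ Z) = #Z ^ 2 := by rw [card_product, sq]
      _ ≤ (2 * #A ^ 3) ^ 2 := Nat.pow_le_pow_left (card_filter_mul_sub_eq_zero_le A) 2
      _ = 4 * #A ^ 6 := by ring
  refine le_trans ?_ (add_le_add (card_filter_mul_sub_ne_zero_le A) hZ)
  refine (card_le_card fun x hx => ?_).trans (card_union_le _ _)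
  obtain ⟨hxA, heq⟩ := mem_filter.1 hx
  obtain ⟨hx₁, hx₂⟩ := mem_product.1 hxA
  rw [mem_union]
  by_cases hzero : (x.1.1.1 - x.1.1.2) * (x.1.2.1 - x.1.2.2) = 0
  · exact .inr (mem_product.2
      ⟨mem_filter.2 ⟨hx₁, hzero⟩, mem_filter.2 ⟨hx₂, heq.symm.trans hzero⟩⟩)
  · exact .inl (mem_filter.2 ⟨hxA, heq, hzero⟩)

lemma HasIncidenceBound.mono {K : Type*} [Field K] [Fintype K] {N : ℕ} {S T : ℝ}
    (h : HasIncidenceBound K N S) (hST : S ≤ T) : HasIncidenceBound K N T :=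
  fun _ _ hk hP hq hN => (h hk hP hq hN).trans (by gcongr)

lemma exists_hasIncidenceBound {ε : ℝ} (hε : 0 < ε) : ∃ C : ℝ, 0 ≤ C ∧
    ∀ (p N : ℕ) [Fact p.Prime], HasIncidenceBound (ZMod p) N (C * (N : ℝ) ^ ε) := by
  obtain ⟨C, hC, hbound⟩ := exists_incidences_le (half_pos hε)
  refine ⟨2 * C, by positivity, fun p N hp P k hk hP hPp hPN => ?_⟩
  rcases P.eq_empty_or_nonempty with rfl | hP₀
  · simp [incidences]
  have hone : 1 ≤ (#P : ℝ) ^ ε :=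
    Real.one_le_rpow (by exact_mod_cast hP₀.card_pos) hε.le
  have hpow : (#P * #P : ℝ) ^ (ε / 2) = (#P : ℝ) ^ ε := by
    rw [Real.mul_rpow (by positivity) (by positivity),
      ← Real.rpow_add' (by positivity) (by linarith), add_halves]
  calc (incidences P P : ℝ) ≤ C * incidenceBound (ε / 2) k #P #P :=
        hbound hp.out hk hP hP (by simpa using hPp)
    _ = 2 * C * (1 * (#P * √(#P : ℝ)) + (#P : ℝ) ^ ε * (k * #P)) := by
      rw [incidenceBound, hpow]; ring
    _ ≤ 2 * C * ((#P : ℝ) ^ ε * (#P * √(#P : ℝ)) + (#P : ℝ) ^ ε * (k * #P)) := by gcongr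
    _ = 2 * C * (#P : ℝ) ^ ε * (#P * √(#P : ℝ) + k * #P) := by ring
    _ ≤ 2 * C * (N : ℝ) ^ ε * (#P * √(#P : ℝ) + k * #P) := by gcongr

lemma exists_natLog_add_one_le {ε : ℝ} (hε : 0 < ε) : ∃ C : ℝ, 0 ≤ C ∧
    ∀ N : ℕ, 1 ≤ N → (Nat.log 2 N + 1 : ℝ) ≤ C * (N : ℝ) ^ ε := by
  refine ⟨1 / (ε * Real.log 2) + 1, by positivity, fun N hN => ?_⟩
  calc (Nat.log 2 N + 1 : ℝ) ≤ Real.log N / Real.log 2 + 1 := by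
        gcongr
        exact_mod_cast Real.natLog_le_logb N 2
    _ ≤ (N : ℝ) ^ ε / ε / Real.log 2 + (N : ℝ) ^ ε := by
      gcongr
      · exact Real.log_le_rpow_div (Nat.cast_nonneg N) hε
      · exact Real.one_le_rpow (by exact_mod_cast hN) hε.le
    _ = (1 / (ε * Real.log 2) + 1) * (N : ℝ) ^ ε := by field_simp

lemma exists_hasIncidenceBound_and_natLog_le {ε : ℝ} (hε : 0 < ε) : ∃ C : ℝ, 0 ≤ C ∧
    ∀ (p N : ℕ) [Fact p.Prime], 1 ≤ N →
      HasIncidenceBound (ZMod p) N (C * (N : ℝ) ^ ε) ∧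
        (Nat.log 2 N + 1 : ℝ) ≤ C * (N : ℝ) ^ ε := by
  obtain ⟨C₁, hC₁, hinc⟩ := exists_hasIncidenceBound hε
  obtain ⟨C₂, hC₂, hlog⟩ := exists_natLog_add_one_le hε
  refine ⟨C₁ + C₂, by positivity, fun p N _ hN => ⟨(hinc p N).mono ?_, (hlog N hN).trans ?_⟩⟩
  · gcongr
    linarith
  · gcongr
    linarith

theorem exists_DtimesTwo_le {ε : ℝ} (hε : 0 < ε) : ∃ C : ℝ, 0 ≤ C ∧
    ∀ (p : ℕ) [Fact p.Prime] (A : Finset (ZMod p)), A.Nonempty →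
      (DtimesTwo p A : ℝ) ≤
        C * (#A : ℝ) ^ ε * ((#A : ℝ) ^ 10 / p ^ 2 + (#A : ℝ) ^ (110 / 17 : ℝ)) := by
  obtain ⟨C, hC, hbounds⟩ := exists_hasIncidenceBound_and_natLog_le (ε := ε / 30) (by positivity)
  refine ⟨1028 * C ^ 5, by positivity, fun p _ A hA => ?_⟩
  have hN : (1 : ℝ) ≤ #A := by exact_mod_cast hA.card_pos
  obtain ⟨hinc, hlog⟩ := hbounds p (#A ^ 6) (Nat.one_le_pow _ _ hA.card_pos)
  generalize hT : C * ((#A ^ 6 : ℕ) : ℝ) ^ (ε / 30) = T at hinc hlog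
  have hT₁ : 1 ≤ T := le_trans (by simp) hlog
  have hT₅ : T ^ 5 = C ^ 5 * (#A : ℝ) ^ ε := by
    rw [← hT, mul_pow, Nat.cast_pow, ← Real.rpow_natCast_mul (by positivity),
      ← Real.rpow_mul_natCast (by positivity)]
    ring_nf
  have hcube : (Nat.log 2 (#A ^ 3) + 1 : ℝ) ≤ T := by
    refine le_trans ?_ hlog
    gcongr
    exacts [hA.card_pos, by norm_num]
  have hsq := sum_ratioCount_sq_le hinc hcube hA
  rw [ZMod.card] at hsq
  have hsix : (#A : ℝ) ^ 6 ≤ (#A : ℝ) ^ (110 / 17 : ℝ) := by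
    rw [← Real.rpow_natCast]
    exact Real.rpow_le_rpow_of_exponent_le hN (by norm_num)
  generalize (#A : ℝ) ^ (110 / 17 : ℝ) = M at *
  have hM : 0 ≤ M := le_trans (by positivity) hsix
  have hTpow : T ≤ T ^ 5 := le_self_pow₀ hT₁ (by norm_num)
  calc (DtimesTwo p A : ℝ) ≤ ∑ u, (ratioCount A u : ℝ) ^ 2 + 4 * (#A : ℝ) ^ 6 := by
        exact_mod_cast DtimesTwo_le A
    _ ≤ 4 * T * ((#A : ℝ) ^ 10 / p ^ 2 + 2 ^ 8 * T ^ 4 * M) + 4 * (1 * M) := by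
      rw [one_mul]
      gcongr
    _ = 4 * (T * ((#A : ℝ) ^ 10 / p ^ 2)) + 1024 * (T ^ 5 * M) + 4 * (1 * M) := by ring
    _ ≤ 1028 * (T ^ 5 * ((#A : ℝ) ^ 10 / p ^ 2)) + 1024 * (T ^ 5 * M) + 4 * (T ^ 5 * M) := by
      gcongr
      · norm_num
      · exact one_le_pow₀ hT₁
    _ = 1028 * T ^ 5 * ((#A : ℝ) ^ 10 / p ^ 2 + M) := by ring
    _ = _ := by rw [hT₅]; ring

end ProductOfDifferences

open ProductOfDifferences in
theorem stmt9_general {θ c : ℝ} (hθ : 0 < θ) (hc : c < 1 / 34) (hcθ : c < 2 / θ - 7 / 2) :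
    ∃ C : ℝ, ∀ p : ℕ, p.Prime → ∀ A : Finset (ZMod p), A.Nonempty → (#A : ℝ) ≤ (p : ℝ) ^ θ →
      (DtimesTwo p A : ℝ) ≤ C * (#A : ℝ) ^ (13 / 2 - c : ℝ) := by
  obtain ⟨C, hC, hbound⟩ := exists_DtimesTwo_le
    (ε := min (1 / 34 - c) (2 / θ - 7 / 2 - c)) (lt_min (by linarith) (by linarith))
  generalize hε : min (1 / 34 - c) (2 / θ - 7 / 2 - c) = ε at hbound
  have hε₁ : ε ≤ 1 / 34 - c := hε ▸ min_le_left _ _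
  have hε₂ : ε ≤ 2 / θ - 7 / 2 - c := hε ▸ min_le_right _ _
  refine ⟨2 * C, fun p hp A hA hAp => ?_⟩
  have : Fact p.Prime := ⟨hp⟩
  have hN : (1 : ℝ) ≤ #A := by exact_mod_cast hA.card_pos
  have hN₀ : (0 : ℝ) < #A := by linarith
  have hp₀ : (0 : ℝ) < p := by exact_mod_cast hp.pos
  have hpA : (#A : ℝ) ^ (2 / θ) ≤ (p : ℝ) ^ 2 :=
    calc (#A : ℝ) ^ (2 / θ) ≤ ((p : ℝ) ^ θ) ^ (2 / θ) := by gcongr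
      _ = (p : ℝ) ^ 2 := by
        rw [← Real.rpow_mul hp₀.le, mul_div_cancel₀ _ hθ.ne', Real.rpow_two]
  have hfirst : (#A : ℝ) ^ ε * ((#A : ℝ) ^ 10 / p ^ 2) ≤ (#A : ℝ) ^ (13 / 2 - c) :=
    calc (#A : ℝ) ^ ε * ((#A : ℝ) ^ 10 / p ^ 2)
        ≤ (#A : ℝ) ^ ε * ((#A : ℝ) ^ 10 / (#A : ℝ) ^ (2 / θ)) := by gcongr
      _ = (#A : ℝ) ^ (ε + (10 - 2 / θ)) := by
        rw [Real.rpow_add hN₀, Real.rpow_sub hN₀]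
        norm_cast
      _ ≤ (#A : ℝ) ^ (13 / 2 - c) := Real.rpow_le_rpow_of_exponent_le hN (by linarith)
  have hsecond : (#A : ℝ) ^ ε * (#A : ℝ) ^ (110 / 17 : ℝ) ≤ (#A : ℝ) ^ (13 / 2 - c) := by
    rw [← Real.rpow_add hN₀]
    exact Real.rpow_le_rpow_of_exponent_le hN (by linarith)
  calc (DtimesTwo p A : ℝ)
      ≤ C * (#A : ℝ) ^ ε * ((#A : ℝ) ^ 10 / p ^ 2 + (#A : ℝ) ^ (110 / 17 : ℝ)) := hbound p A hA
    _ = C * ((#A : ℝ) ^ ε * ((#A : ℝ) ^ 10 / p ^ 2) +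
          (#A : ℝ) ^ ε * (#A : ℝ) ^ (110 / 17 : ℝ)) := by ring
    _ ≤ C * ((#A : ℝ) ^ (13 / 2 - c) + (#A : ℝ) ^ (13 / 2 - c)) := by gcongr
    _ = 2 * C * (#A : ℝ) ^ (13 / 2 - c) := by ring

theorem stmt9 :
    (∀ c : ℝ, 0 < c → c < 1 / 434 →
      ∃ C : ℝ,
        ∀ (p : ℕ), p.Prime → Odd p →
          ∀ A : Finset (ZMod p), 2 ≤ A.card → (A.card : ℝ) ≤ (p : ℝ) ^ ((2846 : ℝ) / 4991) →
            (DtimesTwo p A : ℝ) ≤ C * (A.card : ℝ) ^ ((13 : ℝ) / 2 - c)) ∧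
    (∀ c₁ : ℝ, 0 < c₁ → c₁ < 1 / 192 →
      ∃ C₁ : ℝ,
        ∀ (p : ℕ), p.Prime → Odd p →
          ∀ A : Finset (ZMod p), 2 ≤ A.card → (A.card : ℝ) ≤ (p : ℝ) ^ ((48 : ℝ) / 97) →
            (DtimesTwo p A : ℝ) ≤ C₁ * (A.card : ℝ) ^ ((13 : ℝ) / 2 - c₁)) := by
  constructor <;> intro c _ hc
  · obtain ⟨C, hC⟩ := stmt9_general (θ := 2846 / 4991) (c := c)
      (by norm_num) (by linarith) (by linarith)
    exact ⟨C, fun p hp _ A hA => hC p hp A (card_pos.1 (by linarith))⟩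
  · obtain ⟨C, hC⟩ := stmt9_general (θ := 48 / 97) (c := c)
      (by norm_num) (by linarith) (by linarith)
    exact ⟨C, fun p hp _ A hA => hC p hp A (card_pos.1 (by linarith))⟩
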